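/- Let b > 0 be real, let s₁, s₂, s₃, p₁, p₂ ∈ ℝ and set p₃ := p₁ + p₂. Define M(s₁,s₂,s₃) := w_b(s₁+s₂−s₃)·w_b(s₁+s₃−s₂)·w_b(s₂+s₃−s₁) / w_b(s₁+s₂+s₃), and I(s₃,s₂,s₁;p₂,p₁) := e^{(πi/2)(p₃²−p₁²−p₂²)} · ( w_b(p₁−s₁)·w_b(p₂−s₂) / w_b(p₃−s₃) ) · e^{πi(p₂(s₁+c_b) − p₁(s₂+c_b))} · ∫_ℝ e^{πip(s₁+s₂−s₃+c_b)} · D_{(s₂−s₁−s₃−c_b)/2}(p+p₂) · D_{(s₁−s₂−s₃−c_b)/2}(p−p₁) · D_{(s₁+s₂+s₃−c_b)/2}(p) dp, the integral being absolutely convergent. Then the quantity M(s₁,s₂,s₃)·I(s₃,s₂,s₁;p₂,p₁)² is invariant under each of the three substitutions s₁ ↦ −s₁, s₂ ↦ −s₂, and s₃ ↦ −s₃ (the b-Clebsch–Gordan coefficients satisfy the Weyl symmetries). -/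

import Mathlib

open MeasureTheory Complex Real Filter Topology

noncomputable section

/-- The special point `c_b = i(b+b⁻¹)/2`. -/
def cb (b : ℝ) : ℂ := Complex.I * ((b : ℂ) + (b : ℂ)⁻¹) / 2

/-- The integrand in the integral representation of the noncompact quantum dilogarithm. -/
def ebIntegrand (b ε : ℝ) (z : ℂ) (t : ℝ) : ℂ :=
  Complex.exp (-2 * Complex.I * z * ((t : ℂ) + Complex.I * (ε : ℂ))) /
    (((t : ℂ) + Complex.I * (ε : ℂ)) *
      Complex.sinh ((b : ℂ) * ((t : ℂ) + Complex.I * (ε : ℂ))) *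
      Complex.sinh ((b : ℂ)⁻¹ * ((t : ℂ) + Complex.I * (ε : ℂ))))

/-- The noncompact quantum dilogarithm defined with contour parameter `ε`. -/
def ebE (b ε : ℝ) (z : ℂ) : ℂ :=
  Complex.exp ((1 / 4 : ℂ) * ∫ t : ℝ, ebIntegrand b ε z t)

/-- The noncompact quantum dilogarithm `e_b` (canonical choice of contour parameter;
the value is independent of this choice). -/
def eb (b : ℝ) (z : ℂ) : ℂ := ebE b (π * min b b⁻¹ / 2) z

/-- The function `w_b(x) = e^{−(πi/12)(1+2c_b²)}·e^{πix²/2}/e_b(x)`. -/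
def wb (b : ℝ) (z : ℂ) : ℂ :=
  Complex.exp (-((π : ℂ) * Complex.I / 12) * (1 + 2 * (cb b) ^ 2)) *
    Complex.exp ((π : ℂ) * Complex.I * z ^ 2 / 2) / eb b z

/-- The function `D_α(x) = w_b(x+α)/w_b(x−α)`. -/
def Dfun (b : ℝ) (α x : ℂ) : ℂ := wb b (x + α) / wb b (x - α)

/-- The prefactor `M(s₁,s₂,s₃)` of the squared b-Clebsch–Gordan coefficients. -/
def Mfun (b s₁ s₂ s₃ : ℝ) : ℂ :=
  wb b ((s₁ : ℂ) + (s₂ : ℂ) - (s₃ : ℂ)) * wb b ((s₁ : ℂ) + (s₃ : ℂ) - (s₂ : ℂ)) *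
    wb b ((s₂ : ℂ) + (s₃ : ℂ) - (s₁ : ℂ)) / wb b ((s₁ : ℂ) + (s₂ : ℂ) + (s₃ : ℂ))

/-- The integrand appearing in the b-Clebsch–Gordan coefficients. -/
def CGintegrand (b s₁ s₂ s₃ p₁ p₂ : ℝ) (p : ℝ) : ℂ :=
  Complex.exp ((π : ℂ) * Complex.I * (p : ℂ) * ((s₁ : ℂ) + (s₂ : ℂ) - (s₃ : ℂ) + cb b)) *
    Dfun b (((s₂ : ℂ) - (s₁ : ℂ) - (s₃ : ℂ) - cb b) / 2) ((p : ℂ) + (p₂ : ℂ)) *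
    Dfun b (((s₁ : ℂ) - (s₂ : ℂ) - (s₃ : ℂ) - cb b) / 2) ((p : ℂ) - (p₁ : ℂ)) *
    Dfun b (((s₁ : ℂ) + (s₂ : ℂ) + (s₃ : ℂ) - cb b) / 2) (p : ℂ)

/-- The quantity `I(s₃,s₂,s₁;p₂,p₁)` entering the b-Clebsch–Gordan coefficients
(with `p₃ = p₁ + p₂`). -/
def CGI (b s₁ s₂ s₃ p₁ p₂ : ℝ) : ℂ :=
  Complex.exp ((π : ℂ) * Complex.I / 2 *
      (((p₁ : ℂ) + (p₂ : ℂ)) ^ 2 - (p₁ : ℂ) ^ 2 - (p₂ : ℂ) ^ 2)) *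
    (wb b ((p₁ : ℂ) - (s₁ : ℂ)) * wb b ((p₂ : ℂ) - (s₂ : ℂ)) /
      wb b ((p₁ : ℂ) + (p₂ : ℂ) - (s₃ : ℂ))) *
    Complex.exp ((π : ℂ) * Complex.I *
      ((p₂ : ℂ) * ((s₁ : ℂ) + cb b) - (p₁ : ℂ) * ((s₂ : ℂ) + cb b))) *
    ∫ p : ℝ, CGintegrand b s₁ s₂ s₃ p₁ p₂ p

lemma integrable_exp_neg_abs {κ : ℝ} (hκ : 0 < κ) :
    Integrable (fun x : ℝ => Real.exp (-κ * |x|)) := by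
  have h1 : IntegrableOn (fun x : ℝ => Real.exp (-κ * |x|)) (Set.Ioi 0) := by
    refine (integrableOn_exp_mul_Ioi (a := -κ) (by linarith) 0).congr_fun ?_ measurableSet_Ioi
    intro x hx
    simp only
    rw [abs_of_pos hx]
  have h2 : IntegrableOn (fun x : ℝ => Real.exp (-κ * |x|)) (Set.Iic 0) := by
    refine (integrableOn_exp_mul_Iic (a := κ) hκ 0).congr_fun ?_ measurableSet_Iic
    intro x hx
    simp only
    rw [abs_of_nonpos hx]
    congr 1
    ring
  have := h2.union h1
  rwa [Set.Iic_union_Ioi, integrableOn_univ] at this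

/-- differentiation under the integral sign for holomorphic families -/
lemma hasDerivAt_integral_holo (f : ℂ → ℝ → ℂ) (z₀ : ℂ) (r : ℝ) (hr : 0 < r) (g : ℝ → ℝ)
    (hg : Integrable g)
    (hmeas : ∀ z ∈ Metric.ball z₀ r, AEStronglyMeasurable (f z))
    (f' : ℂ → ℝ → ℂ) (hf'meas : AEStronglyMeasurable (f' z₀))
    (hd : ∀ t, ∀ z ∈ Metric.ball z₀ r, HasDerivAt (fun z => f z t) (f' z t) z)
    (hb : ∀ z ∈ Metric.ball z₀ r, ∀ t, ‖f z t‖ ≤ g t) :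
    Integrable (f' z₀) ∧ HasDerivAt (fun z => ∫ t, f z t) (∫ t, f' z₀ t) z₀ := by
  have hr2 : 0 < r / 2 := by positivity
  refine hasDerivAt_integral_of_dominated_loc_of_deriv_le (F := f) (F' := f')
    (s := Metric.ball z₀ (r / 2)) (bound := fun t => g t / (r / 4))
    (Metric.ball_mem_nhds _ hr2) ?_ ?_ hf'meas ?_ (hg.div_const _) ?_
  · filter_upwards [Metric.ball_mem_nhds z₀ hr] with z hz using hmeas z hz
  · exact hg.mono' (hmeas z₀ (Metric.mem_ball_self hr))
      (Eventually.of_forall fun t => hb z₀ (Metric.mem_ball_self hr) t)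
  · refine Eventually.of_forall fun t z hz => ?_
    have hsub : Metric.closedBall z (r / 4) ⊆ Metric.ball z₀ r := by
      intro w hw
      rw [Metric.mem_closedBall] at hw
      rw [Metric.mem_ball] at hz ⊢
      have := dist_triangle w z z₀
      linarith
    have hzb : z ∈ Metric.ball z₀ r := hsub (Metric.mem_closedBall_self (by positivity))
    rw [← (hd t z hzb).deriv]
    refine Complex.norm_deriv_le_of_forall_mem_sphere_norm_le (by positivity) ?_ ?_
    · refine DifferentiableOn.diffContOnCl_ball (U := Metric.ball z₀ r) ?_ hsub
      intro w hw
      exact (hd t w hw).differentiableAt.differentiableWithinAt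
    · intro w hw
      exact hb w (hsub (Metric.sphere_subset_closedBall hw)) t
  · refine Eventually.of_forall fun t z hz => hd t z ?_
    exact Metric.ball_subset_ball (by linarith) hz

lemma integrable_line {h : ℂ → ℂ} {y C κ : ℝ} (hκ : 0 < κ)
    (hc : Continuous (fun x : ℝ => h (x + y * I)))
    (hb : ∀ x : ℝ, 1 ≤ |x| → ‖h (x + y * I)‖ ≤ C * Real.exp (-κ * |x|)) :
    Integrable (fun x : ℝ => h (x + y * I)) := by
  obtain ⟨B, hB⟩ := (isCompact_Icc (a := (-1 : ℝ)) (b := 1)).exists_bound_of_continuousOn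
    hc.continuousOn
  have hB0 : 0 ≤ B := le_trans (norm_nonneg _) (hB 0 (by norm_num))
  have hC0 : 0 ≤ C * Real.exp (-κ * |1|) := le_trans (norm_nonneg _) (hb 1 (by simp))
  have hC0' : 0 ≤ C := by
    by_contra hneg
    have := mul_neg_of_neg_of_pos (not_le.mp hneg) (Real.exp_pos (-κ * |1|))
    linarith
  refine Integrable.mono' (g := fun x => (C + B * Real.exp κ) * Real.exp (-κ * |x|))
    ((integrable_exp_neg_abs hκ).const_mul _) hc.aestronglyMeasurable ?_
  refine Eventually.of_forall fun x => ?_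
  rcases le_total 1 |x| with hx | hx
  · refine (hb x hx).trans ?_
    have := Real.exp_pos (-κ * |x|)
    gcongr
    have : 0 ≤ B * Real.exp κ := by positivity
    linarith
  · have h1 := hB x (abs_le.mp hx)
    refine h1.trans ?_
    have h2 : 1 ≤ Real.exp κ * Real.exp (-κ * |x|) := by
      rw [← Real.exp_add]
      apply Real.one_le_exp
      nlinarith
    have := Real.exp_pos (-κ * |x|)
    have : 0 ≤ C * Real.exp (-κ * |x|) := by positivity
    nlinarith

/-- shifting the contour between two horizontal lines -/
lemma contour_shift {h : ℂ → ℂ} {y₀ y₁ C κ : ℝ} (hκ : 0 < κ)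
    (hd : ∀ z : ℂ, z.im ∈ Set.uIcc y₀ y₁ → DifferentiableAt ℂ h z)
    (hb : ∀ x y : ℝ, y ∈ Set.uIcc y₀ y₁ → 1 ≤ |x| →
      ‖h (x + y * I)‖ ≤ C * Real.exp (-κ * |x|)) :
    ∫ x : ℝ, h (x + y₀ * I) = ∫ x : ℝ, h (x + y₁ * I) := by
  have hcont : ∀ y ∈ Set.uIcc y₀ y₁, Continuous (fun x : ℝ => h (x + y * I)) := by
    intro y hy
    rw [continuous_iff_continuousAt]
    intro x
    have h1 : ContinuousAt h ((x : ℂ) + y * I) := (hd _ (by simpa using hy)).continuousAt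
    exact ContinuousAt.comp (f := fun x : ℝ => (x : ℂ) + y * I) h1 (by fun_prop)
  have i0 := integrable_line hκ (hcont y₀ Set.left_mem_uIcc)
    (fun x hx => hb x y₀ Set.left_mem_uIcc hx)
  have i1 := integrable_line hκ (hcont y₁ Set.right_mem_uIcc)
    (fun x hx => hb x y₁ Set.right_mem_uIcc hx)
  have t0 := intervalIntegral_tendsto_integral i0 tendsto_neg_atTop_atBot tendsto_id
  have t1 := intervalIntegral_tendsto_integral i1 tendsto_neg_atTop_atBot tendsto_id
  have key : ∀ᶠ R : ℝ in atTop, ‖(∫ x in (-R)..R, h (x + y₀ * I)) -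
      ∫ x in (-R)..R, h (x + y₁ * I)‖ ≤ 2 * (C * Real.exp (-κ * R) * |y₁ - y₀|) := by
    filter_upwards [eventually_ge_atTop (1 : ℝ)] with R hR
    have hrect := Complex.integral_boundary_rect_eq_zero_of_differentiableOn h
      (⟨-R, y₀⟩ : ℂ) (⟨R, y₁⟩ : ℂ) (by
        intro z hz
        exact (hd z hz.2).differentiableWithinAt)
    simp only at hrect
    have e1 : ‖∫ y in y₀..y₁, h ((R : ℝ) + y * I)‖ ≤ C * Real.exp (-κ * R) * |y₁ - y₀| := by
      refine intervalIntegral.norm_integral_le_of_norm_le_const fun y hy => ?_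
      have := hb R y (Set.uIoc_subset_uIcc hy) (by rw [abs_of_pos (by linarith)]; exact hR)
      rwa [abs_of_pos (by linarith : 0 < R)] at this
    have e2 : ‖∫ y in y₀..y₁, h (((-R : ℝ) : ℂ) + y * I)‖ ≤
        C * Real.exp (-κ * R) * |y₁ - y₀| := by
      refine intervalIntegral.norm_integral_le_of_norm_le_const fun y hy => ?_
      have := hb (-R) y (Set.uIoc_subset_uIcc hy)
        (by rw [abs_neg, abs_of_pos (by linarith)]; exact hR)
      rwa [abs_neg, abs_of_pos (by linarith : 0 < R)] at this
    have e3 : (∫ x in (-R)..R, h (x + y₀ * I)) - ∫ x in (-R)..R, h (x + y₁ * I) =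
        I * (∫ y in y₀..y₁, h (((-R : ℝ) : ℂ) + y * I)) -
        I * ∫ y in y₀..y₁, h ((R : ℝ) + y * I) := by
      simp only [smul_eq_mul] at hrect
      linear_combination hrect
    rw [e3]
    refine (norm_sub_le _ _).trans ?_
    rw [norm_mul, norm_mul, Complex.norm_I]
    linarith
  have hlim : Tendsto (fun R : ℝ => 2 * (C * Real.exp (-κ * R) * |y₁ - y₀|)) atTop (𝓝 0) := by
    have : Tendsto (fun R : ℝ => Real.exp (-κ * R)) atTop (𝓝 0) := by
      apply Real.tendsto_exp_atBot.comp
      exact tendsto_id.const_mul_atTop_of_neg (by linarith)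
    simpa using ((this.const_mul C).mul_const |y₁ - y₀|).const_mul 2
  have t2 := (t0.sub t1).norm
  have := le_of_tendsto_of_tendsto t2 hlim key
  exact sub_eq_zero.mp (norm_le_zero_iff.mp this)

lemma periodic_entire_const (F : ℂ → ℂ) (hF : Differentiable ℂ F) (β : ℝ) (hβ : 0 < β)
    (hper : ∀ z, F (z + β * I) = F z) (C κ : ℝ) (hκ0 : 0 ≤ κ) (hκ : κ * β < 2 * π)
    (hb : ∀ z, ‖F z‖ ≤ C * Real.exp (κ * |z.re|)) (z : ℂ) : F z = F 0 := by
  have hC : 0 ≤ C := by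
    have := (norm_nonneg _).trans (hb 0)
    simpa using this
  set f : ℂ → ℂ := fun z => F (z * I) with hf
  have hfper : Function.Periodic f (β : ℂ) := by
    intro z
    simp only [hf]
    rw [add_mul, hper]
  have hfd : Differentiable ℂ f := by
    simp only [hf]
    fun_prop
  set g := Function.Periodic.cuspFunction β f with hg
  have hgf : ∀ z, g (Function.Periodic.qParam β z) = f z :=
    fun z => Function.Periodic.eq_cuspFunction hβ.ne' hfper z
  set σ : ℝ := κ * β / (2 * π) with hσ
  have hσ0 : 0 ≤ σ := by positivity
  have hσ1 : σ < 1 := by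
    rw [hσ, div_lt_one (by positivity)]
    exact hκ
  have hgd : ∀ q : ℂ, q ≠ 0 → DifferentiableAt ℂ g q := by
    intro q hq
    have := Function.Periodic.differentiableAt_cuspFunction (h := β) (f := f) hβ.ne' hfper
      (z := Function.Periodic.invQParam β q) (hfd _)
    rwa [Function.Periodic.qParam_right_inv hβ.ne' hq] at this
  have hgb : ∀ q : ℂ, q ≠ 0 → ‖g q‖ ≤ C * Real.exp (σ * |Real.log ‖q‖|) := by
    intro q hq
    have h1 := hgf (Function.Periodic.invQParam β q)
    rw [Function.Periodic.qParam_right_inv hβ.ne' hq] at h1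
    rw [h1]
    refine (hb _).trans (le_of_eq ?_)
    congr 2
    have h2 : (Function.Periodic.invQParam β q * I).re =
        - (Function.Periodic.invQParam β q).im := by simp
    rw [h2, Function.Periodic.im_invQParam, abs_neg, abs_mul, hσ]
    have : |(-β / (2 * π))| = β / (2 * π) := by
      rw [neg_div, abs_neg, abs_of_pos (by positivity)]
    rw [this]
    ring
  have hlo : (fun q => g q - g 0) =o[𝓝[≠] (0 : ℂ)] fun q => (q - 0)⁻¹ := by
    rw [Asymptotics.isLittleO_iff_tendsto']
    · have hlim : Tendsto (fun q : ℂ => C * ‖q‖ ^ (1 - σ) + ‖g 0‖ * ‖q‖) (𝓝[≠] 0) (𝓝 0) := by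
        have : Continuous (fun q : ℂ => C * ‖q‖ ^ (1 - σ) + ‖g 0‖ * ‖q‖) := by
          have : Continuous (fun q : ℂ => ‖q‖ ^ (1 - σ)) :=
            continuous_norm.rpow_const (fun _ => Or.inr (by linarith))
          fun_prop
        have h := this.tendsto 0
        simp only [norm_zero, mul_zero, add_zero] at h
        rw [Real.zero_rpow (by linarith), mul_zero] at h
        exact h.mono_left nhdsWithin_le_nhds
      refine squeeze_zero_norm' ?_ hlim
      have hball : ∀ᶠ q : ℂ in 𝓝[≠] 0, q ∈ Metric.ball (0 : ℂ) 1 :=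
        nhdsWithin_le_nhds (Metric.ball_mem_nhds _ one_pos)
      filter_upwards [hball, self_mem_nhdsWithin] with q hq1 hq0
      have hq0' : q ≠ 0 := hq0
      have hqn : 0 < ‖q‖ := norm_pos_iff.mpr hq0'
      have hq1' : ‖q‖ < 1 := by simpa using hq1
      rw [sub_zero, div_inv_eq_mul, norm_mul]
      have h3 := hgb q hq0'
      have h4 : Real.exp (σ * |Real.log ‖q‖|) * ‖q‖ = ‖q‖ ^ (1 - σ) := by
        rw [abs_of_neg (Real.log_neg hqn hq1'), Real.rpow_def_of_pos hqn]
        nth_rewrite 2 [← Real.exp_log hqn]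
        rw [← Real.exp_add]
        congr 1
        ring
      calc ‖g q - g 0‖ * ‖q‖ ≤ (C * Real.exp (σ * |Real.log ‖q‖|) + ‖g 0‖) * ‖q‖ := by
            gcongr
            exact (norm_sub_le _ _).trans (by linarith)
        _ = C * (Real.exp (σ * |Real.log ‖q‖|) * ‖q‖) + ‖g 0‖ * ‖q‖ := by ring
        _ = _ := by rw [h4]
    · filter_upwards [self_mem_nhdsWithin] with q hq h
      simp only [sub_zero, inv_eq_zero] at h
      exact absurd h hq
  have hG := Complex.differentiableOn_update_limUnder_of_isLittleO (f := g) (c := 0)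
    (s := Set.univ) univ_mem (fun q hq => (hgd q (by simpa using hq)).differentiableWithinAt) hlo
  set G := Function.update g 0 (limUnder (𝓝[≠] 0) g) with hGdef
  have hGd : Differentiable ℂ G := differentiableOn_univ.mp hG
  have hGg : ∀ q, q ≠ 0 → G q = g q := fun q hq => Function.update_of_ne hq _ _
  have hSd : Differentiable ℂ (dslope G 0) := by
    rw [← differentiableOn_univ, Complex.differentiableOn_dslope univ_mem]
    exact hGd.differentiableOn
  have hSt : Tendsto (dslope G 0) (cocompact ℂ) (𝓝 0) := by
    have hlim : Tendsto (fun q : ℂ => C * ‖q‖ ^ (-(1 - σ)) + ‖G 0‖ * ‖q‖⁻¹)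
        (cocompact ℂ) (𝓝 0) := by
      have h1 : Tendsto (fun r : ℝ => C * r ^ (-(1 - σ)) + ‖G 0‖ * r⁻¹) atTop (𝓝 0) := by
        have := ((tendsto_rpow_neg_atTop (y := 1 - σ) (by linarith)).const_mul C).add
          (tendsto_inv_atTop_zero.const_mul ‖G 0‖)
        simpa using this
      exact h1.comp (tendsto_norm_cocompact_atTop (E := ℂ))
    refine squeeze_zero_norm' ?_ hlim
    have hev : ∀ᶠ q : ℂ in cocompact ℂ, 1 < ‖q‖ :=
      (tendsto_norm_cocompact_atTop (E := ℂ)).eventually (eventually_gt_atTop 1)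
    filter_upwards [hev] with q hq
    have hqn : 0 < ‖q‖ := by linarith
    have hq0 : q ≠ 0 := norm_pos_iff.mp hqn
    rw [dslope_of_ne _ hq0, slope_def_field, sub_zero, norm_div, hGg q hq0]
    have h3 := hgb q hq0
    have h4 : Real.exp (σ * |Real.log ‖q‖|) * ‖q‖⁻¹ = ‖q‖ ^ (-(1 - σ)) := by
      rw [abs_of_pos (Real.log_pos hq), Real.rpow_def_of_pos hqn, ← Real.exp_log (inv_pos.mpr hqn),
        Real.log_inv, ← Real.exp_add]
      congr 1
      ring
    calc ‖g q - G 0‖ / ‖q‖ ≤ (C * Real.exp (σ * |Real.log ‖q‖|) + ‖G 0‖) / ‖q‖ := by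
          gcongr
          exact (norm_sub_le _ _).trans (by linarith)
      _ = C * (Real.exp (σ * |Real.log ‖q‖|) * ‖q‖⁻¹) + ‖G 0‖ * ‖q‖⁻¹ := by
          rw [div_eq_mul_inv]; ring
      _ = _ := by rw [h4]
  have hS0 : ∀ q, dslope G 0 q = 0 := fun q => hSd.apply_eq_of_tendsto_cocompact q hSt
  have hGc : ∀ q, G q = G 0 := by
    intro q
    have := sub_smul_dslope G 0 q
    rw [hS0 q, smul_zero] at this
    exact (sub_eq_zero.mp this.symm)
  have hfc : ∀ z, f z = G 0 := by
    intro z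
    have hq := Function.Periodic.qParam_ne_zero (h := β) z
    rw [← hgf, ← hGg _ hq, hGc]
  have e1 := hfc (-z * I)
  have e2 := hfc 0
  simp only [hf] at e1 e2
  rw [mul_assoc, I_mul_I] at e1
  simp only [mul_neg, mul_one, neg_neg, zero_mul] at e1 e2
  rw [e1, e2]

lemma periodic_strip_const (f : ℂ → ℂ) (β H : ℝ) (hβ : 0 < β) (hH : β / 2 < H)
    (hd : ∀ z : ℂ, |z.im| < H → DifferentiableAt ℂ f z)
    (hper : ∀ z : ℂ, |z.im| < H - β / 2 → f (z + β / 2 * I) = f (z - β / 2 * I))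
    (C κ : ℝ) (hκ0 : 0 ≤ κ) (hκ : κ * β < 2 * π)
    (hb : ∀ z : ℂ, |z.im| ≤ β / 2 → ‖f z‖ ≤ C * Real.exp (κ * |z.re|))
    (z : ℂ) (hz : |z.im| ≤ β / 2) : f z = f 0 := by
  set F : ℂ → ℂ := fun z => f (z - (round (z.im / β) : ℤ) * (β * I)) with hFdef
  have him : ∀ (z : ℂ) (k : ℤ), (z - k * (β * I)).im = z.im - k * β := by
    intro z k; simp
  have hre : ∀ (z : ℂ) (k : ℤ), (z - k * (β * I)).re = z.re := by
    intro z k; simp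
  have hround : ∀ z : ℂ, |z.im - (round (z.im / β) : ℤ) * β| ≤ β / 2 := by
    intro z
    have h1 := abs_sub_round (z.im / β)
    have : z.im - (round (z.im / β) : ℤ) * β = (z.im / β - round (z.im / β)) * β := by
      field_simp
    rw [this, abs_mul, abs_of_pos hβ]
    nlinarith
  have hloc : ∀ (k : ℤ) (z : ℂ), |z.im - k * β| < min H β → F z = f (z - k * (β * I)) := by
    intro k z hz
    simp only [hFdef]
    set m := round (z.im / β) with hm
    have h1 := abs_le.mp (hround z)
    rw [← hm] at h1
    have h2 := abs_lt.mp (hz.trans_le (min_le_right _ _))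
    have h3 := abs_lt.mp (hz.trans_le (min_le_left _ _))
    have hlt : (m : ℝ) < k + 2 := by
      by_contra hcon
      push Not at hcon
      nlinarith
    have hgt : (k : ℝ) - 2 < m := by
      by_contra hcon
      push Not at hcon
      nlinarith
    have hlt' : m < k + 2 := by exact_mod_cast hlt
    have hgt' : k - 2 < m := by exact_mod_cast hgt
    have hcases : m = k ∨ m = k + 1 ∨ m = k - 1 := by omega
    rcases hcases with h | h | h
    · rw [h]
    · rw [h] at h1 ⊢
      push_cast at h1 ⊢
      have h4 := hper (z - k * (β * I) - β / 2 * I) (by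
        have : (z - k * (β * I) - β / 2 * I).im = z.im - k * β - β / 2 := by simp
        rw [this, abs_lt]
        constructor <;> linarith)
      have e1 : z - k * (β * I) - β / 2 * I + β / 2 * I = z - k * (β * I) := by ring
      have e2 : z - k * (β * I) - β / 2 * I - β / 2 * I = z - (k + 1) * (β * I) := by ring
      rw [e1, e2] at h4
      exact h4.symm
    · rw [h] at h1 ⊢
      push_cast at h1 ⊢
      have h4 := hper (z - k * (β * I) + β / 2 * I) (by
        have : (z - k * (β * I) + β / 2 * I).im = z.im - k * β + β / 2 := by simp
        rw [this, abs_lt]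
        constructor <;> linarith)
      have e1 : z - k * (β * I) + β / 2 * I - β / 2 * I = z - k * (β * I) := by ring
      have e2 : z - k * (β * I) + β / 2 * I + β / 2 * I = z - (k - 1) * (β * I) := by ring
      rw [e1, e2] at h4
      exact h4
  have hmin : β / 2 < min H β := lt_min hH (by linarith)
  have hFd : Differentiable ℂ F := by
    intro z
    set k := round (z.im / β) with hk
    have h1 : |z.im - k * β| < min H β := (hround z).trans_lt hmin
    have hev : F =ᶠ[𝓝 z] fun z => f (z - k * (β * I)) := by
      have hopen : IsOpen {z : ℂ | |z.im - k * β| < min H β} := by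
        apply isOpen_lt _ continuous_const
        exact (Complex.continuous_im.sub continuous_const).abs
      filter_upwards [hopen.mem_nhds h1] with w hw using hloc k w hw
    refine DifferentiableAt.congr_of_eventuallyEq ?_ hev
    have h2 : DifferentiableAt ℂ f (z - k * (β * I)) := by
      apply hd
      rw [him]
      exact h1.trans_le (min_le_left _ _)
    exact DifferentiableAt.comp z (g := f) (f := fun z => z - k * (β * I)) h2 (by fun_prop)
  have hFper : ∀ z, F (z + β * I) = F z := by
    intro z
    simp only [hFdef]
    have : (z + β * I).im / β = z.im / β + 1 := by
      simp only [add_im, mul_im, ofReal_re, I_im, mul_one, ofReal_im, I_re, mul_zero, add_zero]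
      field_simp
    rw [this, round_add_one]
    push_cast
    congr 1
    ring
  have hFb : ∀ z, ‖F z‖ ≤ C * Real.exp (κ * |z.re|) := by
    intro z
    have := hb (z - (round (z.im / β) : ℤ) * (β * I)) (by rw [him]; exact hround z)
    rwa [hre] at this
  have e1 := periodic_entire_const F hFd β hβ hFper C κ hκ0 hκ hFb z
  have e2 := hloc 0 z (by simpa using hz.trans_lt hmin)
  have e3 := hloc 0 0 (by simpa using (by linarith : (0:ℝ) < β / 2).trans hmin)
  simp only [Int.cast_zero, zero_mul, sub_zero] at e2 e3
  rw [← e2, ← e3, e1]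

lemma laplace_norm_le {w e : ℂ} {t R : ℝ} (hR : |w.re| ≤ R) :
    ‖Complex.exp (w * ((t:ℂ) + e))‖ ≤ Real.exp (w * e).re * Real.exp (R * |t|) := by
  rw [Complex.norm_exp, ← Real.exp_add]
  apply Real.exp_le_exp.mpr
  have : (w * ((t:ℂ) + e)).re = (w*e).re + w.re * t := by
    simp [Complex.mul_re, Complex.add_re]; ring
  rw [this]
  have h1 : w.re * t ≤ |w.re| * |t| := by
    rw [← abs_mul]; exact le_abs_self _
  have h2 : |w.re| * |t| ≤ R * |t| := mul_le_mul_of_nonneg_right hR (abs_nonneg _)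
  linarith

lemma laplace_integrable {k : ℝ → ℂ} (hk : AEStronglyMeasurable k) {A μ : ℝ}
    (hkb : ∀ t, ‖k t‖ ≤ A * Real.exp (-μ * |t|)) (e w : ℂ) (hw : |w.re| < μ) :
    Integrable (fun t : ℝ => Complex.exp (w * ((t:ℂ) + e)) * k t) := by
  have h0 := (integrable_exp_neg_abs (κ := μ - |w.re|) (by linarith)).const_mul
    (Real.exp (w * e).re * A)
  refine h0.mono' ?_ (Eventually.of_forall fun t => ?_)
  · exact (Continuous.aestronglyMeasurable (by fun_prop)).mul hk
  · rw [norm_mul]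
    calc _ ≤ (Real.exp (w * e).re * Real.exp (|w.re| * |t|)) * (A * Real.exp (-μ * |t|)) :=
          mul_le_mul (laplace_norm_le le_rfl) (hkb t) (norm_nonneg _) (by positivity)
      _ = Real.exp (w * e).re * A * (Real.exp (|w.re| * |t|) * Real.exp (-μ * |t|)) := by ring
      _ = _ := by rw [← Real.exp_add]; ring_nf

lemma laplace_hasDerivAt {k : ℝ → ℂ} (hk : AEStronglyMeasurable k) {A μ : ℝ}
    (hkb : ∀ t, ‖k t‖ ≤ A * Real.exp (-μ * |t|)) (e w : ℂ) (hw : |w.re| < μ) :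
    Integrable (fun t : ℝ => ((t:ℂ) + e) * Complex.exp (w * ((t:ℂ) + e)) * k t) ∧
    HasDerivAt (fun w => ∫ t : ℝ, Complex.exp (w * ((t:ℂ) + e)) * k t)
      (∫ t : ℝ, ((t:ℂ) + e) * Complex.exp (w * ((t:ℂ) + e)) * k t) w := by
  have hA : 0 ≤ A := by
    have := (norm_nonneg _).trans (hkb 0)
    simpa using this
  set r := (μ - |w.re|) / 2 with hr
  have hr0 : 0 < r := by rw [hr]; linarith
  have h0 := (integrable_exp_neg_abs (κ := r) hr0).const_mul
    (Real.exp ((‖w‖ + r) * ‖e‖) * A)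
  refine hasDerivAt_integral_holo (fun w t => Complex.exp (w * ((t:ℂ) + e)) * k t) w r hr0 _ h0
    ?_ (fun w t => ((t:ℂ) + e) * Complex.exp (w * ((t:ℂ) + e)) * k t) ?_ ?_ ?_
  · intro z _
    exact (Continuous.aestronglyMeasurable (by fun_prop)).mul hk
  · exact (Continuous.aestronglyMeasurable (by fun_prop)).mul hk
  · intro t z _
    have h1 : HasDerivAt (fun z : ℂ => z * ((t:ℂ) + e)) ((t:ℂ) + e) z := by
      simpa using (hasDerivAt_id z).mul_const ((t:ℂ) + e)
    refine (h1.cexp.mul_const (k t)).congr_deriv ?_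
    ring
  · intro z hz t
    rw [Metric.mem_ball, dist_eq_norm] at hz
    have hre : |z.re| ≤ |w.re| + r := by
      have h1 : |(z - w).re| ≤ ‖z - w‖ := Complex.abs_re_le_norm _
      rw [Complex.sub_re] at h1
      have h2 : |z.re| ≤ |z.re - w.re| + |w.re| := by
        calc |z.re| = |(z.re - w.re) + w.re| := by ring_nf
          _ ≤ _ := abs_add_le _ _
      linarith
    have hze : (z * e).re ≤ (‖w‖ + r) * ‖e‖ := by
      calc (z*e).re ≤ ‖z * e‖ := Complex.re_le_norm _
        _ = ‖z‖ * ‖e‖ := norm_mul _ _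
        _ ≤ _ := by
          apply mul_le_mul_of_nonneg_right _ (norm_nonneg _)
          have : ‖z‖ ≤ ‖z - w‖ + ‖w‖ := by
            calc ‖z‖ = ‖(z - w) + w‖ := by ring_nf
              _ ≤ _ := norm_add_le _ _
          linarith
    rw [norm_mul]
    calc _ ≤ (Real.exp (z * e).re * Real.exp ((|w.re| + r) * |t|)) * (A * Real.exp (-μ * |t|)) :=
          mul_le_mul (laplace_norm_le hre) (hkb t) (norm_nonneg _) (by positivity)
      _ = Real.exp (z * e).re * A * (Real.exp ((|w.re| + r) * |t|) * Real.exp (-μ * |t|)) := by ring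
      _ = Real.exp (z * e).re * A * Real.exp (-r * |t|) := by
          rw [← Real.exp_add]; congr 2; rw [hr]; ring
      _ ≤ _ := by gcongr

lemma sinh_normSq (z : ℂ) : ‖Complex.sinh z‖ ^ 2 = Real.sinh z.re ^ 2 + Real.sin z.im ^ 2 := by
  have h : Complex.sinh z = ((Real.sinh z.re * Real.cos z.im : ℝ) : ℂ) +
      ((Real.cosh z.re * Real.sin z.im : ℝ) : ℂ) * I := by
    conv_lhs => rw [← Complex.re_add_im z]
    rw [Complex.sinh_add, Complex.sinh_mul_I, Complex.cosh_mul_I]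
    push_cast; ring
  rw [← Complex.normSq_eq_norm_sq, h, Complex.normSq_add_mul_I]
  have := Real.cosh_sq z.re
  have h2 := Real.sin_sq_add_cos_sq z.im
  nlinarith

lemma norm_sinh_ge_sin (z : ℂ) : |Real.sin z.im| * Real.cosh z.re ≤ ‖Complex.sinh z‖ := by
  apply abs_le_of_sq_le_sq' _ (norm_nonneg _) |>.2
  rw [sinh_normSq, mul_pow, sq_abs, Real.cosh_sq]
  have h1 := Real.sin_sq_le_one z.im
  nlinarith [sq_nonneg (Real.sinh z.re)]

lemma norm_sinh_ge (z : ℂ) : |Real.sinh z.re| ≤ ‖Complex.sinh z‖ := by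
  apply abs_le_of_sq_le_sq' _ (norm_nonneg _) |>.2
  rw [sinh_normSq, sq_abs]
  nlinarith [sq_nonneg (Real.sin z.im)]

lemma norm_sinh_le (z : ℂ) : ‖Complex.sinh z‖ ≤ Real.exp |z.re| := by
  have h1 : ‖Complex.sinh z‖ ≤ (‖Complex.exp z‖ + ‖Complex.exp (-z)‖) / 2 := by
    rw [Complex.sinh, norm_div]
    simp only [Complex.norm_two]
    gcongr
    exact norm_sub_le _ _
  rw [Complex.norm_exp, Complex.norm_exp, Complex.neg_re] at h1
  have h2 : Real.exp z.re ≤ Real.exp |z.re| := Real.exp_le_exp.mpr (le_abs_self _)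
  have h3 : Real.exp (-z.re) ≤ Real.exp |z.re| := Real.exp_le_exp.mpr (neg_le_abs _)
  linarith

lemma norm_cosh_le (z : ℂ) : ‖Complex.cosh z‖ ≤ Real.exp |z.re| := by
  have h1 : ‖Complex.cosh z‖ ≤ (‖Complex.exp z‖ + ‖Complex.exp (-z)‖) / 2 := by
    rw [Complex.cosh, norm_div]
    simp only [Complex.norm_two]
    gcongr
    exact norm_add_le _ _
  rw [Complex.norm_exp, Complex.norm_exp, Complex.neg_re] at h1
  have h2 : Real.exp z.re ≤ Real.exp |z.re| := Real.exp_le_exp.mpr (le_abs_self _)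
  have h3 : Real.exp (-z.re) ≤ Real.exp |z.re| := Real.exp_le_exp.mpr (neg_le_abs _)
  linarith

lemma cosh_ge_exp_abs (x : ℝ) : Real.exp |x| / 2 ≤ Real.cosh x := by
  rw [← Real.cosh_abs, Real.cosh_eq]
  have := Real.exp_pos (-|x|)
  linarith

lemma abs_sinh_ge {m x : ℝ} (hx : m ≤ |x|) :
    (1 - Real.exp (-2 * m)) / 2 * Real.exp |x| ≤ |Real.sinh x| := by
  rw [Real.abs_sinh, Real.sinh_eq]
  have h : Real.exp (-|x|) ≤ Real.exp (-2*m) * Real.exp |x| := by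
    rw [← Real.exp_add]; apply Real.exp_le_exp.mpr; linarith
  linarith

lemma norm_sinh_ge_exp {m : ℝ} (z : ℂ) (hx : m ≤ |z.re|) :
    (1 - Real.exp (-2 * m)) / 2 * Real.exp |z.re| ≤ ‖Complex.sinh z‖ :=
  (abs_sinh_ge hx).trans (norm_sinh_ge z)

lemma sinh_ne_zero_of {z : ℂ} (hz : z ≠ 0) (h : |z.im| < π) : Complex.sinh z ≠ 0 := by
  intro h0
  have h1 := sinh_normSq z
  rw [h0] at h1
  simp only [norm_zero, ne_eq, OfNat.ofNat_ne_zero, not_false_eq_true, zero_pow] at h1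
  have h2 : Real.sinh z.re = 0 := by nlinarith [sq_nonneg (Real.sinh z.re), sq_nonneg (Real.sin z.im)]
  have h3 : Real.sin z.im = 0 := by nlinarith [sq_nonneg (Real.sinh z.re), sq_nonneg (Real.sin z.im)]
  rw [Real.sinh_eq_zero] at h2
  rw [abs_lt] at h
  have h4 := (Real.sin_eq_zero_iff_of_lt_of_lt h.1 h.2).mp h3
  exact hz (Complex.ext h2 h4)

lemma cosh_ne_zero_of {z : ℂ} (h : |z.im| < π / 2) : Complex.cosh z ≠ 0 := by
  intro h0
  have h1 : Complex.sinh (2 * z) = 0 := by rw [Complex.sinh_two_mul, h0]; simp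
  by_cases hz : z = 0
  · rw [hz] at h0; simp at h0
  · refine sinh_ne_zero_of (z := 2 * z) (by simpa using hz) ?_ h1
    simp only [Complex.mul_im, Complex.re_ofNat, Complex.im_ofNat, zero_mul, add_zero, abs_mul]
    norm_num; linarith

lemma differentiable_dslope {f : ℂ → ℂ} (hf : Differentiable ℂ f) (c : ℂ) :
    Differentiable ℂ (dslope f c) := by
  rw [← differentiableOn_univ] at hf ⊢
  exact (Complex.differentiableOn_dslope univ_mem).mpr hf

lemma dslope_sinh_ne {a : ℝ} (ha : a ≠ 0) {T : ℂ} (hT : |a * T.im| < π) :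
    dslope (fun T : ℂ => Complex.sinh (a * T)) 0 T ≠ 0 := by
  by_cases h : T = 0
  · rw [h, dslope_same]
    have : HasDerivAt (fun T : ℂ => Complex.sinh (a * T)) (Complex.cosh (a * 0) * a) 0 := by
      have h1 : HasDerivAt (fun z : ℂ => (a:ℂ) * z) (a:ℂ) 0 := by
        simpa using (hasDerivAt_id (0:ℂ)).const_mul (a:ℂ)
      exact h1.csinh
    rw [this.deriv]; simpa using ha
  · rw [dslope_of_ne _ h, slope_def_field]
    simp only [mul_zero, Complex.sinh_zero, sub_zero]
    refine div_ne_zero (sinh_ne_zero_of ?_ ?_) h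
    · simp [ha, h]
    · simpa using hT

lemma sinh_add_pi_half_I (x : ℂ) : Complex.sinh (x + π / 2 * I) = I * Complex.cosh x := by
  rw [Complex.sinh_add, Complex.sinh_mul_I, Complex.cosh_mul_I]
  simp; ring

lemma sinh_sub_pi_half_I (x : ℂ) : Complex.sinh (x - π / 2 * I) = - I * Complex.cosh x := by
  rw [Complex.sinh_sub, Complex.sinh_mul_I, Complex.cosh_mul_I]
  simp; ring

lemma integral_sech : ∫ x : ℝ, (1 / Complex.cosh x : ℂ) = π := by
  have hIntg : Integrable (fun x : ℝ => 1 / Real.cosh x) := by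
    refine ((integrable_exp_neg_abs one_pos).const_mul 2).mono'
      (Continuous.aestronglyMeasurable ?_) (Eventually.of_forall fun x => ?_)
    · exact continuous_const.div Real.continuous_cosh (fun x => (Real.cosh_pos x).ne')
    · rw [Real.norm_of_nonneg (by positivity)]
      rw [div_le_iff₀ (Real.cosh_pos x)]
      have := cosh_ge_exp_abs x
      have h2 : Real.exp (-1 * |x|) * Real.exp |x| = 1 := by
        rw [← Real.exp_add]; simp
      nlinarith [Real.exp_pos (-1 * |x|)]
  have hd : ∀ x : ℝ, HasDerivAt (fun x => Real.arctan (Real.sinh x)) (1 / Real.cosh x) x := by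
    intro x
    have := (Real.hasDerivAt_sinh x).arctan
    refine this.congr_deriv ?_
    have h1 := Real.cosh_sq x
    have h2 := (Real.cosh_pos x).ne'
    rw [add_comm, ← h1]; field_simp
  have htop : Tendsto Real.sinh atTop atTop := Real.sinhOrderIso.tendsto_atTop
  have hbot : Tendsto Real.sinh atBot atBot := Real.sinhOrderIso.tendsto_atBot
  have := integral_of_hasDerivAt_of_tendsto hd hIntg
    ((Real.tendsto_arctan_atBot.mono_right nhdsWithin_le_nhds).comp hbot)
    ((Real.tendsto_arctan_atTop.mono_right nhdsWithin_le_nhds).comp htop)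
  have h2 : (∫ x : ℝ, (1 / Complex.cosh x : ℂ)) = ((∫ x : ℝ, 1 / Real.cosh x : ℝ) : ℂ) := by
    rw [← integral_complex_ofReal]
    congr 1; ext x; push_cast; rfl
  rw [h2, this]; push_cast; ring

lemma norm_exp_T (z : ℂ) (x y : ℝ) :
    ‖Complex.exp (-2 * I * z * (x + y * I))‖ ≤ Real.exp (2 * |z.re| * |y|) * Real.exp (2 * |z.im| * |x|) := by
  rw [Complex.norm_exp, ← Real.exp_add]
  apply Real.exp_le_exp.mpr
  have : (-2 * I * z * (x + y * I)).re = 2 * (z.re * y) + 2 * (z.im * x) := by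
    simp; ring
  rw [this]
  have h1 : z.re * y ≤ |z.re| * |y| := by rw [← abs_mul]; exact le_abs_self _
  have h2 : z.im * x ≤ |z.im| * |x| := by rw [← abs_mul]; exact le_abs_self _
  linarith

lemma sech_integrable {z : ℂ} (hz : |z.im| < 1 / 2) :
    Integrable (fun x : ℝ => Complex.exp (-2 * I * z * x) / Complex.cosh x) := by
  have h := laplace_integrable (k := fun x : ℝ => 1 / Complex.cosh x) (A := 2) (μ := 1) ?_ ?_ 0
    (-2 * I * z) ?_
  · refine h.congr (Eventually.of_forall fun x => ?_)
    simp only [add_zero]; ring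
  · refine (Continuous.aestronglyMeasurable ?_)
    refine continuous_const.div (by fun_prop) (fun x => cosh_ne_zero_of ?_)
    simp; positivity
  · intro t
    rw [← Complex.ofReal_cosh, norm_div, norm_one, Complex.norm_real,
      Real.norm_of_nonneg (Real.cosh_pos t).le, div_le_iff₀ (Real.cosh_pos t)]
    have := cosh_ge_exp_abs t
    have h2 : Real.exp (-1 * |t|) * Real.exp |t| = 1 := by
      rw [← Real.exp_add]; simp
    nlinarith [Real.exp_pos (-1 * |t|)]
  · simp [abs_mul]; linarith

lemma sech_ft {z : ℂ} (hz : |z.im| < 1 / 2) :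
    ∫ x : ℝ, Complex.exp (-2 * I * z * x) / Complex.cosh x = π / Complex.cosh (π * z) := by
  set A : ℂ → ℂ := dslope (fun T => Complex.exp (-2 * I * z * T) - 1) 0 with hA
  set B : ℂ → ℂ := dslope (fun T : ℂ => Complex.sinh ((1:ℝ) * T)) 0 with hB
  have hAd : Differentiable ℂ A := differentiable_dslope (by fun_prop) 0
  have hBd : Differentiable ℂ B := differentiable_dslope (by fun_prop) 0
  have hq : ∀ T : ℂ, T ≠ 0 → A T / B T = (Complex.exp (-2 * I * z * T) - 1) / Complex.sinh T := by
    intro T hT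
    rw [hA, hB, dslope_of_ne _ hT, dslope_of_ne _ hT, slope_def_field, slope_def_field]
    simp only [mul_zero, Complex.exp_zero, sub_self, sub_zero, Complex.sinh_zero, ofReal_one, one_mul]
    field_simp
  have hsh := contour_shift (h := fun T => A T / B T) (y₀ := π / 2) (y₁ := -(π/2))
    (C := 8 * Real.exp (2 * |z.re| * π)) (κ := 1 - 2 * |z.im|) (by linarith) ?_ ?_
  · have e1 : (∫ x : ℝ, A (x + (π/2:ℝ) * I) / B (x + (π/2:ℝ) * I)) =
        ∫ x : ℝ, (-I * Complex.exp (π * z)) * (Complex.exp (-2 * I * z * x) / Complex.cosh x) +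
          I * (1 / Complex.cosh x) := by
      congr 1; ext x
      rw [hq]
      · have : (x:ℂ) + ((π/2 : ℝ):ℂ) * I = x + π / 2 * I := by push_cast; ring
        rw [this, sinh_add_pi_half_I]
        have h2 : -2 * I * z * (x + π / 2 * I) = π * z + -2 * I * z * x := by
          ring_nf; rw [I_sq]; ring
        rw [h2, Complex.exp_add]
        have hc : Complex.cosh x ≠ 0 := cosh_ne_zero_of (by simp; positivity)
        field_simp
        rw [I_sq]; ring
      · intro h
        have := congrArg Complex.im h
        simp at this
    have e2 : (∫ x : ℝ, A (x + (-(π/2):ℝ) * I) / B (x + (-(π/2):ℝ) * I)) =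
        ∫ x : ℝ, (I * Complex.exp (-(π * z))) * (Complex.exp (-2 * I * z * x) / Complex.cosh x) +
          (-I) * (1 / Complex.cosh x) := by
      congr 1; ext x
      rw [hq]
      · have : (x:ℂ) + ((-(π/2) : ℝ):ℂ) * I = x - π / 2 * I := by push_cast; ring
        rw [this, sinh_sub_pi_half_I]
        have h2 : -2 * I * z * (x - π / 2 * I) = -(π * z) + -2 * I * z * x := by
          ring_nf; rw [I_sq]; ring
        rw [h2, Complex.exp_add]
        have hc : Complex.cosh x ≠ 0 := cosh_ne_zero_of (by simp; positivity)
        field_simp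
        rw [I_sq]; ring
      · intro h
        have := congrArg Complex.im h
        simp at this
    have i1 := sech_integrable hz
    have i0 : Integrable (fun x : ℝ => 1 / Complex.cosh x) := by
      simpa using sech_integrable (z := 0) (by simp)
    rw [e1, e2, integral_add (i1.const_mul _) (i0.const_mul _),
      integral_add (i1.const_mul _) (i0.const_mul _), integral_const_mul, integral_const_mul,
      integral_const_mul, integral_const_mul, integral_sech] at hsh
    have hc : Complex.cosh (π * z) ≠ 0 := by
      apply cosh_ne_zero_of
      simp [abs_mul, abs_of_pos Real.pi_pos]
      nlinarith [Real.pi_pos]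
    rw [eq_div_iff hc, Complex.cosh]
    have h3 : -I * Complex.exp (π * z) * (∫ x : ℝ, Complex.exp (-2 * I * z * x) / Complex.cosh x) -
       (I * Complex.exp (-(π * z)) * (∫ x : ℝ, Complex.exp (-2 * I * z * x) / Complex.cosh x)) =
       - I * π - I * π := by linear_combination hsh
    linear_combination (I / 2) * h3 + ((∫ x : ℝ, Complex.exp (-2 * I * z * x) / Complex.cosh x) * (Complex.exp (π * z) + Complex.exp (-(π * z))) / 2 - π) * I_sq
  · intro T hT
    rw [Set.uIcc_of_ge (by linarith [Real.pi_pos]), Set.mem_Icc] at hT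
    refine (hAd T).div (hBd T) (dslope_sinh_ne one_ne_zero ?_)
    rw [one_mul, abs_lt]; constructor <;> linarith [Real.pi_pos]
  · intro x y hy hx
    rw [Set.uIcc_of_ge (by linarith [Real.pi_pos]), Set.mem_Icc] at hy
    have hne : (x:ℂ) + y * I ≠ 0 := by
      intro h
      have := congrArg Complex.re h
      simp at this
      rw [this] at hx; norm_num at hx
    rw [hq _ hne, norm_div]
    have hs : Real.exp |x| / 4 ≤ ‖Complex.sinh (x + y * I)‖ := by
      have := norm_sinh_ge_exp (m := 1) ((x:ℂ) + y * I) (by simpa using hx)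
      simp only [add_re, ofReal_re, mul_re, I_re, mul_zero, ofReal_im, I_im, mul_one, sub_self,
        add_zero] at this
      have h5 : Real.exp (-2) ≤ 1 / 2 := by
        have h6 : (1:ℝ) + 2 ≤ Real.exp 2 := by linarith [Real.add_one_le_exp (2:ℝ)]
        have h7 : Real.exp (-2) * Real.exp 2 = 1 := by rw [← Real.exp_add]; norm_num
        nlinarith [Real.exp_pos (-2 * 1)]
      nlinarith [Real.exp_pos |x|]
    have hy' : |y| ≤ π := by rw [abs_le]; constructor <;> linarith [Real.pi_pos]
    have hn : ‖Complex.exp (-2 * I * z * (x + y * I)) - 1‖ ≤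
        2 * Real.exp (2 * |z.re| * π) * Real.exp (2 * |z.im| * |x|) := by
      have h1 := norm_exp_T z x y
      have h2 : Real.exp (2 * |z.re| * |y|) ≤ Real.exp (2 * |z.re| * π) := by gcongr
      have h3 : 1 ≤ Real.exp (2 * |z.re| * π) := Real.one_le_exp (by positivity)
      have h4 : 1 ≤ Real.exp (2 * |z.im| * |x|) := Real.one_le_exp (by positivity)
      have h5 := norm_sub_le (Complex.exp (-2 * I * z * (x + y * I))) 1
      rw [norm_one] at h5
      have h6 : Real.exp (2 * |z.re| * |y|) * Real.exp (2 * |z.im| * |x|) ≤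
        Real.exp (2 * |z.re| * π) * Real.exp (2 * |z.im| * |x|) := by gcongr
      nlinarith
    rw [div_le_iff₀ (lt_of_lt_of_le (by positivity) hs)]
    have e : Real.exp (-(1 - 2 * |z.im|) * |x|) * Real.exp |x| = Real.exp (2 * |z.im| * |x|) := by
      rw [← Real.exp_add]; ring_nf
    calc _ ≤ _ := hn
      _ = 8 * Real.exp (2 * |z.re| * π) * Real.exp (-(1 - 2 * |z.im|) * |x|) * (Real.exp |x| / 4) := by
        rw [← e]; ring
      _ ≤ _ := by gcongr

lemma laplace_bound {k : ℝ → ℂ} {A μ κ : ℝ}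
    (hkb : ∀ t, ‖k t‖ ≤ A * Real.exp (-μ * |t|)) (e w : ℂ) (hκ : 0 < κ) (hw : |w.re| ≤ μ - κ) :
    ‖∫ t : ℝ, Complex.exp (w * ((t:ℂ) + e)) * k t‖ ≤
      Real.exp (w * e).re * (A * ∫ t : ℝ, Real.exp (-κ * |t|)) := by
  rw [← mul_assoc, ← integral_const_mul]
  refine norm_integral_le_of_norm_le ((integrable_exp_neg_abs hκ).const_mul _)
    (Eventually.of_forall fun t => ?_)
  rw [norm_mul]
  calc _ ≤ (Real.exp (w * e).re * Real.exp ((μ - κ) * |t|)) * (A * Real.exp (-μ * |t|)) :=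
        mul_le_mul (laplace_norm_le hw) (hkb t) (norm_nonneg _) (by positivity)
    _ = Real.exp (w * e).re * A * (Real.exp ((μ - κ) * |t|) * Real.exp (-μ * |t|)) := by ring
    _ = _ := by rw [← Real.exp_add]; ring_nf

lemma isOpen_strip (H : ℝ) : IsOpen {z : ℂ | |z.im| < H} :=
  isOpen_lt (by fun_prop) (by fun_prop)

lemma convex_strip (H : ℝ) : Convex ℝ {z : ℂ | |z.im| < H} := by
  have : {z : ℂ | |z.im| < H} = Complex.imLm ⁻¹' (Set.Ioo (-H) H) := by
    ext z; simp [abs_lt]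
  rw [this]
  exact (convex_Ioo _ _).linear_preimage _

lemma strip_const {H : ℝ} {f : ℂ → ℂ} (hd : ∀ z : ℂ, |z.im| < H → HasDerivAt f 0 z)
    {z w : ℂ} (hz : |z.im| < H) (hw : |w.im| < H) : f z = f w := by
  refine (isOpen_strip H).is_const_of_deriv_eq_zero (convex_strip H).isPreconnected
    (fun z hz => (hd z hz).differentiableAt.differentiableWithinAt)
    (fun z hz => (hd z hz).deriv) hz hw

/-- the point on the contour -/
def Tl (b t : ℝ) : ℂ := (t : ℂ) + I * ((π * b / 2 : ℝ) : ℂ)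

def k2 (b t : ℝ) : ℂ := 1 / (Complex.sinh (b * Tl b t) * Complex.sinh ((b:ℂ)⁻¹ * Tl b t))
def k1 (b t : ℝ) : ℂ := 1 / (Tl b t * Complex.sinh (b * Tl b t) * Complex.sinh ((b:ℂ)⁻¹ * Tl b t))
def k3 (b t : ℝ) : ℂ := 1 / (Tl b t * Complex.sinh ((b:ℂ)⁻¹ * Tl b t))
def k4 (b t : ℝ) : ℂ := 1 / (Complex.sinh ((b:ℂ)⁻¹ * Tl b t))

def Lq (b : ℝ) (z : ℂ) : ℂ := (1 / 4 : ℂ) * ∫ t : ℝ, Complex.exp ((-2 * I * z) * ((t:ℂ) + I * ((π * b / 2 : ℝ) : ℂ))) * k1 b t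

lemma Lq_eq (b : ℝ) (z : ℂ) :
    Lq b z = (1 / 4 : ℂ) * ∫ t : ℝ, ebIntegrand b (π * b / 2) z t := by
  unfold Lq ebIntegrand k1 Tl
  congr 2; ext t
  rw [mul_one_div]

section

lemma Tl_continuous : Continuous (Tl b) := by unfold Tl; fun_prop


lemma Tl_re {b : ℝ} (t : ℝ) : (Tl b t).re = t := by simp [Tl]
lemma Tl_im {b : ℝ} (t : ℝ) : (Tl b t).im = π * b / 2 := by simp [Tl]

lemma Tl_ne {b : ℝ} (hb : 0 < b) (t : ℝ) : Tl b t ≠ 0 := by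
  intro h
  have := congrArg Complex.im h
  rw [Tl_im] at this
  have h2 := Real.pi_pos
  simp at this
  exact hb.ne' this

lemma Tl_norm_ge {b : ℝ} (hb : 0 < b) (t : ℝ) : π * b / 2 ≤ ‖Tl b t‖ := by
  have := Complex.abs_im_le_norm (Tl b t)
  rw [Tl_im] at this
  exact (le_abs_self _).trans this

lemma sinh_inv_Tl {b : ℝ} (hb : 0 < b) (t : ℝ) : Complex.sinh ((b:ℂ)⁻¹ * Tl b t) = I * Complex.cosh ((b⁻¹ * t : ℝ)) := by
  rw [← sinh_add_pi_half_I]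
  congr 1
  have : (b:ℂ) ≠ 0 := by exact_mod_cast hb.ne'
  unfold Tl; push_cast; field_simp

lemma norm_sinh_inv_Tl {b : ℝ} (hb : 0 < b) (t : ℝ) : Real.exp (b⁻¹ * |t|) / 2 ≤ ‖Complex.sinh ((b:ℂ)⁻¹ * Tl b t)‖ := by
  rw [sinh_inv_Tl hb, norm_mul, Complex.norm_I, one_mul, ← Complex.ofReal_cosh, Complex.norm_real,
    Real.norm_of_nonneg (Real.cosh_pos _).le]
  have := cosh_ge_exp_abs (b⁻¹ * t)
  rwa [abs_mul, abs_of_pos (inv_pos.mpr hb)] at this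

lemma sinh_inv_Tl_ne {b : ℝ} (hb : 0 < b) (t : ℝ) : Complex.sinh ((b:ℂ)⁻¹ * Tl b t) ≠ 0 := by
  rw [← norm_pos_iff]
  exact lt_of_lt_of_le (by positivity) (norm_sinh_inv_Tl hb t)


lemma sinb_pos {b : ℝ} (hb : 0 < b) (hb1 : b ≤ 1) : 0 < Real.sin (π * b ^ 2 / 2) := by
  apply Real.sin_pos_of_pos_of_lt_pi
  · have := Real.pi_pos; positivity
  · have : b ^ 2 ≤ 1 := by nlinarith
    nlinarith [Real.pi_pos]

lemma norm_sinh_Tl {b : ℝ} (hb : 0 < b) (hb1 : b ≤ 1) (t : ℝ) : Real.sin (π * b ^ 2 / 2) * (Real.exp (b * |t|) / 2) ≤ ‖Complex.sinh (b * Tl b t)‖ := by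
  have h := norm_sinh_ge_sin (b * Tl b t)
  have e1 : ((b:ℂ) * Tl b t).im = π * b ^ 2 / 2 := by simp [Tl]; ring
  have e2 : ((b:ℂ) * Tl b t).re = b * t := by simp [Tl]
  rw [e1, e2] at h
  refine le_trans ?_ h
  rw [abs_of_pos (sinb_pos hb hb1)]
  have := cosh_ge_exp_abs (b * t)
  rw [abs_mul, abs_of_pos hb] at this
  exact mul_le_mul_of_nonneg_left this (sinb_pos hb hb1).le

lemma sinh_Tl_ne {b : ℝ} (hb : 0 < b) (hb1 : b ≤ 1) (t : ℝ) : Complex.sinh (b * Tl b t) ≠ 0 := by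
  rw [← norm_pos_iff]
  have := sinb_pos hb hb1
  exact lt_of_lt_of_le (by positivity) (norm_sinh_Tl hb hb1 t)

lemma k4_bound {b : ℝ} (hb : 0 < b) (t : ℝ) : ‖k4 b t‖ ≤ 2 * Real.exp (-b⁻¹ * |t|) := by
  unfold k4
  have h := norm_sinh_inv_Tl hb t
  rw [norm_div, norm_one, div_le_iff₀ (lt_of_lt_of_le (by positivity) h)]
  calc (1:ℝ) = 2 * Real.exp (-b⁻¹ * |t|) * (Real.exp (b⁻¹ * |t|) / 2) := by
        have : Real.exp (-b⁻¹ * |t|) * Real.exp (b⁻¹ * |t|) = 1 := by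
          rw [← Real.exp_add]; simp
        linear_combination -this
    _ ≤ _ := by gcongr

lemma k3_bound {b : ℝ} (hb : 0 < b) (t : ℝ) : ‖k3 b t‖ ≤ (2 / (π * b / 2)) * Real.exp (-b⁻¹ * |t|) := by
  have : k3 b t = (Tl b t)⁻¹ * k4 b t := by unfold k3 k4; field_simp
  rw [this, norm_mul, norm_inv]
  have h1 := Tl_norm_ge hb t
  have hp : 0 < π * b / 2 := by have := Real.pi_pos; positivity
  have h2 : ‖Tl b t‖⁻¹ ≤ (π * b / 2)⁻¹ := inv_anti₀ hp h1
  calc _ ≤ (π * b / 2)⁻¹ * (2 * Real.exp (-b⁻¹ * |t|)) := by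
        gcongr; exact k4_bound hb t
    _ = _ := by ring

lemma k2_bound {b : ℝ} (hb : 0 < b) (hb1 : b ≤ 1) : ∃ A, ∀ t, ‖k2 b t‖ ≤ A * Real.exp (-(b + b⁻¹) * |t|) := by
  have hs := sinb_pos hb hb1
  refine ⟨4 / Real.sin (π * b ^ 2 / 2), fun t => ?_⟩
  have h1 := norm_sinh_inv_Tl hb t
  have h2 := norm_sinh_Tl hb hb1 t
  have e : k2 b t = (Complex.sinh (b * Tl b t))⁻¹ * k4 b t := by
    unfold k2 k4; rw [one_div, mul_inv, one_div]
  rw [e, norm_mul, norm_inv]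
  calc _ ≤ (Real.sin (π * b ^ 2 / 2) * (Real.exp (b * |t|) / 2))⁻¹ * (2 * Real.exp (-b⁻¹ * |t|)) := by
        gcongr
        exact k4_bound hb t
    _ = 4 / Real.sin (π * b ^ 2 / 2) * ((Real.exp (b * |t|))⁻¹ * Real.exp (-b⁻¹ * |t|)) := by
        field_simp; ring
    _ = _ := by rw [← Real.exp_neg, ← Real.exp_add]; ring_nf

lemma k1_bound {b : ℝ} (hb : 0 < b) (hb1 : b ≤ 1) : ∃ A, ∀ t, ‖k1 b t‖ ≤ A * Real.exp (-(b + b⁻¹) * |t|) := by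
  obtain ⟨A, hA⟩ := k2_bound hb hb1
  refine ⟨(π * b / 2)⁻¹ * A, fun t => ?_⟩
  have : k1 b t = (Tl b t)⁻¹ * k2 b t := by
    unfold k1 k2; rw [one_div, one_div, ← mul_inv, mul_assoc]
  rw [this, norm_mul, norm_inv]
  have h1 := Tl_norm_ge hb t
  have hp : 0 < π * b / 2 := by have := Real.pi_pos; positivity
  have h2 : ‖Tl b t‖⁻¹ ≤ (π * b / 2)⁻¹ := inv_anti₀ hp h1
  rw [mul_assoc]
  exact mul_le_mul h2 (hA t) (norm_nonneg _) (by positivity)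

lemma k1_cont {b : ℝ} (hb : 0 < b) (hb1 : b ≤ 1) : Continuous (k1 b) := by
  have := Tl_continuous (b := b)
  refine continuous_const.div (by fun_prop) fun t => ?_
  exact mul_ne_zero (mul_ne_zero (Tl_ne hb t) (sinh_Tl_ne hb hb1 t)) (sinh_inv_Tl_ne hb t)

lemma k2_cont {b : ℝ} (hb : 0 < b) (hb1 : b ≤ 1) : Continuous (k2 b) := by
  have := Tl_continuous (b := b)
  refine continuous_const.div (by fun_prop) fun t => ?_
  exact (mul_ne_zero (sinh_Tl_ne hb hb1 t) (sinh_inv_Tl_ne hb t))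

lemma k3_cont {b : ℝ} (hb : 0 < b) : Continuous (k3 b) := by
  have := Tl_continuous (b := b)
  refine continuous_const.div (by fun_prop) fun t => ?_
  exact (mul_ne_zero (Tl_ne hb t) (sinh_inv_Tl_ne hb t))

lemma k4_cont {b : ℝ} (hb : 0 < b) : Continuous (k4 b) := by
  have := Tl_continuous (b := b)
  refine continuous_const.div (by fun_prop) fun t => (sinh_inv_Tl_ne hb t)

lemma wre (z : ℂ) : |(-2 * I * z).re| = 2 * |z.im| := by
  simp [abs_mul]

lemma Lq_deriv {b : ℝ} (hb : 0 < b) (hb1 : b ≤ 1) {z : ℂ} (hz : 2 * |z.im| < b + b⁻¹) :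
    HasDerivAt (Lq b) ((1/4) * ((∫ t : ℝ, Complex.exp ((-2 * I * z) * Tl b t) * k2 b t) * (-2 * I))) z := by
  obtain ⟨A, hA⟩ := k1_bound hb hb1
  have h := (laplace_hasDerivAt (k1_cont hb hb1).aestronglyMeasurable hA
    (I * ((π * b / 2 : ℝ) : ℂ)) (-2 * I * z) (by rw [wre]; exact hz)).2
  have h1 : HasDerivAt (fun z : ℂ => -2 * I * z) (-2 * I) z := by
    simpa using (hasDerivAt_id z).const_mul (-2 * I)
  have h2 := (h.comp z h1).const_mul (1/4 : ℂ)
  refine h2.congr_deriv ?_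
  congr 3; ext t
  have hT : (t:ℂ) + I * ((π * b / 2 : ℝ) : ℂ) = Tl b t := rfl
  rw [hT]
  unfold k1 k2
  have h1 := Tl_ne hb t
  have h2 := sinh_Tl_ne hb hb1 t
  have h3 := sinh_inv_Tl_ne hb t
  field_simp

lemma Lq_bound {b : ℝ} (hb : 0 < b) (hb1 : b ≤ 1) {η : ℝ} (hη : 0 < η) : ∃ C, 0 ≤ C ∧ ∀ z : ℂ, 2 * |z.im| ≤ b + b⁻¹ - 2 * η →
    ‖Lq b z‖ ≤ C * Real.exp (π * b * z.re) := by
  obtain ⟨A, hA⟩ := k1_bound hb hb1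
  have hA0 : 0 ≤ A := by simpa using (norm_nonneg _).trans (hA 0)
  refine ⟨(1/4) * (A * ∫ t : ℝ, Real.exp (-(2*η) * |t|)), ?_, fun z hz => ?_⟩
  · have : 0 ≤ ∫ t : ℝ, Real.exp (-(2*η) * |t|) := integral_nonneg (fun t => (Real.exp_pos _).le)
    positivity
  · have := laplace_bound hA (I * ((π * b / 2 : ℝ) : ℂ)) (-2 * I * z) (κ := 2 * η) (by positivity)
      (by rw [wre]; exact hz)
    unfold Lq
    rw [norm_mul]
    have e : (-2 * I * z * (I * ((π * b / 2 : ℝ) : ℂ))).re = π * b * z.re := by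
      simp; ring
    rw [e] at this
    rw [show ‖(1/4:ℂ)‖ = 1/4 by norm_num]
    linarith

/-- difference of values of L -/
def G3 (b : ℝ) (z : ℂ) : ℂ := (-1/2 : ℂ) * ∫ t : ℝ, Complex.exp ((-2 * I * z) * ((t:ℂ) + I * ((π * b / 2 : ℝ) : ℂ))) * k3 b t

lemma Lq_diff {b : ℝ} (hb : 0 < b) (hb1 : b ≤ 1) {z : ℂ} (hz : 2 * |z.im| < b⁻¹) :
    Lq b (z - I * b / 2) - Lq b (z + I * b / 2) = G3 b z := by
  obtain ⟨A, hA⟩ := k1_bound hb hb1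
  have hm := (k1_cont hb hb1).aestronglyMeasurable (μ := volume)
  have i1 := laplace_integrable hm hA (I * ((π * b / 2 : ℝ) : ℂ)) (-2 * I * (z - I * b / 2)) (by
    rw [wre]; 
    have : (z - I * b / 2).im = z.im - b / 2 := by simp
    rw [this]
    have := abs_sub z.im (b/2)
    rw [abs_of_pos (half_pos hb)] at this; linarith)
  have i2 := laplace_integrable hm hA (I * ((π * b / 2 : ℝ) : ℂ)) (-2 * I * (z + I * b / 2)) (by
    rw [wre]; 
    have : (z + I * b / 2).im = z.im + b / 2 := by simp
    rw [this]
    have := abs_add_le z.im (b/2)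
    rw [abs_of_pos (half_pos hb)] at this; linarith)
  unfold Lq G3
  rw [← mul_sub, ← integral_sub i1 i2]
  have : ∀ x y : ℂ, (-2:ℂ) * x = y → (1/4) * y = (-1/2) * x := by
    intro x y h; rw [← h]; ring
  apply this
  rw [← integral_const_mul]
  congr 1; ext t
  have hT : (t:ℂ) + I * ((π * b / 2 : ℝ) : ℂ) = Tl b t := rfl
  rw [hT]
  have e1 : -2 * I * (z - I * b / 2) * Tl b t = -2 * I * z * Tl b t + -(b * Tl b t) := by
    linear_combination (b * Tl b t) * I_sq
  have e2 : -2 * I * (z + I * b / 2) * Tl b t = -2 * I * z * Tl b t + (b * Tl b t) := by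
    linear_combination -(b * Tl b t) * I_sq
  rw [e1, e2, Complex.exp_add, Complex.exp_add]
  have h1 := Tl_ne hb t
  have h2 := sinh_Tl_ne hb hb1 t
  have h3 := sinh_inv_Tl_ne hb t
  have h4 : k1 b t = k3 b t / Complex.sinh (b * Tl b t) := by
    unfold k1 k3; field_simp
  rw [h4]
  have h5 : Complex.exp (b * Tl b t) - Complex.exp (-(b * Tl b t)) = 2 * Complex.sinh (b * Tl b t) := by
    rw [Complex.sinh]; ring
  linear_combination (Complex.exp (-2 * I * z * Tl b t) * (k3 b t / Complex.sinh (b * Tl b t))) * h5 +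
    2 * Complex.exp (-2 * I * z * Tl b t) * (div_mul_cancel₀ (k3 b t) h2)

lemma int_k4 {b : ℝ} (hb : 0 < b) {z : ℂ} (hz : 2 * |z.im| < b⁻¹) :
    ∫ t : ℝ, Complex.exp ((-2 * I * z) * Tl b t) * k4 b t =
      -I * Complex.exp (π * b * z) * (b * (π / Complex.cosh (π * b * z))) := by
  have hz' : |(b * z).im| < 1/2 := by
    simp [abs_mul, abs_of_pos hb]
    have := mul_lt_mul_of_pos_left hz hb
    rw [mul_inv_cancel₀ hb.ne'] at this; linarith
  have h := sech_ft hz'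
  have e : ∀ t : ℝ, Complex.exp ((-2 * I * z) * Tl b t) * k4 b t = -I * Complex.exp (π * b * z) *
      (Complex.exp (-2 * I * (b * z) * ((b⁻¹ * t : ℝ))) / Complex.cosh ((b⁻¹ * t : ℝ))) := by
    intro t
    unfold k4
    rw [sinh_inv_Tl hb]
    have hbc : (b:ℂ) ≠ 0 := by exact_mod_cast hb.ne'
    have e1 : -2 * I * z * Tl b t = π * b * z + -2 * I * (b * z) * ((b⁻¹ * t : ℝ)) := by
      unfold Tl; push_cast; field_simp; ring_nf; rw [I_sq]; ring
    rw [e1, Complex.exp_add]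
    have hI : 1 / (I * Complex.cosh ((b⁻¹ * t : ℝ))) = -I / Complex.cosh ((b⁻¹ * t : ℝ)) := by
      rw [← div_div, one_div, Complex.inv_I]
    rw [hI]; ring
  simp_rw [e]
  rw [integral_const_mul]
  congr 1
  rw [Measure.integral_comp_mul_left (fun x : ℝ => Complex.exp (-2 * I * (b * z) * x) / Complex.cosh x) b⁻¹,
    h, inv_inv, abs_of_pos hb]
  rw [Complex.real_smul]
  ring_nf

lemma G3_deriv {b : ℝ} (hb : 0 < b) {z : ℂ} (hz : 2 * |z.im| < b⁻¹) :
    HasDerivAt (G3 b) (Complex.exp (π * b * z) * (b * (π / Complex.cosh (π * b * z)))) z := by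
  have h := (laplace_hasDerivAt (k3_cont hb).aestronglyMeasurable (k3_bound hb)
    (I * ((π * b / 2 : ℝ) : ℂ)) (-2 * I * z) (by rw [wre]; exact hz)).2
  have h1 : HasDerivAt (fun z : ℂ => -2 * I * z) (-2 * I) z := by
    simpa using (hasDerivAt_id z).const_mul (-2 * I)
  have h2 := (h.comp z h1).const_mul (-1/2 : ℂ)
  refine h2.congr_deriv ?_
  have e : (∫ t : ℝ, ((t:ℂ) + I * ((π * b / 2 : ℝ) : ℂ)) * Complex.exp (-2 * I * z * ((t:ℂ) + I * ((π * b / 2 : ℝ) : ℂ))) * k3 b t)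
     = ∫ t : ℝ, Complex.exp ((-2 * I * z) * Tl b t) * k4 b t := by
    congr 1; ext t
    have hT : (t:ℂ) + I * ((π * b / 2 : ℝ) : ℂ) = Tl b t := rfl
    rw [hT]
    unfold k3 k4
    have h1 := Tl_ne hb t
    have h3 := sinh_inv_Tl_ne hb t
    field_simp
  rw [e, int_k4 hb hz]
  linear_combination -(Complex.exp (π * b * z) * (b * (π / Complex.cosh (π * b * z)))) * I_sq

lemma exp_G3 {b : ℝ} (hb : 0 < b) {z : ℂ} (hz : 2 * |z.im| < b⁻¹) :
    Complex.exp (G3 b z) = 1 + Complex.exp (2 * π * b * z) := by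
  set Q : ℂ → ℂ := fun z => Complex.exp (-G3 b z) * (1 + Complex.exp (2 * π * b * z)) with hQ
  have hd : ∀ z : ℂ, |z.im| < b⁻¹ / 2 → HasDerivAt Q 0 z := by
    intro z hz
    have h1 := (G3_deriv hb (z := z) (by linarith)).neg.cexp
    have h2 : HasDerivAt (fun z : ℂ => 2 * π * b * z) (2 * π * b) z := by
      simpa using (hasDerivAt_id z).const_mul (2 * π * b : ℂ)
    have h3 := h1.mul (h2.cexp.const_add 1)
    refine h3.congr_deriv ?_
    have hc : Complex.cosh (π * b * z) ≠ 0 := by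
      apply cosh_ne_zero_of
      have : (π * b * z : ℂ).im = π * b * z.im := by
        rw [← ofReal_mul, Complex.im_ofReal_mul]
      rw [this, abs_mul, abs_of_pos (mul_pos Real.pi_pos hb)]
      have := mul_lt_mul_of_pos_left hz (mul_pos Real.pi_pos hb)
      have e : π * b * (b⁻¹ / 2) = π / 2 := by field_simp
      linarith
    have e2 : Complex.exp (2 * π * b * z) = Complex.exp (π * b * z) * Complex.exp (π * b * z) := by
      rw [← Complex.exp_add]; ring_nf
    have e3 : 1 + Complex.exp (2 * π * b * z) = Complex.exp (π * b * z) * (2 * Complex.cosh (π * b * z)) := by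
      rw [Complex.two_cosh, mul_add, ← Complex.exp_add, ← Complex.exp_add]; ring_nf; simp; ring
    simp only [Pi.neg_apply]
    rw [e3, e2]
    field_simp
    ring
  have hlim : Tendsto (fun x : ℝ => Q (x:ℂ)) atBot (𝓝 1) := by
    have hG : Tendsto (fun x : ℝ => G3 b (x:ℂ)) atBot (𝓝 0) := by
      have hb' : Tendsto (fun x : ℝ => Real.exp (π * b * x)) atBot (𝓝 0) :=
        Real.tendsto_exp_atBot.comp (tendsto_id.const_mul_atBot (mul_pos Real.pi_pos hb))
      refine squeeze_zero_norm (a := fun x : ℝ => (1/2 * ((2 / (π * b / 2)) * ∫ t : ℝ, Real.exp (-b⁻¹ * |t|))) * Real.exp (π * b * x)) ?_ (by simpa using hb'.const_mul _)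
      intro x
      have := laplace_bound (k3_bound hb) (I * ((π * b / 2 : ℝ) : ℂ)) (-2 * I * (x:ℂ)) (κ := b⁻¹) (by positivity)
        (by rw [wre]; simp)
      have e : (-2 * I * (x:ℂ) * (I * ((π * b / 2 : ℝ) : ℂ))).re = π * b * x := by
        simp; ring
      rw [e] at this
      unfold G3
      rw [norm_mul]
      norm_num at this ⊢
      linarith
    have hE : Tendsto (fun x : ℝ => Complex.exp (2 * π * b * (x:ℂ))) atBot (𝓝 0) := by
      have hb' : Tendsto (fun x : ℝ => Real.exp (2 * π * b * x)) atBot (𝓝 0) :=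
        Real.tendsto_exp_atBot.comp (tendsto_id.const_mul_atBot (by have := Real.pi_pos; positivity))
      rw [tendsto_zero_iff_norm_tendsto_zero]
      refine hb'.congr fun x => ?_
      rw [Complex.norm_exp]
      congr 1
      rw [show (2 * π * b * (x:ℂ)) = ((2 * π * b * x : ℝ) : ℂ) by push_cast; ring, ofReal_re]
    have h1 : Tendsto (fun x : ℝ => Complex.exp (-G3 b (x:ℂ))) atBot (𝓝 1) := by
      have := (Complex.continuous_exp.tendsto _).comp hG.neg
      simpa [Function.comp_def] using this
    simpa using h1.mul (hE.const_add 1)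
  have hconst : ∀ x : ℝ, Q x = Q z := fun x => strip_const (H := b⁻¹ / 2) hd (by simp; positivity) (by linarith)
  have hQ1 : Q z = 1 := by
    have h2 : Tendsto (fun x : ℝ => Q (x:ℂ)) atBot (𝓝 (Q z)) := by
      simp_rw [hconst]; exact tendsto_const_nhds
    exact tendsto_nhds_unique h2 hlim
  rw [hQ] at hQ1
  simp only [Complex.exp_neg] at hQ1
  field_simp at hQ1
  exact hQ1.symm

end

lemma norm_sin_le (w : ℂ) : ‖Complex.sin w‖ ≤ Real.exp |w.im| := by
  have h : Complex.sin w = -Complex.sinh (w * I) * I := by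
    rw [Complex.sinh_mul_I]; linear_combination (Complex.sin w) * I_sq
  rw [h]
  simpa using norm_sinh_le (w * I)

lemma int_odd_zero {b : ℝ} (hb : 0 < b) (hb1 : b ≤ 1) {z : ℂ} (hz : 2 * |z.im| < b + b⁻¹) :
    ∫ t : ℝ, (Complex.sin (2 * z * Tl b t) - (2 * z / b) * Complex.sinh (b * Tl b t)) * k2 b t = 0 := by
  have hbc : (b:ℂ) ≠ 0 := by exact_mod_cast hb.ne'
  set num : ℂ → ℂ := fun T => Complex.sin (2 * z * T) - (2 * z / b) * Complex.sinh (b * T) with hnum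
  have hnd : Differentiable ℂ num := by rw [hnum]; fun_prop
  set A : ℂ → ℂ := dslope (dslope num 0) 0 with hA
  set B : ℂ → ℂ := dslope (fun T : ℂ => Complex.sinh (b * T)) 0 with hB
  set D : ℂ → ℂ := dslope (fun T : ℂ => Complex.sinh ((b⁻¹ : ℝ) * T)) 0 with hD
  have hAd : Differentiable ℂ A := differentiable_dslope (differentiable_dslope hnd 0) 0
  have hBd : Differentiable ℂ B := differentiable_dslope (by fun_prop) 0
  have hDd : Differentiable ℂ D := differentiable_dslope (by fun_prop) 0
  have hnum0 : num 0 = 0 := by simp [hnum]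
  have hder : deriv num 0 = 0 := by
    have h1 : HasDerivAt (fun T : ℂ => 2 * z * T) (2 * z) 0 := by
      simpa using (hasDerivAt_id (0:ℂ)).const_mul (2 * z)
    have h2 : HasDerivAt (fun T : ℂ => (b:ℂ) * T) b 0 := by
      simpa using (hasDerivAt_id (0:ℂ)).const_mul (b:ℂ)
    have := (h1.csin.sub (h2.csinh.const_mul (2 * z / b))).deriv
    have h3 : deriv num 0 = _ := this
    rw [h3]; simp; field_simp; simp
  have hq : ∀ T : ℂ, T ≠ 0 → A T / (B T * D T) = num T / (Complex.sinh (b * T) * Complex.sinh ((b:ℂ)⁻¹ * T)) := by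
    intro T hT
    rw [hA, hB, hD, dslope_of_ne _ hT, dslope_of_ne _ hT, dslope_of_ne _ hT, slope_def_field,
      slope_def_field, slope_def_field, dslope_same, dslope_of_ne _ hT, slope_def_field, hder, hnum0]
    simp only [mul_zero, sub_zero, Complex.sinh_zero]
    push_cast
    by_cases h1 : Complex.sinh (b * T) = 0
    · simp [h1]
    by_cases h2 : Complex.sinh ((b:ℂ)⁻¹ * T) = 0
    · simp [h2]
    field_simp
  have hodd : ∀ T : ℂ, T ≠ 0 → A (-T) / (B (-T) * D (-T)) = - (A T / (B T * D T)) := by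
    intro T hT
    rw [hq _ hT, hq _ (neg_ne_zero.mpr hT), hnum]
    simp only [mul_neg, Complex.sin_neg, Complex.sinh_neg]
    ring
  have hpb : 0 < π * b / 2 := by have := Real.pi_pos; positivity
  have hline : ∀ x : ℝ, (x:ℂ) + (π * b / 2 : ℝ) * I = Tl b x := by
    intro x; unfold Tl; ring
  set m := min 1 (b + b⁻¹ - 2 * |z.im|) with hm
  have hbi : 1 ≤ b⁻¹ := (one_le_inv₀ hb).mpr hb1
  have hm0 : 0 < m := lt_min one_pos (by linarith)
  set c1 := (1 - Real.exp (-2 * b)) / 2 with hc1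
  set c2 := (1 - Real.exp (-2 * b⁻¹)) / 2 with hc2
  have hc1p : 0 < c1 := by
    have : Real.exp (-2 * b) < 1 := by
      rw [← Real.exp_zero]; exact Real.exp_lt_exp.mpr (by linarith)
    rw [hc1]; linarith
  have hc2p : 0 < c2 := by
    have : Real.exp (-2 * b⁻¹) < 1 := by
      rw [← Real.exp_zero]; exact Real.exp_lt_exp.mpr (by linarith)
    rw [hc2]; linarith
  have hsh := contour_shift (h := fun T => A T / (B T * D T)) (y₀ := π * b / 2) (y₁ := -(π * b / 2))
    (C := (Real.exp (2 * |z.re| * (π * b / 2)) + ‖2 * z / b‖) / (c1 * c2)) (κ := m) hm0 ?_ ?_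
  · have h1 : (∫ t : ℝ, num (Tl b t) * k2 b t) = ∫ x : ℝ, A (x + (π * b / 2 : ℝ) * I) / (B (x + (π * b / 2 : ℝ) * I) * D (x + (π * b / 2 : ℝ) * I)) := by
      congr 1; ext x
      rw [hline, hq _ (Tl_ne hb x)]
      unfold k2; rw [mul_one_div]
    have h2 : (∫ x : ℝ, A (x + (-(π * b / 2) : ℝ) * I) / (B (x + (-(π * b / 2) : ℝ) * I) * D (x + (-(π * b / 2) : ℝ) * I))) = - ∫ t : ℝ, num (Tl b t) * k2 b t := by
      rw [← integral_neg_eq_self, ← integral_neg]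
      congr 1; ext x
      have : ((-x : ℝ):ℂ) + (-(π * b / 2) : ℝ) * I = -(Tl b x) := by
        unfold Tl; push_cast; ring
      rw [this, hodd _ (Tl_ne hb x), hq _ (Tl_ne hb x)]
      unfold k2; rw [mul_one_div]
    change ∫ t : ℝ, num (Tl b t) * k2 b t = 0
    have h3 : (∫ t : ℝ, num (Tl b t) * k2 b t) = - ∫ t : ℝ, num (Tl b t) * k2 b t := by
      rw [← h2, h1]; exact hsh
    exact self_eq_neg.mp h3
  · intro T hT
    rw [Set.uIcc_of_ge (by linarith), Set.mem_Icc] at hT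
    have hTa : |T.im| ≤ π * b / 2 := by rw [abs_le]; exact hT
    refine (hAd T).div ((hBd T).mul (hDd T)) (mul_ne_zero (dslope_sinh_ne hb.ne' ?_) (dslope_sinh_ne (inv_pos.mpr hb).ne' ?_))
    · rw [abs_mul, abs_of_pos hb]
      have := mul_le_mul_of_nonneg_left hTa hb.le
      nlinarith [Real.pi_pos]
    · rw [abs_mul, abs_of_pos (inv_pos.mpr hb)]
      have := mul_le_mul_of_nonneg_left hTa (inv_pos.mpr hb).le
      have e : b⁻¹ * (π * b / 2) = π / 2 := by field_simp
      linarith [Real.pi_pos]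
  · intro x y hy hx
    rw [Set.uIcc_of_ge (by linarith), Set.mem_Icc] at hy
    have hya : |y| ≤ π * b / 2 := by rw [abs_le]; exact hy
    have hne : (x:ℂ) + y * I ≠ 0 := by
      intro h
      have := congrArg Complex.re h
      simp at this
      rw [this] at hx; norm_num at hx
    rw [hq _ hne, norm_div, norm_mul]
    have hs1 : c1 * Real.exp (b * |x|) ≤ ‖Complex.sinh (b * (x + y * I))‖ := by
      have hre : ((b:ℂ) * (x + y * I)).re = b * x := by simp
      have := norm_sinh_ge_exp (m := b) ((b:ℂ) * (x + y * I)) (by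
        rw [hre, abs_mul, abs_of_pos hb]; nlinarith)
      rwa [hre, abs_mul, abs_of_pos hb] at this
    have hs2 : c2 * Real.exp (b⁻¹ * |x|) ≤ ‖Complex.sinh ((b:ℂ)⁻¹ * (x + y * I))‖ := by
      have hre : ((b:ℂ)⁻¹ * (x + y * I)).re = b⁻¹ * x := by
        rw [← ofReal_inv, Complex.re_ofReal_mul]; simp
      have := norm_sinh_ge_exp (m := b⁻¹) ((b:ℂ)⁻¹ * (x + y * I)) (by
        rw [hre, abs_mul, abs_of_pos (inv_pos.mpr hb)]; nlinarith)
      rwa [hre, abs_mul, abs_of_pos (inv_pos.mpr hb)] at this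
    have hden : c1 * c2 * Real.exp ((b + b⁻¹) * |x|) ≤ ‖Complex.sinh (b * (x + y * I))‖ * ‖Complex.sinh ((b:ℂ)⁻¹ * (x + y * I))‖ := by
      calc _ = (c1 * Real.exp (b * |x|)) * (c2 * Real.exp (b⁻¹ * |x|)) := by
            rw [add_mul, Real.exp_add]; ring
        _ ≤ _ := mul_le_mul hs1 hs2 (by positivity) (norm_nonneg _)
    have hM1 : 2 * |z.im| ≤ b + b⁻¹ - m := by
      have := min_le_right 1 (b + b⁻¹ - 2 * |z.im|); linarith
    have hM2 : b ≤ b + b⁻¹ - m := by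
      have := min_le_left 1 (b + b⁻¹ - 2 * |z.im|); linarith
    have hn1 : ‖Complex.sin (2 * z * (x + y * I))‖ ≤ Real.exp (2 * |z.re| * (π * b / 2)) * Real.exp ((b + b⁻¹ - m) * |x|) := by
      refine (norm_sin_le _).trans ?_
      rw [← Real.exp_add]
      apply Real.exp_le_exp.mpr
      have him : (2 * z * (x + y * I)).im = 2 * z.re * y + 2 * z.im * x := by simp
      rw [him]
      calc _ ≤ |2 * z.re * y| + |2 * z.im * x| := abs_add_le _ _
        _ = 2 * |z.re| * |y| + 2 * |z.im| * |x| := by simp [abs_mul]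
        _ ≤ _ := by gcongr
    have hn2 : ‖Complex.sinh (b * (x + y * I))‖ ≤ Real.exp ((b + b⁻¹ - m) * |x|) := by
      refine (norm_sinh_le _).trans ?_
      have hre : ((b:ℂ) * (x + y * I)).re = b * x := by simp
      apply Real.exp_le_exp.mpr
      rw [hre, abs_mul, abs_of_pos hb]
      gcongr
    have hn : ‖num (x + y * I)‖ ≤ (Real.exp (2 * |z.re| * (π * b / 2)) + ‖2 * z / b‖) * Real.exp ((b + b⁻¹ - m) * |x|) := by
      refine (norm_sub_le _ _).trans ?_
      rw [norm_mul, add_mul]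
      gcongr
    rw [div_le_iff₀ (lt_of_lt_of_le (by positivity) hden)]
    refine hn.trans ?_
    calc _ = (Real.exp (2 * |z.re| * (π * b / 2)) + ‖2 * z / b‖) / (c1 * c2) * Real.exp (-m * |x|) * (c1 * c2 * Real.exp ((b + b⁻¹) * |x|)) := by
          rw [show (b + b⁻¹ - m) * |x| = -m * |x| + (b + b⁻¹) * |x| by ring, Real.exp_add]
          field_simp
      _ ≤ _ := by gcongr

/-- Abstract quantum dilogarithm properties. -/
structure QD (b : ℝ) (v : ℂ → ℂ) : Prop where
  hb : 0 < b
  hb1 : b ≤ 1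
  ne : ∀ z, v z ≠ 0
  diff : ∀ z : ℂ, |z.im| < (b + b⁻¹) / 2 → DifferentiableAt ℂ v z
  inv : ∀ z : ℂ, |z.im| < (b + b⁻¹) / 2 → v z * v (-z) = 1
  shift : ∀ z : ℂ, |z.im| < b⁻¹ / 2 → v (z + I * b / 2) = 2 * Complex.cosh (π * b * z) * v (z - I * b / 2)
  growth : ∀ η > 0, ∃ C > 0, ∀ z : ℂ, |z.im| ≤ (b + b⁻¹) / 2 - η →
    ‖v z‖ ≤ C * Real.exp (π * |z.re| * z.im) ∧ C⁻¹ * Real.exp (π * |z.re| * z.im) ≤ ‖v z‖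

lemma Lq_refl {b : ℝ} (hb : 0 < b) (hb1 : b ≤ 1) {z : ℂ} (hz : |z.im| < (b + b⁻¹) / 2) :
    Lq b z + Lq b (-z) = π * I * z ^ 2 + 2 * Lq b 0 := by
  have hbc : (b:ℂ) ≠ 0 := by exact_mod_cast hb.ne'
  have hd : ∀ z : ℂ, |z.im| < (b + b⁻¹) / 2 →
      HasDerivAt (fun z => Lq b z + Lq b (-z) - π * I * z ^ 2) 0 z := by
    intro z hz
    have h1 := Lq_deriv hb hb1 (z := z) (by linarith)
    have h2 := Lq_deriv hb hb1 (z := -z) (by simp; linarith)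
    have h3 := h2.comp z (hasDerivAt_neg z)
    have h4 : HasDerivAt (fun z : ℂ => π * I * z ^ 2) (π * I * (2 * z)) z := by
      simpa using (hasDerivAt_pow 2 z).const_mul (π * I : ℂ)
    refine ((h1.add h3).sub h4).congr_deriv ?_
    obtain ⟨A, hA⟩ := k2_bound hb hb1
    have hm := (k2_cont hb hb1).aestronglyMeasurable (μ := volume)
    have i1 := laplace_integrable hm hA (I * ((π * b / 2 : ℝ) : ℂ)) (-2 * I * z) (by
      rw [wre]; linarith)
    have i2 := laplace_integrable hm hA (I * ((π * b / 2 : ℝ) : ℂ)) (-2 * I * (-z)) (by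
      rw [wre]; simp; linarith)
    have i4 := laplace_integrable (k4_cont hb).aestronglyMeasurable (k4_bound hb) (I * ((π * b / 2 : ℝ) : ℂ)) 0 (by
      simpa using hb)
    change Integrable (fun t : ℝ => Complex.exp (-2 * I * z * Tl b t) * k2 b t) at i1
    change Integrable (fun t : ℝ => Complex.exp (-2 * I * (-z) * Tl b t) * k2 b t) at i2
    have i4' : Integrable (k4 b) := by simpa using i4
    have hk4 : ∫ t : ℝ, k4 b t = -I * (b * π) := by
      have := int_k4 hb (z := 0) (by simpa using hb)
      simpa using this
    have hodd := int_odd_zero hb hb1 (z := z) (by linarith)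
    have hsin : ∀ t, Complex.sin (2 * z * Tl b t) * k2 b t = (I/2) * (Complex.exp (-2 * I * z * Tl b t) * k2 b t - Complex.exp (-2 * I * (-z) * Tl b t) * k2 b t) := by
      intro t
      rw [Complex.sin]
      rw [show -(2 * z * Tl b t) * I = -2 * I * z * Tl b t by ring, show (2 * z * Tl b t) * I = -2 * I * (-z) * Tl b t by ring]
      ring
    have hfun : ∀ t, (Complex.sin (2 * z * Tl b t) - (2 * z / b) * Complex.sinh (b * Tl b t)) * k2 b t =
        (I/2) * (Complex.exp (-2 * I * z * Tl b t) * k2 b t - Complex.exp (-2 * I * (-z) * Tl b t) * k2 b t) - (2 * z / b) * k4 b t := by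
      intro t
      rw [sub_mul, hsin]
      congr 1
      have h2 := sinh_Tl_ne hb hb1 t
      have h3 := sinh_inv_Tl_ne hb t
      unfold k2 k4
      field_simp
    simp_rw [hfun] at hodd
    have i12 : Integrable (fun t => Complex.exp (-2 * I * z * Tl b t) * k2 b t - Complex.exp (-2 * I * (-z) * Tl b t) * k2 b t) := i1.sub i2
    rw [integral_sub (i12.const_mul _) (i4'.const_mul _), integral_const_mul, integral_const_mul, integral_sub i1 i2, hk4] at hodd
    have e5 : 2 * z / b * (-I * (b * π)) = -2 * I * π * z := by field_simp
    rw [e5] at hodd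
    linear_combination -hodd
  have := strip_const hd hz (w := 0) (by simp; positivity)
  simp only [neg_zero] at this
  linear_combination this

def vq (b : ℝ) (z : ℂ) : ℂ := Complex.exp (π * I * z ^ 2 / 2) * Complex.exp (Lq b 0 - Lq b z)

lemma vq_inv {b : ℝ} (hb : 0 < b) (hb1 : b ≤ 1) {z : ℂ} (hz : |z.im| < (b + b⁻¹) / 2) :
    vq b z * vq b (-z) = 1 := by
  have h := Lq_refl hb hb1 hz
  unfold vq
  rw [← Complex.exp_add, ← Complex.exp_add, ← Complex.exp_add, ← Complex.exp_zero]
  congr 1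
  linear_combination -h

lemma vq_growth_neg {b : ℝ} (hb : 0 < b) (hb1 : b ≤ 1) {η : ℝ} (hη : 0 < η) :
    ∃ C > 0, ∀ z : ℂ, |z.im| ≤ (b + b⁻¹) / 2 - η → z.re ≤ 0 →
    ‖vq b z‖ ≤ C * Real.exp (π * |z.re| * z.im) ∧ C⁻¹ * Real.exp (π * |z.re| * z.im) ≤ ‖vq b z‖ := by
  obtain ⟨C, hC0, hC⟩ := Lq_bound hb hb1 hη
  refine ⟨Real.exp (C + ‖Lq b 0‖), Real.exp_pos _, fun z hz hx => ?_⟩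
  have h1 := hC z (by linarith)
  have h2 : Real.exp (π * b * z.re) ≤ 1 := Real.exp_le_one_iff.mpr (mul_nonpos_of_nonneg_of_nonpos (mul_pos Real.pi_pos hb).le hx)
  have h3 : ‖Lq b z‖ ≤ C := h1.trans (by nlinarith)
  have h4 : |(Lq b 0 - Lq b z).re| ≤ C + ‖Lq b 0‖ := by
    refine (Complex.abs_re_le_norm _).trans ((norm_sub_le _ _).trans ?_); linarith
  have e : (π * I * z ^ 2 / 2 : ℂ).re = π * |z.re| * z.im := by
    rw [abs_of_nonpos hx]
    have : (π * I * z ^ 2 / 2 : ℂ) = ((π / 2 : ℝ) : ℂ) * (I * z ^ 2) := by push_cast; ring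
    rw [this, Complex.re_ofReal_mul, Complex.I_mul_re, pow_two, Complex.mul_im]
    ring
  unfold vq
  rw [norm_mul, Complex.norm_exp, Complex.norm_exp, e, ← Real.exp_neg, mul_comm]
  rw [abs_le] at h4
  constructor
  · gcongr; exact h4.2
  · gcongr; exact h4.1

lemma vq_QD {b : ℝ} (hb : 0 < b) (hb1 : b ≤ 1) : QD b (vq b) where
  hb := hb
  hb1 := hb1
  ne := fun z => mul_ne_zero (Complex.exp_ne_zero _) (Complex.exp_ne_zero _)
  diff := by
    intro z hz
    have := (Lq_deriv hb hb1 (z := z) (by linarith)).differentiableAt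
    unfold vq
    fun_prop
  inv := fun z hz => vq_inv hb hb1 hz
  shift := by
    intro z hz
    have h1 := Lq_diff hb hb1 (z := z) (by linarith)
    have h2 := exp_G3 hb (z := z) (by linarith)
    rw [← h1] at h2
    have e : 2 * Complex.cosh (π * b * z) = Complex.exp (-(π * b * z)) * (1 + Complex.exp (2 * π * b * z)) := by
      rw [Complex.two_cosh, mul_add, ← Complex.exp_add, mul_one, add_comm]; ring_nf
    rw [e, ← h2]
    unfold vq
    simp only [← Complex.exp_add]
    congr 1
    linear_combination (π * b * z) * I_sq
  growth := by
    intro η hη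
    obtain ⟨C, hC0, hC⟩ := vq_growth_neg hb hb1 hη
    refine ⟨C, hC0, fun z hz => ?_⟩
    rcases le_total z.re 0 with hx | hx
    · exact hC z hz hx
    · have h := hC (-z) (by simpa using hz) (by simpa using hx)
      simp only [neg_re, neg_im, abs_neg] at h
      have hi : ‖vq b z‖ * ‖vq b (-z)‖ = 1 := by
        rw [← norm_mul, vq_inv hb hb1 (by linarith), norm_one]
      have hp : 0 < ‖vq b (-z)‖ := by
        rcases (norm_nonneg (vq b (-z))).lt_or_eq with h | h
        · exact h
        · rw [← h] at hi; simp at hi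
      have hee : Real.exp (π * |z.re| * -z.im) * Real.exp (π * |z.re| * z.im) = 1 := by
        rw [← Real.exp_add]; simp
      have hv : ‖vq b z‖ = ‖vq b (-z)‖⁻¹ := eq_inv_of_mul_eq_one_left hi
      have he : Real.exp (π * |z.re| * z.im) = (Real.exp (π * |z.re| * -z.im))⁻¹ := eq_inv_of_mul_eq_one_right hee
      rw [hv, he]
      constructor
      · rw [← inv_inv C, ← mul_inv]
        exact inv_anti₀ (by positivity) h.2
      · rw [← mul_inv]
        exact inv_anti₀ hp h.1

/-- differentiation under the integral sign for holomorphic families, soft version -/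
lemma diff_integral_holo (f : ℂ → ℝ → ℂ) (z₀ : ℂ) (r : ℝ) (hr : 0 < r) (g : ℝ → ℝ)
    (hg : Integrable g)
    (hmeas : ∀ z ∈ Metric.ball z₀ r, AEStronglyMeasurable (f z))
    (hd : ∀ t, ∀ z ∈ Metric.ball z₀ r, DifferentiableAt ℂ (fun z => f z t) z)
    (hb : ∀ z ∈ Metric.ball z₀ r, ∀ t, ‖f z t‖ ≤ g t) :
    DifferentiableAt ℂ (fun z => ∫ t, f z t) z₀ := by
  refine (hasDerivAt_integral_holo f z₀ r hr g hg hmeas (fun z t => deriv (fun z => f z t) z) ?_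
    (fun t z hz => (hd t z hz).hasDerivAt) hb).2.differentiableAt
  have hu : Tendsto (fun n : ℕ => ((r / (n + 2) : ℝ) : ℂ)) atTop (𝓝[≠] 0) := by
    rw [tendsto_nhdsWithin_iff]
    constructor
    · rw [show (0:ℂ) = ((0:ℝ):ℂ) by simp]
      refine (Complex.continuous_ofReal.tendsto _).comp ?_
      refine Tendsto.const_div_atTop ?_ r
      exact tendsto_atTop_add_const_right _ _ tendsto_natCast_atTop_atTop
    · refine Eventually.of_forall fun n => ?_
      simp only [Set.mem_compl_iff, Set.mem_singleton_iff, ofReal_eq_zero]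
      positivity
  refine aestronglyMeasurable_of_tendsto_ae (u := atTop)
    (f := fun (n : ℕ) t => ((r / (n + 2) : ℝ) : ℂ)⁻¹ • (f (z₀ + ((r / (n + 2) : ℝ) : ℂ)) t - f z₀ t)) ?_ ?_
  · intro n
    have hsub : ∀ u w : ℝ → ℂ, AEStronglyMeasurable u → AEStronglyMeasurable w →
        AEStronglyMeasurable (fun t => ((r / (n + 2) : ℝ) : ℂ)⁻¹ • (u t - w t)) :=
      fun u w hu hw => (hu.sub hw).const_smul (((r / (n + 2) : ℝ) : ℂ)⁻¹)
    refine hsub _ _ ?_ ?_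
    · apply hmeas
      rw [Metric.mem_ball, dist_eq_norm, add_sub_cancel_left, Complex.norm_real,
        Real.norm_of_nonneg (by positivity), div_lt_iff₀ (by positivity)]
      nlinarith [(Nat.cast_nonneg n : (0:ℝ) ≤ n)]
    · exact hmeas _ (Metric.mem_ball_self hr)
  · refine Eventually.of_forall fun t => ?_
    have h := (hd t z₀ (Metric.mem_ball_self hr)).hasDerivAt
    rw [hasDerivAt_iff_tendsto_slope_zero] at h
    exact h.comp hu

def qq (b : ℝ) : ℝ := (b + b⁻¹) / 2

lemma cb_eq (b : ℝ) : cb b = I * (qq b : ℂ) := by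
  unfold cb qq; push_cast; ring

lemma cb_re (b : ℝ) : (cb b).re = 0 := by rw [cb_eq]; simp
lemma cb_im (b : ℝ) : (cb b).im = qq b := by rw [cb_eq]; simp

/-- `D_{(a-c)/2}(x)` -/
def Fa (b : ℝ) (v : ℂ → ℂ) (a x : ℂ) : ℂ := v (x + (a - cb b) / 2) / v (x - (a - cb b) / 2)

lemma add_re' (b : ℝ) (a x : ℂ) : (x + (a - cb b) / 2).re = x.re + a.re / 2 := by
  simp [cb_re]
lemma sub_re' (b : ℝ) (a x : ℂ) : (x - (a - cb b) / 2).re = x.re - a.re / 2 := by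
  simp [cb_re]
lemma add_im' (b : ℝ) (a x : ℂ) : (x + (a - cb b) / 2).im = x.im - (qq b - a.im) / 2 := by
  simp [cb_im]; ring
lemma sub_im' (b : ℝ) (a x : ℂ) : (x - (a - cb b) / 2).im = x.im + (qq b - a.im) / 2 := by
  simp [cb_im]; ring

namespace QD

lemma qpos {b : ℝ} {v : ℂ → ℂ} (hv : QD b v) : 0 < qq b := by
  have := hv.hb
  unfold qq; positivity

lemma one_le_inv {b : ℝ} {v : ℂ → ℂ} (hv : QD b v) : 1 ≤ b⁻¹ := (one_le_inv₀ hv.hb).mpr hv.hb1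

lemma qgeb {b : ℝ} {v : ℂ → ℂ} (hv : QD b v) : b ≤ qq b := by
  have := hv.one_le_inv
  have := hv.hb1
  unfold qq; linarith

lemma inv' {b : ℝ} {v : ℂ → ℂ} (hv : QD b v) {z : ℂ} (hz : |z.im| < qq b) : v (-z) = (v z)⁻¹ :=
  eq_inv_of_mul_eq_one_right (hv.inv z hz)

lemma Fa_ne {b : ℝ} {v : ℂ → ℂ} (hv : QD b v) (a x : ℂ) : Fa b v a x ≠ 0 := div_ne_zero (hv.ne _) (hv.ne _)

lemma Fa_diff {b : ℝ} {v : ℂ → ℂ} (hv : QD b v) {a x : ℂ} (h : |x.im| + |qq b - a.im| / 2 < qq b) :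
    DifferentiableAt ℂ (Fa b v a) x := by
  have h1 : DifferentiableAt ℂ v (x + (a - cb b) / 2) := by
    apply hv.diff
    rw [add_im']
    have := abs_sub x.im ((qq b - a.im) / 2)
    rw [abs_div, abs_two] at this
    exact lt_of_le_of_lt this h
  have h2 : DifferentiableAt ℂ v (x - (a - cb b) / 2) := by
    apply hv.diff
    rw [sub_im']
    have := abs_add_le x.im ((qq b - a.im) / 2)
    rw [abs_div, abs_two] at this
    exact lt_of_le_of_lt this h
  unfold Fa
  exact (h1.comp (f := fun x => x + (a - cb b)/2) x (by fun_prop)).div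
    (h2.comp (f := fun x => x - (a - cb b)/2) x (by fun_prop)) (hv.ne _)

lemma Fa_diff_a {b : ℝ} {v : ℂ → ℂ} (hv : QD b v) {a x : ℂ} (h : |x.im| + |qq b - a.im| / 2 < qq b) :
    DifferentiableAt ℂ (fun a => Fa b v a x) a := by
  have h1 : DifferentiableAt ℂ v (x + (a - cb b) / 2) := by
    apply hv.diff
    rw [add_im']
    have := abs_sub x.im ((qq b - a.im) / 2)
    rw [abs_div, abs_two] at this
    exact lt_of_le_of_lt this h
  have h2 : DifferentiableAt ℂ v (x - (a - cb b) / 2) := by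
    apply hv.diff
    rw [sub_im']
    have := abs_add_le x.im ((qq b - a.im) / 2)
    rw [abs_div, abs_two] at this
    exact lt_of_le_of_lt this h
  unfold Fa
  exact (h1.comp (f := fun a => x + (a - cb b)/2) a (by fun_prop)).div
    (h2.comp (f := fun a => x - (a - cb b)/2) a (by fun_prop)) (hv.ne _)

lemma Fa_even {b : ℝ} {v : ℂ → ℂ} (hv : QD b v) {a x : ℂ} (h : |x.im| + |qq b - a.im| / 2 < qq b) :
    Fa b v a (-x) = Fa b v a x := by
  have i1 : |(x + (a - cb b) / 2).im| < qq b := by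
    rw [add_im']
    have := abs_sub x.im ((qq b - a.im) / 2)
    rw [abs_div, abs_two] at this
    exact lt_of_le_of_lt this h
  have i2 : |(x - (a - cb b) / 2).im| < qq b := by
    rw [sub_im']
    have := abs_add_le x.im ((qq b - a.im) / 2)
    rw [abs_div, abs_two] at this
    exact lt_of_le_of_lt this h
  unfold Fa
  rw [show -x + (a - cb b) / 2 = -(x - (a - cb b)/2) by ring,
    show -x - (a - cb b) / 2 = -(x + (a - cb b)/2) by ring, hv.inv' i1, hv.inv' i2]
  rw [inv_div_inv]

lemma Fa_growth {b : ℝ} {v : ℂ → ℂ} (hv : QD b v) {η : ℝ} (hη : 0 < η) : ∃ C > 0, ∀ a x : ℂ, ∀ M : ℝ, a.im ≤ qq b →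
    |x.im| + (qq b - a.im) / 2 ≤ qq b - η → |x.im| ≤ M → (qq b - a.im) / 2 ≤ M →
    ‖Fa b v a x‖ ≤ C * Real.exp (π * |a.re| * M) * Real.exp (-(π * (qq b - a.im)) * |x.re|) ∧
    C⁻¹ * Real.exp (-(π * |a.re| * M)) * Real.exp (-(π * (qq b - a.im)) * |x.re|) ≤ ‖Fa b v a x‖ := by
  obtain ⟨C, hC0, hC⟩ := hv.growth η hη
  refine ⟨C * C, by positivity, fun a x M ha hx hM hhM => ?_⟩
  set h := (qq b - a.im) / 2 with hh
  have hh0 : 0 ≤ h := by rw [hh]; linarith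
  have g1 := hC (x + (a - cb b) / 2) (by
    rw [add_im']
    have := abs_sub x.im h
    rw [abs_of_nonneg hh0] at this
    exact this.trans hx)
  have g2 := hC (x - (a - cb b) / 2) (by
    rw [sub_im']
    have := abs_add_le x.im h
    rw [abs_of_nonneg hh0] at this
    exact this.trans hx)
  rw [add_re', add_im'] at g1
  rw [sub_re', sub_im'] at g2
  rw [← hh] at g1 g2
  set d1 := |x.re + a.re / 2| - |x.re| with hd1
  set d2 := |x.re - a.re / 2| - |x.re| with hd2
  have hd1b : |d1| ≤ |a.re| / 2 := by
    have := abs_abs_sub_abs_le_abs_sub (x.re + a.re / 2) x.re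
    rw [add_sub_cancel_left, abs_div, abs_two] at this; exact this
  have hd2b : |d2| ≤ |a.re| / 2 := by
    have := abs_abs_sub_abs_le_abs_sub (x.re - a.re / 2) x.re
    rw [sub_sub_cancel_left, abs_neg, abs_div, abs_two] at this; exact this
  have hyy : |x.im - h| + |x.im + h| ≤ 2 * M := by
    have := abs_le.mp hM
    rcases abs_cases (x.im - h) with ⟨h1, _⟩ | ⟨h1, _⟩ <;> rcases abs_cases (x.im + h) with ⟨h2, _⟩ | ⟨h2, _⟩ <;>
      rw [h1, h2] <;> linarith
  set E := d1 * (x.im - h) - d2 * (x.im + h) with hE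
  have hEb : |E| ≤ |a.re| * M := by
    calc |E| ≤ |d1 * (x.im - h)| + |d2 * (x.im + h)| := abs_sub _ _
      _ = |d1| * |x.im - h| + |d2| * |x.im + h| := by rw [abs_mul, abs_mul]
      _ ≤ |a.re| / 2 * |x.im - h| + |a.re| / 2 * |x.im + h| := by gcongr
      _ = |a.re| / 2 * (|x.im - h| + |x.im + h|) := by ring
      _ ≤ |a.re| / 2 * (2 * M) := by gcongr
      _ = _ := by ring
  have hexp : Real.exp (π * |x.re + a.re / 2| * (x.im - h)) / Real.exp (π * |x.re - a.re / 2| * (x.im + h))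
      = Real.exp (π * E) * Real.exp (-(π * (qq b - a.im)) * |x.re|) := by
    rw [← Real.exp_sub, ← Real.exp_add]
    congr 1
    rw [hE, hd1, hd2, show qq b - a.im = 2 * h by rw [hh]; ring]
    ring
  have hE1 := (abs_le.mp hEb).1
  have hE2 := (abs_le.mp hEb).2
  have hv2 : 0 < ‖v (x - (a - cb b) / 2)‖ := norm_pos_iff.mpr (hv.ne _)
  unfold Fa
  rw [norm_div]
  constructor
  · calc _ ≤ (C * Real.exp (π * |x.re + a.re / 2| * (x.im - h))) / (C⁻¹ * Real.exp (π * |x.re - a.re / 2| * (x.im + h))) := by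
          apply div_le_div₀ (by positivity) g1.1 (by positivity) g2.2
      _ = C * C * (Real.exp (π * |x.re + a.re / 2| * (x.im - h)) / Real.exp (π * |x.re - a.re / 2| * (x.im + h))) := by
          field_simp
      _ = C * C * Real.exp (π * E) * Real.exp (-(π * (qq b - a.im)) * |x.re|) := by rw [hexp]; ring
      _ ≤ _ := by
          have : π * E ≤ π * |a.re| * M := by
            rw [mul_assoc]
            exact mul_le_mul_of_nonneg_left hE2 Real.pi_pos.le
          have := Real.exp_le_exp.mpr this
          gcongr
  · calc _ ≤ (C * C)⁻¹ * Real.exp (π * E) * Real.exp (-(π * (qq b - a.im)) * |x.re|) := by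
          have : -(π * |a.re| * M) ≤ π * E := by
            rw [mul_assoc, ← mul_neg]
            exact mul_le_mul_of_nonneg_left hE1 Real.pi_pos.le
          have := Real.exp_le_exp.mpr this
          gcongr
      _ = (C * C)⁻¹ * (Real.exp (π * |x.re + a.re / 2| * (x.im - h)) / Real.exp (π * |x.re - a.re / 2| * (x.im + h))) := by rw [hexp]; ring
      _ = (C⁻¹ * Real.exp (π * |x.re + a.re / 2| * (x.im - h))) / (C * Real.exp (π * |x.re - a.re / 2| * (x.im + h))) := by
          field_simp
      _ ≤ _ := by
          apply div_le_div₀ (norm_nonneg _) g1.2 hv2 g2.1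

/-- real-line continuity -/
lemma Fa_cont {b : ℝ} {v : ℂ → ℂ} (hv : QD b v) {a : ℂ} (ha : |a.im| < qq b) : Continuous (fun x : ℝ => Fa b v a x) := by
  rw [continuous_iff_continuousAt]
  intro x
  have := (hv.Fa_diff (a := a) (x := x) (by
    have h := abs_lt.mp ha
    rw [ofReal_im, abs_zero, zero_add, abs_of_pos (by linarith)]; linarith)).continuousAt
  exact this.comp (f := fun x : ℝ => (x:ℂ)) Complex.continuous_ofReal.continuousAt

lemma Fa_real_bound {b : ℝ} {v : ℂ → ℂ} (hv : QD b v) {a : ℂ} (ha : |a.im| < qq b) : ∃ C, ∀ x : ℝ,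
    ‖Fa b v a x‖ ≤ C * Real.exp (-(π * (qq b - a.im)) * |x|) := by
  have h := abs_lt.mp ha
  obtain ⟨C, hC0, hC⟩ := hv.Fa_growth (η := (qq b + a.im) / 2) (by linarith)
  refine ⟨C * Real.exp (π * |a.re| * ((qq b - a.im) / 2)), fun x => ?_⟩
  have := (hC a x ((qq b - a.im)/2) (by linarith) (by simp; linarith) (by simp; linarith) le_rfl).1
  simpa using this

end QD

/-- Fourier transform of `Fa`. -/
def Ph (b : ℝ) (v : ℂ → ℂ) (a t : ℂ) : ℂ :=
  ∫ x : ℝ, Complex.exp ((2 * π * I * t) * ((x:ℂ) + 0)) * Fa b v a x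

lemma wre2 (t : ℂ) : |(2 * π * I * t).re| = 2 * π * |t.im| := by
  have : (2 * π * I * t).re = - (2 * π * t.im) := by simp
  rw [this, abs_neg, abs_mul, abs_of_pos (by have := Real.pi_pos; positivity)]

namespace QD

lemma Ph_integrable {b : ℝ} {v : ℂ → ℂ} (hv : QD b v) {a t : ℂ} (ha : |a.im| < qq b) (ht : |t.im| < (qq b - a.im) / 2) :
    Integrable (fun x : ℝ => Complex.exp ((2 * π * I * t) * ((x:ℂ) + 0)) * Fa b v a x) := by
  obtain ⟨C, hC⟩ := hv.Fa_real_bound ha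
  refine laplace_integrable (hv.Fa_cont ha).aestronglyMeasurable hC 0 _ ?_
  rw [wre2]
  nlinarith [Real.pi_pos]

lemma Ph_diff {b : ℝ} {v : ℂ → ℂ} (hv : QD b v) {a t : ℂ} (ha : |a.im| < qq b) (ht : |t.im| < (qq b - a.im) / 2) :
    DifferentiableAt ℂ (Ph b v a) t := by
  obtain ⟨C, hC⟩ := hv.Fa_real_bound ha
  have h := (laplace_hasDerivAt (hv.Fa_cont ha).aestronglyMeasurable hC 0 (2 * π * I * t) (by
    rw [wre2]; nlinarith [Real.pi_pos])).2.differentiableAt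
  unfold Ph
  exact h.comp (f := fun t => 2 * π * I * t) t (by fun_prop)

lemma Ph_bound {b : ℝ} {v : ℂ → ℂ} (hv : QD b v) {a : ℂ} (ha : |a.im| < qq b) {Y : ℝ} (hY : Y < (qq b - a.im) / 2) :
    ∃ C, ∀ t : ℂ, |t.im| ≤ Y → ‖Ph b v a t‖ ≤ C := by
  obtain ⟨C, hC⟩ := hv.Fa_real_bound ha
  refine ⟨C * ∫ x : ℝ, Real.exp (-(2 * π * ((qq b - a.im) / 2 - Y)) * |x|), fun t ht => ?_⟩
  have h := laplace_bound hC 0 (2 * π * I * t) (κ := 2 * π * ((qq b - a.im) / 2 - Y))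
    (mul_pos (by have := Real.pi_pos; positivity) (by linarith))
    (by rw [wre2]; nlinarith [Real.pi_pos])
  rw [mul_zero, Complex.zero_re, Real.exp_zero, one_mul] at h
  exact h

lemma Ph_diff_a {b : ℝ} {v : ℂ → ℂ} (hv : QD b v) {a : ℂ} (ha : |a.im| < qq b) (t : ℝ) :
    DifferentiableAt ℂ (fun a => Ph b v a t) a := by
  have h := abs_lt.mp ha
  set r := min ((qq b - a.im) / 2) ((qq b + a.im) / 2) with hr
  have hr0 : 0 < r := lt_min (by linarith) (by linarith)
  have hr1 : r ≤ (qq b - a.im) / 2 := min_le_left _ _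
  have hr2 : r ≤ (qq b + a.im) / 2 := min_le_right _ _
  obtain ⟨C, hC0, hC⟩ := hv.Fa_growth (η := r / 2) (by linarith)
  have him : ∀ z ∈ Metric.ball a r, |z.im - a.im| < r := by
    intro z hz
    rw [Metric.mem_ball, dist_eq_norm] at hz
    have := Complex.abs_im_le_norm (z - a)
    rw [Complex.sub_im] at this; linarith
  have hre : ∀ z ∈ Metric.ball a r, |z.re| ≤ |a.re| + r := by
    intro z hz
    rw [Metric.mem_ball, dist_eq_norm] at hz
    have := Complex.abs_re_le_norm (z - a)
    rw [Complex.sub_re] at this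
    have h2 := abs_add_le (z.re - a.re) a.re
    rw [sub_add_cancel] at h2; linarith
  refine diff_integral_holo (fun a x => Complex.exp ((2 * π * I * t) * ((x:ℂ) + 0)) * Fa b v a x) a r hr0
    (fun x => C * Real.exp (π * (|a.re| + r) * qq b) * Real.exp (-(π * r) * |x|))
    ((integrable_exp_neg_abs (mul_pos Real.pi_pos hr0)).const_mul _) ?_ ?_ ?_
  · intro z hz
    have h1 := abs_lt.mp (him z hz)
    refine (Continuous.mul (by fun_prop) (hv.Fa_cont ?_)).aestronglyMeasurable
    rw [abs_lt]; constructor <;> linarith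
  · intro x z hz
    have h1 := abs_lt.mp (him z hz)
    have := hv.Fa_diff_a (a := z) (x := x) (by
      rw [ofReal_im, abs_zero, zero_add, abs_of_pos (by linarith)]; linarith)
    fun_prop
  · intro z hz x
    have h1 := abs_lt.mp (him z hz)
    have h2 := (hC z x (qq b) (by linarith) (by simp; linarith) (by simpa using hv.qpos.le) (by linarith)).1
    rw [norm_mul]
    have h3 : ‖Complex.exp (2 * π * I * (t:ℂ) * ((x:ℂ) + 0))‖ = 1 := by
      rw [Complex.norm_exp]; simp
    rw [h3, one_mul]
    refine h2.trans ?_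
    rw [ofReal_re]
    have h4 := hre z hz
    have h5 := hv.qpos
    gcongr
    linarith

end QD

lemma norm_exp_2pi (t : ℂ) (x y : ℝ) :
    ‖Complex.exp (2 * π * I * t * (x + y * I))‖ ≤ Real.exp (2 * π * (|t.re| * |y|)) * Real.exp (2 * π * |t.im| * |x|) := by
  rw [Complex.norm_exp, ← Real.exp_add]
  apply Real.exp_le_exp.mpr
  have : (2 * π * I * t * (x + y * I)).re = 2 * π * (-(t.re * y) - t.im * x) := by
    simp; ring
  rw [this]
  have h1 : -(t.re * y) ≤ |t.re| * |y| := by rw [← abs_mul]; exact neg_le_abs _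
  have h2 : -(t.im * x) ≤ |t.im| * |x| := by rw [← abs_mul]; exact neg_le_abs _
  have := Real.pi_pos
  nlinarith

namespace QD

lemma Ph_shift {b : ℝ} {v : ℂ → ℂ} (hv : QD b v) {a t : ℂ} {y : ℝ} (ha : |a.im| < qq b) (hab : a.im + b < qq b)
    (ht : |t.im| < (qq b - a.im - b) / 2) (hy : |y| ≤ b / 2) :
    Ph b v (a + I * b) t = ∫ x : ℝ, Complex.exp (2 * π * I * t * ((x:ℂ) + y * I)) * Fa b v (a + I * b) (x + y * I) := by
  have hb := hv.hb
  have ha' := abs_lt.mp ha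
  have him : (a + I * b).im = a.im + b := by simp
  have hre : (a + I * b).re = a.re := by simp
  obtain ⟨C, hC0, hC⟩ := hv.Fa_growth (η := (qq b + a.im) / 2) (by linarith)
  have hY : ∀ y' ∈ Set.uIcc 0 y, |y'| ≤ b / 2 := by
    intro y' hy'
    have h2 := abs_le.mp hy
    rcases Set.mem_uIcc.mp hy' with h | h <;> (rw [abs_le]; constructor <;> linarith [hv.hb])
  have hs := contour_shift (h := fun z => Complex.exp (2 * π * I * t * z) * Fa b v (a + I * b) z)
    (y₀ := 0) (y₁ := y) (C := Real.exp (2 * π * (|t.re| * (b/2))) * (C * Real.exp (π * |a.re| * qq b)))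
    (κ := π * (qq b - a.im - b) - 2 * π * |t.im|) (by nlinarith [Real.pi_pos]) ?_ ?_
  · unfold Ph
    rw [← hs]
    congr 1; ext x; simp
  · intro z hz
    have h1 := hY _ hz
    have := hv.Fa_diff (a := a + I * b) (x := z) (by
      rw [him, abs_of_pos (a := qq b - (a.im + b)) (by linarith)]; linarith)
    fun_prop
  · intro x y' hy' _
    have h1 := hY _ hy'
    have hg := (hC (a + I * b) (x + y' * I) (qq b) (by rw [him]; linarith)
      (by rw [him]; simp; linarith) (by simp; linarith [hv.qgeb]) (by rw [him]; linarith)).1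
    rw [him, hre] at hg
    have hxre : ((x:ℂ) + y' * I).re = x := by simp
    rw [hxre] at hg
    rw [norm_mul]
    have he := norm_exp_2pi t x y'
    have he2 : Real.exp (2 * π * (|t.re| * |y'|)) ≤ Real.exp (2 * π * (|t.re| * (b/2))) := by
      have := Real.pi_pos
      gcongr
    calc _ ≤ (Real.exp (2 * π * (|t.re| * (b/2))) * Real.exp (2 * π * |t.im| * |x|)) * (C * Real.exp (π * |a.re| * qq b) * Real.exp (-(π * (qq b - (a.im + b))) * |x|)) :=
          mul_le_mul (he.trans (by gcongr)) hg (norm_nonneg _) (by positivity)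
      _ = Real.exp (2 * π * (|t.re| * (b/2))) * (C * Real.exp (π * |a.re| * qq b)) * (Real.exp (2 * π * |t.im| * |x|) * Real.exp (-(π * (qq b - (a.im + b))) * |x|)) := by ring
      _ = _ := by rw [← Real.exp_add]; ring_nf

lemma Fa_down {b : ℝ} {v : ℂ → ℂ} (hv : QD b v) {a : ℂ} (ha : |a.im| < qq b) (hab : a.im + b < qq b) (x : ℝ) :
    Fa b v (a + I * b) (x + ((-(b/2) : ℝ):ℂ) * I) = 2 * Complex.cosh (π * b * (x - (a - cb b)/2 - I * b / 2)) * Fa b v a x := by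
  have ha' := abs_lt.mp ha
  have h := hv.shift (x - (a - cb b)/2 - I * b / 2) (by
    have : ((x:ℂ) - (a - cb b)/2 - I * b / 2).im = (qq b - a.im)/2 - b/2 := by
      rw [Complex.sub_im, sub_im']; simp
    rw [this]
    have e : qq b = (b + b⁻¹) / 2 := rfl
    rw [abs_of_pos (by linarith)]; linarith)
  unfold Fa
  rw [show (x:ℂ) - (a - cb b)/2 - I * b / 2 + I * b / 2 = x - (a - cb b)/2 by ring] at h
  rw [h]
  have h3 := hv.ne (x - (a - cb b)/2)
  rw [show (x:ℂ) + ((-(b/2) : ℝ):ℂ) * I + (a + I * b - cb b)/2 = x + (a - cb b)/2 by push_cast; ring,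
    show (x:ℂ) + ((-(b/2) : ℝ):ℂ) * I - (a + I * b - cb b)/2 = x - (a - cb b)/2 - I * b / 2 - I * b / 2 by push_cast; ring]
  have h4 := hv.ne (x - (a - cb b)/2 - I * b / 2 - I * b / 2)
  rw [h] at h3
  have h5 := (mul_ne_zero_iff.mp h3).1
  rw [mul_div_assoc']
  rw [mul_div_mul_left _ _ h5]

lemma Fa_up {b : ℝ} {v : ℂ → ℂ} (hv : QD b v) {a : ℂ} (ha : |a.im| < qq b) (hab : a.im + b < qq b) (x : ℝ) :
    Fa b v (a + I * b) (x + ((b/2 : ℝ):ℂ) * I) = 2 * Complex.cosh (π * b * (x + (a - cb b)/2 + I * b / 2)) * Fa b v a x := by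
  have ha' := abs_lt.mp ha
  have h := hv.shift (x + (a - cb b)/2 + I * b / 2) (by
    have : ((x:ℂ) + (a - cb b)/2 + I * b / 2).im = -((qq b - a.im)/2 - b/2) := by
      rw [Complex.add_im, add_im']; simp; ring
    rw [this, abs_neg]
    have e : qq b = (b + b⁻¹) / 2 := rfl
    rw [abs_of_pos (by linarith)]; linarith)
  unfold Fa
  rw [show (x:ℂ) + (a - cb b)/2 + I * b / 2 - I * b / 2 = x + (a - cb b)/2 by ring] at h
  rw [show (x:ℂ) + ((b/2 : ℝ):ℂ) * I + (a + I * b - cb b)/2 = x + (a - cb b)/2 + I * b / 2 + I * b / 2 by push_cast; ring,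
    show (x:ℂ) + ((b/2 : ℝ):ℂ) * I - (a + I * b - cb b)/2 = x - (a - cb b)/2 by push_cast; ring, h]
  rw [mul_div_assoc]

lemma Ph_rel_gen {b : ℝ} {v : ℂ → ℂ} (hv : QD b v) {a t : ℂ} {θ s : ℂ} (ha : |a.im| < qq b) (hab : a.im + b < qq b)
    (ht : |t.im| < (qq b - a.im - b) / 2)
    (f : ℝ → ℂ) (hf : ∀ x : ℝ, f x = Complex.exp s * Complex.exp (2 * π * I * t * x) * (2 * Complex.cosh (π * b * x + θ) * Fa b v a x)) :
    ∫ x, f x = Complex.exp s * (Complex.exp θ * Ph b v a (t - I * b / 2) + Complex.exp (-θ) * Ph b v a (t + I * b / 2)) := by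
  have hb := hv.hb
  have ha' := abs_lt.mp ha
  have him1 : (t - I * b / 2).im = t.im - b/2 := by simp
  have him2 : (t + I * b / 2).im = t.im + b/2 := by simp
  have i1 := hv.Ph_integrable (a := a) (t := t - I * b / 2) ha (by
    rw [him1]; have := abs_sub t.im (b/2); rw [abs_of_pos (half_pos hb)] at this; linarith)
  have i2 := hv.Ph_integrable (a := a) (t := t + I * b / 2) ha (by
    rw [him2]; have := abs_add_le t.im (b/2); rw [abs_of_pos (half_pos hb)] at this; linarith)
  unfold Ph
  rw [← integral_const_mul, ← integral_const_mul, ← integral_add (i1.const_mul _) (i2.const_mul _), ← integral_const_mul]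
  congr 1; ext x
  rw [hf, Complex.two_cosh]
  have e1 : 2 * π * I * (t - I * b / 2) * ((x:ℂ) + 0) = 2 * π * I * t * x + π * b * x := by
    linear_combination (-π * b * x) * I_sq
  have e2 : 2 * π * I * (t + I * b / 2) * ((x:ℂ) + 0) = 2 * π * I * t * x + -(π * b * x) := by
    linear_combination (π * b * x) * I_sq
  rw [e1, e2, Complex.exp_add, Complex.exp_add, neg_add, Complex.exp_add, Complex.exp_add]
  ring

lemma Ph_rel1 {b : ℝ} {v : ℂ → ℂ} (hv : QD b v) {a t : ℂ} (ha : |a.im| < qq b) (hab : a.im + b < qq b)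
    (ht : |t.im| < (qq b - a.im - b) / 2) :
    Ph b v (a + I * b) t = Complex.exp (π * b * t) *
      (Complex.exp (-(π * b * ((a - cb b)/2 + I * b / 2))) * Ph b v a (t - I * b / 2) +
       Complex.exp (π * b * ((a - cb b)/2 + I * b / 2)) * Ph b v a (t + I * b / 2)) := by
  have hb := hv.hb
  rw [hv.Ph_shift (y := -(b/2)) ha hab ht (by rw [abs_neg, abs_of_pos (half_pos hb)])]
  have := hv.Ph_rel_gen (θ := -(π * b * ((a - cb b)/2 + I * b / 2))) (s := π * b * t) ha hab ht (fun x : ℝ => Complex.exp (2 * π * I * t * ((x:ℂ) + ((-(b/2) : ℝ):ℂ) * I)) * Fa b v (a + I * b) (x + ((-(b/2) : ℝ):ℂ) * I)) (by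
    intro x
    rw [hv.Fa_down ha hab x, ← Complex.exp_add]
    have e1 : 2 * π * I * t * ((x:ℂ) + ((-(b/2) : ℝ):ℂ) * I) = π * b * t + 2 * π * I * t * x := by
      push_cast; linear_combination (-π * b * t) * I_sq
    have e2 : (π * b * ((x:ℂ) - (a - cb b) / 2 - I * b / 2)) = π * b * x + -(π * b * ((a - cb b)/2 + I * b / 2)) := by ring
    rw [e1, e2])
  rw [neg_neg] at this
  exact this

lemma Ph_rel2 {b : ℝ} {v : ℂ → ℂ} (hv : QD b v) {a t : ℂ} (ha : |a.im| < qq b) (hab : a.im + b < qq b)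
    (ht : |t.im| < (qq b - a.im - b) / 2) :
    Ph b v (a + I * b) t = Complex.exp (-(π * b * t)) *
      (Complex.exp (π * b * ((a - cb b)/2 + I * b / 2)) * Ph b v a (t - I * b / 2) +
       Complex.exp (-(π * b * ((a - cb b)/2 + I * b / 2))) * Ph b v a (t + I * b / 2)) := by
  have hb := hv.hb
  rw [hv.Ph_shift (y := (b/2)) ha hab ht (by rw [abs_of_pos (half_pos hb)])]
  have := hv.Ph_rel_gen (θ := (π * b * ((a - cb b)/2 + I * b / 2))) (s := -(π * b * t)) ha hab ht (fun x : ℝ => Complex.exp (2 * π * I * t * ((x:ℂ) + ((b/2 : ℝ):ℂ) * I)) * Fa b v (a + I * b) (x + ((b/2 : ℝ):ℂ) * I)) (by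
    intro x
    rw [hv.Fa_up ha hab x, ← Complex.exp_add]
    have e1 : 2 * π * I * t * ((x:ℂ) + ((b/2 : ℝ):ℂ) * I) = -(π * b * t) + 2 * π * I * t * x := by
      push_cast; linear_combination (π * b * t) * I_sq
    have e2 : (π * b * ((x:ℂ) + (a - cb b) / 2 + I * b / 2)) = π * b * x + (π * b * ((a - cb b)/2 + I * b / 2)) := by ring
    rw [e1, e2])
  exact this

/-- the basic identity `π b α' = -θ - iπ/2` -/
lemma theta_rel {b : ℝ} {v : ℂ → ℂ} (hv : QD b v) (a : ℂ) : (π * b * ((-a - cb b)/2) : ℂ) = -(π * b * ((a - cb b)/2 + I * b / 2)) - π / 2 * I := by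
  have hbc : (b:ℂ) ≠ 0 := by exact_mod_cast hv.hb.ne'
  unfold cb
  field_simp
  ring

lemma Fneg_rel {b : ℝ} {v : ℂ → ℂ} (hv : QD b v) {a t : ℂ} (ha : |a.im| < qq b)
    (ht : |t.im| < (qq b - a.im - b) / 2) :
    Complex.cosh (π * b * (t - (-a - cb b)/2)) ≠ 0 ∧
    Complex.cosh (π * b * (t - (-a - cb b)/2)) * Fa b v (-a) (t + I * b / 2) =
      Complex.cosh (π * b * (t + (-a - cb b)/2)) * Fa b v (-a) (t - I * b / 2) := by
  have hb := hv.hb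
  have ha' := abs_lt.mp ha
  have e : qq b = (b + b⁻¹) / 2 := rfl
  have i1 : |(t + (-a - cb b)/2).im| < b⁻¹ / 2 := by
    rw [add_im', Complex.neg_im]
    refine lt_of_le_of_lt (abs_sub _ _) ?_
    rw [abs_of_pos (a := (qq b - -a.im) / 2) (by linarith)]; linarith
  have i2 : |(t - (-a - cb b)/2).im| < b⁻¹ / 2 := by
    rw [sub_im', Complex.neg_im]
    refine lt_of_le_of_lt (abs_add_le _ _) ?_
    rw [abs_of_pos (a := (qq b - -a.im) / 2) (by linarith)]; linarith
  have hne : Complex.cosh (π * b * (t - (-a - cb b)/2)) ≠ 0 := by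
    apply cosh_ne_zero_of
    rw [← ofReal_mul, Complex.im_ofReal_mul, abs_mul, abs_of_pos (mul_pos Real.pi_pos hb)]
    have := mul_lt_mul_of_pos_left i2 (mul_pos Real.pi_pos hb)
    have e : π * b * (b⁻¹ / 2) = π / 2 := by field_simp
    linarith
  refine ⟨hne, ?_⟩
  have s1 := hv.shift _ i1
  have s2 := hv.shift _ i2
  unfold Fa
  rw [show t + I * b / 2 + (-a - cb b)/2 = t + (-a - cb b)/2 + I * b / 2 by ring,
    show t + I * b / 2 - (-a - cb b)/2 = t - (-a - cb b)/2 + I * b / 2 by ring,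
    show t - I * b / 2 + (-a - cb b)/2 = t + (-a - cb b)/2 - I * b / 2 by ring,
    show t - I * b / 2 - (-a - cb b)/2 = t - (-a - cb b)/2 - I * b / 2 by ring, s1, s2]
  have h3 := hv.ne (t - (-a - cb b)/2 - I * b / 2)
  generalize v (t - (-a - cb b)/2 - I * b / 2) = x1 at *
  generalize v (t + (-a - cb b)/2 - I * b / 2) = x2 at *
  generalize Complex.cosh (π * b * (t - (-a - cb b)/2)) = c1 at *
  generalize Complex.cosh (π * b * (t + (-a - cb b)/2)) = c2 at *
  field_simp

lemma R_periodic {b : ℝ} {v : ℂ → ℂ} (hv : QD b v) {a t : ℂ} (ha : |a.im| < qq b) (hab : a.im + b < qq b)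
    (ht : |t.im| < (qq b - a.im - b) / 2) :
    Ph b v a (t + I * b / 2) / Fa b v (-a) (t + I * b / 2) =
    Ph b v a (t - I * b / 2) / Fa b v (-a) (t - I * b / 2) := by
  obtain ⟨hne, h1⟩ := hv.Fneg_rel ha ht
  have r1 := hv.Ph_rel1 ha hab ht
  have r2 := hv.Ph_rel2 ha hab ht
  rw [r1] at r2
  have hth := hv.theta_rel a
  set θ : ℂ := π * b * ((a - cb b)/2 + I * b / 2) with hθ
  have c1 : Complex.cosh (π * b * (t - (-a - cb b)/2)) = I * Complex.sinh (π * b * t + θ) := by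
    rw [mul_sub, hth]
    rw [show π * b * t - (-θ - π / 2 * I) = (π * b * t + θ) + π / 2 * I by ring, Complex.cosh_add, Complex.cosh_mul_I, Complex.sinh_mul_I]
    simp; ring
  have c2 : Complex.cosh (π * b * (t + (-a - cb b)/2)) = - I * Complex.sinh (π * b * t - θ) := by
    rw [mul_add, hth]
    rw [show π * b * t + (-θ - π / 2 * I) = (π * b * t - θ) - π / 2 * I by ring, Complex.cosh_sub, Complex.cosh_mul_I, Complex.sinh_mul_I]
    simp; ring
  rw [c1] at hne h1
  rw [c2] at h1
  have hs : Complex.sinh (π * b * t + θ) ≠ 0 := (mul_ne_zero_iff.mp hne).2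
  have key : Complex.sinh (π * b * t + θ) * Ph b v a (t + I * b / 2) = -Complex.sinh (π * b * t - θ) * Ph b v a (t - I * b / 2) := by
    rw [Complex.sinh, Complex.sinh, show -(π * b * t + θ) = -(π * b * t) + -θ by ring,
      show -(π * b * t - θ) = -(π * b * t) + θ by ring, sub_eq_add_neg (π * b * t : ℂ) θ,
      Complex.exp_add, Complex.exp_add, Complex.exp_add, Complex.exp_add]
    linear_combination (1/2) * r2
  have h1' : Complex.sinh (π * b * t + θ) * Fa b v (-a) (t + I * b / 2) = -Complex.sinh (π * b * t - θ) * Fa b v (-a) (t - I * b / 2) := by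
    apply mul_left_cancel₀ I_ne_zero
    linear_combination h1
  have f1 := hv.Fa_ne (-a) (t + I * b / 2)
  have f2 := hv.Fa_ne (-a) (t - I * b / 2)
  rw [div_eq_div_iff f1 f2]
  apply mul_left_cancel₀ hs
  linear_combination Fa b v (-a) (t - I * b / 2) * key - Ph b v a (t - I * b / 2) * h1'

lemma Ph_eq_R {b : ℝ} {v : ℂ → ℂ} (hv : QD b v) {a t : ℂ} (ha : |a.im| < qq b) (hab : a.im + b < qq b) (ht : |t.im| ≤ b / 2) :
    Ph b v a t = Ph b v a 0 / Fa b v (-a) 0 * Fa b v (-a) t := by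
  have hb := hv.hb
  have ha' := abs_lt.mp ha
  have e : qq b = (b + b⁻¹) / 2 := rfl
  obtain ⟨C1, hC1⟩ := hv.Ph_bound (Y := b / 2) ha (by linarith)
  obtain ⟨C2, hC20, hC2⟩ := hv.Fa_growth (η := (qq b - a.im - b) / 2) (by linarith)
  have hneg : (-a).im = -a.im := by simp
  have := periodic_strip_const (fun t => Ph b v a t / Fa b v (-a) t) b ((qq b - a.im) / 2) hb (by linarith) ?_ ?_
    (C1 * (C2 * Real.exp (π * |a.re| * qq b))) (π * (qq b + a.im)) (mul_pos Real.pi_pos (by linarith)).le ?_ ?_ t ht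
  · rw [← this, div_mul_cancel₀ _ (hv.Fa_ne _ _)]
  · intro z hz
    refine (hv.Ph_diff ha hz).div (hv.Fa_diff ?_) (hv.Fa_ne _ _)
    rw [hneg, abs_of_pos (a := qq b - -a.im) (by linarith)]; linarith
  · intro z hz
    have := hv.R_periodic (t := z) ha hab (by linarith)
    rw [show (b:ℂ) / 2 * I = I * b / 2 by ring]
    exact this
  · have h1 : (qq b + a.im) * b < 2 := by
      have : qq b + a.im < 2 * b⁻¹ := by
        have := inv_pos.mpr hb
        linarith
      have := mul_lt_mul_of_pos_right this hb
      rwa [mul_assoc, inv_mul_cancel₀ hb.ne', mul_one] at this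
    nlinarith [Real.pi_pos]
  · intro z hz
    have h1 := hC1 z hz
    have h2 := (hC2 (-a) z (qq b) (by rw [hneg]; linarith) (by rw [hneg]; linarith) (by linarith [hv.qgeb]) (by rw [hneg]; linarith)).2
    rw [hneg, Complex.neg_re, abs_neg] at h2
    have hp : 0 < ‖Fa b v (-a) z‖ := norm_pos_iff.mpr (hv.Fa_ne _ _)
    rw [norm_div, div_le_iff₀ hp]
    have hC1' : 0 ≤ C1 := (norm_nonneg _).trans h1
    calc ‖Ph b v a z‖ ≤ C1 := h1
      _ = C1 * (C2 * Real.exp (π * |a.re| * qq b)) * Real.exp (π * (qq b + a.im) * |z.re|) * (C2⁻¹ * Real.exp (-(π * |a.re| * qq b)) * Real.exp (-(π * (qq b - -a.im)) * |z.re|)) := by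
          rw [show -(π * (qq b - -a.im)) * |z.re| = -(π * (qq b + a.im) * |z.re|) by ring, Real.exp_neg, Real.exp_neg]
          field_simp
      _ ≤ _ := by gcongr

end QD

namespace QD

lemma cosh_rel {b : ℝ} {v : ℂ → ℂ} (hv : QD b v) (a : ℂ) :
    2 * Complex.cosh (π * b * ((a - cb b)/2 + I * b / 2)) * (2 * Complex.cosh (π * b * ((-a - cb b)/2))) =
      2 * Complex.cosh (π * b * (a + I * b / 2)) := by
  rw [hv.theta_rel a]
  have hbc : (b:ℂ) ≠ 0 := by exact_mod_cast hv.hb.ne'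
  have h2 : (π * b * (a + I * b / 2) : ℂ) = 2 * (π * b * ((a - cb b)/2 + I * b / 2)) + π / 2 * I := by
    unfold cb
    field_simp
    ring
  rw [h2]
  generalize (π * b * ((a - cb b)/2 + I * b / 2) : ℂ) = θ
  rw [show -θ - π / 2 * I = -(θ + π/2 * I) by ring, Complex.cosh_neg, Complex.cosh_add, Complex.cosh_add,
    Complex.cosh_mul_I, Complex.sinh_mul_I, Complex.sinh_two_mul]
  simp
  ring

lemma U_periodic {b : ℝ} {v : ℂ → ℂ} (hv : QD b v) {a : ℂ} (ha : |a.im| < qq b) (hab : a.im + b < qq b) :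
    Ph b v (a + I * b) 0 / (Fa b v (-(a + I * b)) 0 * v (a + I * b)) = Ph b v a 0 / (Fa b v (-a) 0 * v a) := by
  have hb := hv.hb
  have ha' := abs_lt.mp ha
  have e : qq b = (b + b⁻¹) / 2 := rfl
  have him : (I * (b:ℂ) / 2).im = b / 2 := by simp
  have r1 := hv.Ph_rel1 (t := 0) ha hab (by simp; linarith)
  rw [mul_zero, Complex.exp_zero, one_mul, zero_sub, zero_add] at r1
  have r2 := hv.Ph_eq_R (t := I * b / 2) ha hab (by rw [him, abs_of_pos (half_pos hb)])
  have r3 := hv.Ph_eq_R (t := -(I * b / 2)) ha hab (by rw [Complex.neg_im, abs_neg, him, abs_of_pos (half_pos hb)])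
  rw [hv.Fa_even (by rw [him, Complex.neg_im, abs_of_pos (half_pos hb), abs_of_pos (by linarith)]; linarith)] at r3
  rw [r2, r3] at r1
  have hal : (((-a) - cb b) / 2).im = -((qq b + a.im) / 2) := by
    simp [cb_im]; ring
  have s1 := hv.shift (((-a) - cb b) / 2) (by
    rw [hal, abs_neg, abs_of_pos (by linarith)]; linarith)
  have s2 := hv.shift (a + I * b / 2) (by
    rw [Complex.add_im, him, abs_lt]; constructor <;> linarith)
  rw [show a + I * b / 2 + I * b / 2 = a + I * b by ring, show a + I * b / 2 - I * b / 2 = a by ring] at s2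
  have i1 := hv.inv' (z := ((-a) - cb b) / 2 - I * b / 2) (by
    rw [Complex.sub_im, hal, him, show -((qq b + a.im) / 2) - b / 2 = -((qq b + a.im) / 2 + b / 2) by ring, abs_neg, abs_of_pos (by linarith)]
    linarith)
  have f1 : Fa b v (-a) (I * b / 2) = 2 * Complex.cosh (π * b * ((-a - cb b)/2)) * v (((-a) - cb b) / 2 - I * b / 2) ^ 2 := by
    unfold Fa
    rw [show I * b / 2 + (-a - cb b) / 2 = (-a - cb b) / 2 + I * b / 2 by ring, s1,
      show I * b / 2 - (-a - cb b) / 2 = -((-a - cb b) / 2 - I * b / 2) by ring, i1, div_inv_eq_mul]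
    ring
  have f2 : Fa b v (-(a + I * b)) 0 = v (((-a) - cb b) / 2 - I * b / 2) ^ 2 := by
    unfold Fa
    rw [show 0 + (-(a + I * b) - cb b) / 2 = (-a - cb b) / 2 - I * b / 2 by ring,
      show 0 - (-(a + I * b) - cb b) / 2 = -((-a - cb b) / 2 - I * b / 2) by ring, i1, div_inv_eq_mul]
    ring
  have n1 := hv.ne (a + I * b)
  have n2 := hv.ne a
  have n3 := hv.ne ((-a - cb b) / 2 - I * b / 2)
  have n4 := hv.Fa_ne (-a) 0
  rw [s2] at n1
  have n5 := (mul_ne_zero_iff.mp n1).1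
  have c := hv.cosh_rel a
  rw [r1, f1, f2, s2]
  rw [← c] at n5 ⊢
  rw [Complex.two_cosh (π * b * ((a - cb b)/2 + I * b / 2))] at n5 ⊢
  have n6 := (mul_ne_zero_iff.mp n5).1
  have n7 := (mul_ne_zero_iff.mp n5).2
  generalize v ((-a - cb b) / 2 - I * b / 2) = V at *
  generalize 2 * Complex.cosh (π * b * ((-a - cb b)/2)) = c1 at *
  generalize Complex.exp (π * b * ((a - cb b)/2 + I * b / 2)) = E1 at *
  generalize Complex.exp (-(π * b * ((a - cb b)/2 + I * b / 2))) = E2 at *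
  field_simp
  ring

/-- the universal constant -/
lemma U_const {b : ℝ} {v : ℂ → ℂ} (hv : QD b v) {a : ℂ} (ha : |a.im| ≤ b / 2) :
    Ph b v a 0 / (Fa b v (-a) 0 * v a) = Ph b v 0 0 / (Fa b v (-0) 0 * v 0) := by
  have hb := hv.hb
  have hb1 := hv.hb1
  have hq := hv.qgeb
  have e : qq b = (b + b⁻¹) / 2 := rfl
  obtain ⟨C1, hC10, hC1⟩ := hv.Fa_growth (η := (qq b - b / 2) / 2) (by linarith)
  obtain ⟨C2, hC20, hC2⟩ := hv.growth (qq b - b / 2) (by linarith)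
  set J := ∫ x : ℝ, Real.exp (-(π * (qq b - b / 2)) * |x|) with hJ
  have hi := integrable_exp_neg_abs (κ := π * (qq b - b / 2)) (mul_pos Real.pi_pos (by linarith))
  refine periodic_strip_const (fun a => Ph b v a 0 / (Fa b v (-a) 0 * v a)) b (qq b) hb (by linarith) ?_ ?_
    (C1 * J * C1 * C2) (π * (qq b + b / 2)) (mul_pos Real.pi_pos (by linarith)).le ?_ ?_ a ha
  · intro z hz
    have hz' := abs_lt.mp hz
    have d1 := hv.Ph_diff_a hz 0
    have d2 := (hv.Fa_diff_a (a := -z) (x := 0) (by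
      rw [Complex.zero_im, abs_zero, zero_add, Complex.neg_im, abs_of_pos (by linarith)]; linarith)).comp z
      (f := fun z => -z) (by fun_prop)
    have d3 := hv.diff z hz
    rw [ofReal_zero] at d1
    exact d1.div (d2.mul d3) (mul_ne_zero (hv.Fa_ne _ _) (hv.ne _))
  · intro z hz
    have hz' := abs_lt.mp hz
    have := hv.U_periodic (a := z - b / 2 * I) (by
      simp; rw [abs_lt]; constructor <;> linarith) (by simp; linarith)
    rw [show z - b / 2 * I + I * b = z + b / 2 * I by ring] at this
    exact this
  · have : (qq b + b / 2) * b < 2 := by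
      rw [e]
      have : ((b + b⁻¹) / 2 + b / 2) * b = b ^ 2 + 1 / 2 := by field_simp; ring
      rw [this]; nlinarith
    nlinarith [Real.pi_pos]
  · intro z hz
    have hz' := abs_le.mp hz
    have h1 : ‖Ph b v z 0‖ ≤ C1 * Real.exp (π * |z.re| * ((qq b - z.im) / 2)) * J := by
      rw [hJ, ← integral_const_mul]
      refine norm_integral_le_of_norm_le (hi.const_mul _) (Eventually.of_forall fun x => ?_)
      rw [mul_zero, zero_mul, Complex.exp_zero, one_mul]
      refine (hC1 z x ((qq b - z.im)/2) (by linarith) (by simp; linarith) (by simp; linarith) le_rfl).1.trans ?_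
      rw [ofReal_re]
      have := Real.pi_pos
      gcongr
      linarith
    have h2 := (hC1 (-z) 0 ((qq b + z.im)/2) (by rw [Complex.neg_im]; linarith)
      (by rw [Complex.neg_im]; simp; linarith) (by simp; linarith) (by rw [Complex.neg_im]; linarith)).2
    rw [Complex.neg_re, abs_neg, Complex.zero_re, abs_zero, mul_zero, Real.exp_zero, mul_one] at h2
    have h3 := (hC2 z (by linarith)).2
    have hJ0 : 0 ≤ J := integral_nonneg fun x => (Real.exp_pos _).le
    rw [norm_div, norm_mul]
    calc _ ≤ (C1 * Real.exp (π * |z.re| * ((qq b - z.im) / 2)) * J) / ((C1⁻¹ * Real.exp (-(π * |z.re| * ((qq b + z.im) / 2)))) * (C2⁻¹ * Real.exp (π * |z.re| * z.im))) := by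
          apply div_le_div₀ (by positivity) h1 (by positivity)
          exact mul_le_mul h2 h3 (by positivity) (norm_nonneg _)
      _ = C1 * J * C1 * C2 * (Real.exp (π * |z.re| * ((qq b - z.im) / 2)) * Real.exp (π * |z.re| * ((qq b + z.im) / 2)) / Real.exp (π * |z.re| * z.im)) := by
          rw [Real.exp_neg]; field_simp
      _ ≤ _ := by
          rw [← Real.exp_add, ← Real.exp_sub]
          have := Real.pi_pos
          gcongr
          have h0 := abs_nonneg z.re
          have : π * |z.re| * (-z.im) ≤ π * |z.re| * (b / 2) := by gcongr; linarith
          linarith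

end QD

/-- the universal constant in the Fourier transform of `Fa` -/
def kap (b : ℝ) (v : ℂ → ℂ) : ℂ := Ph b v 0 0 / (Fa b v (-0) 0 * v 0)

namespace QD

lemma Ph_eq {b : ℝ} {v : ℂ → ℂ} (hv : QD b v) (a t : ℝ) : Ph b v a t = kap b v * v a * Fa b v (-a) t := by
  have hb := hv.hb
  have hq := hv.qgeb
  have hqp := hv.qpos
  set f : ℂ → ℂ := fun a => Ph b v a t - kap b v * v a * Fa b v (-a) t with hf
  have hfc : ContinuousAt f a := by
    have d1 := hv.Ph_diff_a (a := a) (by simpa using hqp) t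
    have d2 := (hv.Fa_diff_a (a := -a) (x := t) (by
      rw [Complex.ofReal_im, abs_zero, zero_add, Complex.neg_im, Complex.ofReal_im, abs_of_pos (by linarith)]; linarith)).comp (a:ℂ)
      (f := fun z => -z) (by fun_prop)
    have d3 := hv.diff a (by rw [ofReal_im, abs_zero]; exact hqp)
    exact (d1.sub ((d3.const_mul (kap b v)).mul d2)).continuousAt
  have h0 : ∀ ε : ℝ, 0 < ε → ε < b / 2 → f (a - I * ε) = 0 := by
    intro ε h1 h2
    have him : ((a:ℂ) - I * ε).im = -ε := by simp
    have hu := hv.U_const (a := a - I * ε) (by rw [him, abs_neg, abs_of_pos h1]; exact h2.le)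
    have hr := hv.Ph_eq_R (a := a - I * ε) (t := t) (by rw [him, abs_neg, abs_of_pos h1]; linarith)
      (by rw [him]; linarith) (by simp; linarith)
    have n1 := hv.Fa_ne (-(a - I * ε)) 0
    have n2 := hv.ne (a - I * ε)
    change _ = kap b v at hu
    rw [div_eq_iff (mul_ne_zero n1 n2)] at hu
    rw [hf]
    simp only
    rw [hr, hu]
    field_simp
    ring
  have hlim : Tendsto (fun ε : ℝ => f (a - I * ε)) (𝓝[>] 0) (𝓝 (f a)) := by
    have : Tendsto (fun ε : ℝ => (a:ℂ) - I * ε) (𝓝[>] 0) (𝓝 (a:ℂ)) := by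
      have hc : Continuous (fun ε : ℝ => (a:ℂ) - I * ε) := by fun_prop
      have := hc.tendsto 0
      simp only [ofReal_zero, mul_zero, sub_zero] at this
      exact this.mono_left nhdsWithin_le_nhds
    exact hfc.tendsto.comp this
  have hz : Tendsto (fun ε : ℝ => f (a - I * ε)) (𝓝[>] 0) (𝓝 0) := by
    refine tendsto_const_nhds.congr' ?_
    filter_upwards [Ioo_mem_nhdsGT (half_pos hb)] with ε hε
    exact (h0 ε hε.1 hε.2).symm
  exact sub_eq_zero.mp (tendsto_nhds_unique hlim hz)

lemma Fa_int {b : ℝ} {v : ℂ → ℂ} (hv : QD b v) (a : ℝ) : Integrable (fun x : ℝ => Fa b v a x) := by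
  have := hv.Ph_integrable (a := a) (t := 0) (by simpa using hv.qpos) (by simpa using hv.qpos)
  simpa using this

lemma kap_sq {b : ℝ} {v : ℂ → ℂ} (hv : QD b v) : kap b v * kap b v = 1 := by
  have hc : Continuous (fun x : ℝ => Fa b v ((0:ℝ):ℂ) x) := hv.Fa_cont (by simpa using hv.qpos)
  have hi := hv.Fa_int 0
  have hF : FourierTransform.fourier (fun x : ℝ => Fa b v ((0:ℝ):ℂ) x) = fun w : ℝ => kap b v * v 0 * Fa b v ((0:ℝ):ℂ) ((-w : ℝ):ℂ) := by
    ext w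
    have := hv.Ph_eq 0 (-w)
    rw [Real.fourier_real_eq_integral_exp_smul]
    rw [ofReal_zero, neg_zero] at this
    rw [ofReal_zero, ← this]
    unfold Ph
    congr 1; ext x
    rw [smul_eq_mul]
    congr 2
    push_cast; ring
  have hi2 := hi.comp_neg.const_mul (kap b v * v 0)
  have key := congrFun (hc.fourierInv_fourier_eq hi (by rw [hF]; exact hi2)) 0
  rw [hF, Real.fourierInv_eq_fourier_neg, Real.fourier_real_eq_integral_exp_smul] at key
  have h2 := hv.Ph_eq 0 0
  have h3 := hv.inv 0 (by rw [Complex.zero_im, abs_zero]; exact hv.qpos)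
  rw [neg_zero] at h3
  have h4 : ∫ w : ℝ, Complex.exp (((-2 * π * w * (-0) : ℝ) : ℂ) * I) • (kap b v * v 0 * Fa b v ((0:ℝ):ℂ) ((-w : ℝ):ℂ)) = kap b v * v 0 * Ph b v ((0:ℝ):ℂ) ((0:ℝ):ℂ) := by
    rw [Ph, ← integral_const_mul, ← integral_neg_eq_self]
    congr 1; ext x; simp
  rw [h4, h2] at key
  have n := hv.Fa_ne ((0:ℝ):ℂ) ((0:ℝ):ℂ)
  simp only [ofReal_zero, neg_zero] at key n
  apply mul_right_cancel₀ n
  rw [one_mul]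
  linear_combination key - kap b v * kap b v * Fa b v 0 0 * h3

end QD

/-- `Fa` at real arguments -/
def Fr (b : ℝ) (v : ℂ → ℂ) (a x : ℝ) : ℂ := Fa b v (a:ℂ) (x:ℂ)

/-- the additive character -/
def ch (x : ℝ) : ℂ := Complex.exp (2 * π * I * x)

lemma ch_add (x y : ℝ) : ch (x + y) = ch x * ch y := by
  unfold ch; rw [← Complex.exp_add]; push_cast; ring_nf

lemma norm_ch (x : ℝ) : ‖ch x‖ = 1 := by
  unfold ch; rw [Complex.norm_exp]; simp

lemma ch_cont : Continuous ch := by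
  unfold ch; fun_prop

/-- the basic beta-type integral -/
def E0 (b : ℝ) (v : ℂ → ℂ) (S δ : ℝ) (μ : ℂ) (t : ℝ) : ℂ :=
  ∫ u : ℝ, Complex.exp (2 * π * I * μ * ((u:ℂ) + 0)) * (Fr b v (S + δ) (t / 2 + u) * Fr b v (S - δ) (t / 2 - u))

namespace QD

lemma Fr_cont {b : ℝ} {v : ℂ → ℂ} (hv : QD b v) (a : ℝ) : Continuous (Fr b v a) := hv.Fa_cont (by simpa using hv.qpos)

lemma Fr_even {b : ℝ} {v : ℂ → ℂ} (hv : QD b v) (a x : ℝ) : Fr b v a (-x) = Fr b v a x := by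
  unfold Fr
  have := hv.qpos
  have h := hv.Fa_even (a := a) (x := x) (by simp [abs_of_pos this]; exact this)
  rw [← h]; simp

lemma Fr_bound {b : ℝ} {v : ℂ → ℂ} (hv : QD b v) (a s : ℝ) : ∃ C, 0 ≤ C ∧ (∀ u : ℝ, ‖Fr b v a (s + u)‖ ≤ C * Real.exp (-(π * qq b) * |u|)) ∧
    (∀ u : ℝ, ‖Fr b v a (s - u)‖ ≤ C * Real.exp (-(π * qq b) * |u|)) := by
  obtain ⟨C, hC⟩ := hv.Fa_real_bound (a := a) (by simpa using hv.qpos)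
  have hq := hv.qpos
  have hC0 : 0 ≤ C := by
    have := (norm_nonneg _).trans (hC 0)
    simpa using this
  simp only [ofReal_im, sub_zero] at hC
  have key : ∀ u w : ℝ, |u| ≤ |s| + |w| → ‖Fr b v a w‖ ≤ C * Real.exp (π * qq b * |s|) * Real.exp (-(π * qq b) * |u|) := by
    intro u w h
    refine (hC w).trans ?_
    rw [mul_assoc, ← Real.exp_add]
    have := Real.pi_pos
    gcongr
    have h2 : π * qq b * |u| ≤ π * qq b * (|s| + |w|) := by gcongr
    linarith
  refine ⟨C * Real.exp (π * qq b * |s|), by positivity, fun u => key u _ ?_, fun u => key u _ ?_⟩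
  · have := abs_sub (s + u) s
    rw [add_sub_cancel_left] at this; linarith
  · have := abs_sub s (s - u)
    rw [sub_sub_cancel] at this; linarith

lemma Fr_int {b : ℝ} {v : ℂ → ℂ} (hv : QD b v) (a : ℝ) : Integrable (Fr b v a) := hv.Fa_int a

lemma Fr_ft {b : ℝ} {v : ℂ → ℂ} (hv : QD b v) (a t : ℝ) : ∫ x : ℝ, ch (t * x) * Fr b v a x = kap b v * v a * Fr b v (-a) t := by
  have := hv.Ph_eq a t
  unfold Fr
  rw [ofReal_neg, ← this, Ph]
  congr 1; ext x
  unfold ch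
  congr 2; push_cast; ring

lemma v_inv_real {b : ℝ} {v : ℂ → ℂ} (hv : QD b v) (a : ℝ) : v a * v (-a) = 1 := hv.inv a (by rw [ofReal_im, abs_zero]; exact hv.qpos)

lemma parseval {b : ℝ} {v : ℂ → ℂ} (hv : QD b v) (a : ℝ) (g : ℝ → ℂ) (hg : Integrable g) :
    ∫ x, Fr b v a x * g x = kap b v * v a * ∫ y, Fr b v (-a) y * ∫ x, ch (y * x) * g x := by
  have h1 : ∀ x, Fr b v a x = kap b v * v a * ∫ y, ch (x * y) * Fr b v (-a) y := by
    intro x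
    rw [hv.Fr_ft (-a) x, neg_neg, ofReal_neg]
    linear_combination (-Fr b v a x) * hv.kap_sq - kap b v * kap b v * Fr b v a x * hv.v_inv_real a
  have hIntg : Integrable (fun z : ℝ × ℝ => ch (z.1 * z.2) * (g z.1 * Fr b v (-a) z.2)) (volume.prod volume) := by
    refine (hg.mul_prod (hv.Fr_int (-a))).bdd_mul (c := 1) ?_ ?_
    · exact (ch_cont.comp (by fun_prop)).aestronglyMeasurable
    · exact Eventually.of_forall fun z => (norm_ch _).le
  have sw := integral_integral_swap (f := fun x y => ch (x * y) * (g x * Fr b v (-a) y)) hIntg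
  have e1 : ∫ x, Fr b v a x * g x = kap b v * v a * ∫ x, ∫ y, ch (x * y) * (g x * Fr b v (-a) y) := by
    rw [← integral_const_mul]
    congr 1; ext x
    rw [h1 x, mul_assoc, ← integral_mul_const]
    congr 2; ext y; ring
  rw [e1, sw]
  congr 2; ext y
  rw [← integral_const_mul]
  congr 1; ext x
  rw [mul_comm x y]; ring

lemma E0_k {b : ℝ} {v : ℂ → ℂ} (hv : QD b v) (S δ t : ℝ) : Continuous (fun u => Fr b v (S + δ) (t / 2 + u) * Fr b v (S - δ) (t / 2 - u)) ∧
    ∃ C, ∀ u : ℝ, ‖Fr b v (S + δ) (t / 2 + u) * Fr b v (S - δ) (t / 2 - u)‖ ≤ C * Real.exp (-(2 * π * qq b) * |u|) := by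
  constructor
  · exact ((hv.Fr_cont _).comp (by fun_prop)).mul ((hv.Fr_cont _).comp (by fun_prop))
  · obtain ⟨C1, hC1, h1, -⟩ := hv.Fr_bound (S + δ) (t / 2)
    obtain ⟨C2, hC2, -, h2⟩ := hv.Fr_bound (S - δ) (t / 2)
    refine ⟨C1 * C2, fun u => ?_⟩
    rw [norm_mul]
    calc _ ≤ (C1 * Real.exp (-(π * qq b) * |u|)) * (C2 * Real.exp (-(π * qq b) * |u|)) :=
          mul_le_mul (h1 u) (h2 u) (norm_nonneg _) (by positivity)
      _ = C1 * C2 * (Real.exp (-(π * qq b) * |u|) * Real.exp (-(π * qq b) * |u|)) := by ring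
      _ = _ := by rw [← Real.exp_add]; ring_nf

lemma E0_integrable {b : ℝ} {v : ℂ → ℂ} (hv : QD b v) (S δ t : ℝ) {μ : ℂ} (hμ : |μ.im| < qq b) :
    Integrable (fun u : ℝ => Complex.exp (2 * π * I * μ * ((u:ℂ) + 0)) * (Fr b v (S + δ) (t / 2 + u) * Fr b v (S - δ) (t / 2 - u))) := by
  obtain ⟨hc, C, hC⟩ := hv.E0_k S δ t
  refine laplace_integrable hc.aestronglyMeasurable hC 0 _ ?_
  rw [wre2]; nlinarith [Real.pi_pos]

lemma E0_diff {b : ℝ} {v : ℂ → ℂ} (hv : QD b v) (S δ t : ℝ) {μ : ℂ} (hμ : |μ.im| < qq b) :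
    DifferentiableAt ℂ (fun μ => E0 b v S δ μ t) μ := by
  obtain ⟨hc, C, hC⟩ := hv.E0_k S δ t
  have h := (laplace_hasDerivAt hc.aestronglyMeasurable hC 0 (2 * π * I * μ) (by
    rw [wre2]; nlinarith [Real.pi_pos])).2.differentiableAt
  unfold E0
  exact h.comp (f := fun t => 2 * π * I * t) μ (by fun_prop)

lemma E0_T {b : ℝ} {v : ℂ → ℂ} (hv : QD b v) (S δ t : ℝ) (μ : ℂ) : E0 b v S δ μ t = E0 b v S t μ δ := by
  unfold E0
  congr 1; ext u
  congr 1
  have hq := hv.qpos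
  have form : ∀ S δ t : ℝ, Fr b v (S + δ) (t / 2 + u) * Fr b v (S - δ) (t / 2 - u) =
      (v ((t / 2 + u : ℝ) + ((S + δ : ℝ) - cb b) / 2) * v (-((t / 2 + u : ℝ) - ((S + δ : ℝ) - cb b) / 2))) *
      (v ((t / 2 - u : ℝ) + ((S - δ : ℝ) - cb b) / 2) * v (-((t / 2 - u : ℝ) - ((S - δ : ℝ) - cb b) / 2))) := by
    intro S δ t
    rw [hv.inv' (by rw [sub_im']; simp; rw [abs_of_pos (half_pos hq)]; linarith), hv.inv' (by rw [sub_im']; simp; rw [abs_of_pos (half_pos hq)]; linarith)]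
    rfl
  rw [form, form]
  have e1 : (((t / 2 + u : ℝ):ℂ) + ((S + δ : ℝ) - cb b) / 2) = (((δ / 2 + u : ℝ):ℂ) + ((S + t : ℝ) - cb b) / 2) := by push_cast; ring
  have e2 : (-(((t / 2 + u : ℝ):ℂ) - ((S + δ : ℝ) - cb b) / 2)) = (((δ / 2 - u : ℝ):ℂ) + ((S - t : ℝ) - cb b) / 2) := by push_cast; ring
  have e3 : (((t / 2 - u : ℝ):ℂ) + ((S - δ : ℝ) - cb b) / 2) = (-(((δ / 2 + u : ℝ):ℂ) - ((S + t : ℝ) - cb b) / 2)) := by push_cast; ring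
  have e4 : (-(((t / 2 - u : ℝ):ℂ) - ((S - δ : ℝ) - cb b) / 2)) = (-(((δ / 2 - u : ℝ):ℂ) - ((S - t : ℝ) - cb b) / 2)) := by push_cast; ring
  rw [e1, e2, e3, e4]
  ring

lemma E0_H {b : ℝ} {v : ℂ → ℂ} (hv : QD b v) (S δ t μ : ℝ) : E0 b v S δ μ t = v (S + δ : ℝ) * v (S - δ : ℝ) * E0 b v (-S) δ t μ := by
  have hE : ∀ S δ t μ : ℝ, E0 b v S δ μ t = ∫ u : ℝ, ch (μ * u) * (Fr b v (S + δ) (t / 2 + u) * Fr b v (S - δ) (t / 2 - u)) := by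
    intro S δ t μ
    unfold E0 ch
    congr 1; ext u
    congr 2; push_cast; ring
  rw [hE, hE]
  have s1 : ∫ u : ℝ, ch (μ * u) * (Fr b v (S + δ) (t / 2 + u) * Fr b v (S - δ) (t / 2 - u)) =
      ∫ x : ℝ, Fr b v (S + δ) x * (ch (μ * (x - t / 2)) * Fr b v (S - δ) (t - x)) := by
    rw [← integral_sub_right_eq_self _ (t / 2)]
    congr 1; ext u
    rw [show t / 2 - (u - t / 2) = t - u by ring, show t / 2 + (u - t / 2) = u by ring]
    ring
  rw [s1, hv.parseval]
  · have s2 : ∀ y : ℝ, ∫ x : ℝ, ch (y * x) * (ch (μ * (x - t / 2)) * Fr b v (S - δ) (t - x)) =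
        ch (μ * (t / 2) + y * t) * (kap b v * v (S - δ : ℝ) * Fr b v (-S + δ) (μ + y)) := by
      intro y
      have := hv.Fr_ft (S - δ) (-(μ + y))
      rw [hv.Fr_even, show -(S - δ) = -S + δ by ring] at this
      rw [← this, ← integral_const_mul, ← integral_sub_left_eq_self _ _ t]
      congr 1; ext x
      rw [← mul_assoc, ← mul_assoc, ← ch_add, ← ch_add]
      rw [show t - (t - x) = x by ring]
      congr 2; ring
    simp_rw [s2]
    rw [← integral_const_mul, ← integral_const_mul, ← integral_sub_right_eq_self _ (μ / 2)]
    congr 1; ext u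
    rw [show μ + (u - μ / 2) = μ / 2 + u by ring, show u - μ / 2 = -(μ / 2 - u) by ring, hv.Fr_even,
      show -(S + δ) = -S - δ by ring, show μ * (t / 2) + -(μ / 2 - u) * t = t * u by ring]
    linear_combination (v (S + δ : ℝ) * v (S - δ : ℝ) * Fr b v (-S - δ) (μ / 2 - u) * ch (t * u) * Fr b v (-S + δ) (μ / 2 + u)) * hv.kap_sq
  · refine ((hv.Fr_int (S - δ)).comp_sub_left t).bdd_mul (c := 1) ?_ ?_
    · exact (ch_cont.comp (by fun_prop)).aestronglyMeasurable
    · exact Eventually.of_forall fun z => (norm_ch _).le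

lemma euler_real {b : ℝ} {v : ℂ → ℂ} (hv : QD b v) (S δ t μ : ℝ) :
    E0 b v S δ μ t * (v (S + μ) * v (S - μ)) =
      v (S + δ : ℝ) * v (S - δ : ℝ) * v (S + t : ℝ) * v (S - t : ℝ) * E0 b v (-S) δ μ t := by
  rw [hv.E0_H S δ t μ, hv.E0_T (-S) δ μ t, hv.E0_H (-S) μ δ t, neg_neg, hv.E0_T S μ t δ, hv.E0_H S t μ δ, hv.E0_T (-S) t δ μ]
  have h1 := hv.v_inv_real (S + μ)
  have h2 := hv.v_inv_real (S - μ)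
  rw [show -((S + μ : ℝ):ℂ) = ((-S - μ : ℝ):ℂ) by push_cast; ring] at h1
  rw [show -((S - μ : ℝ):ℂ) = ((-S + μ : ℝ):ℂ) by push_cast; ring] at h2
  rw [show (S:ℂ) + μ = ((S + μ : ℝ):ℂ) by push_cast; ring, show (S:ℂ) - μ = ((S - μ : ℝ):ℂ) by push_cast; ring]
  generalize v ((S + μ : ℝ):ℂ) = x1 at *
  generalize v ((S - μ : ℝ):ℂ) = x2 at *
  generalize v ((-S - μ : ℝ):ℂ) = x3 at *
  generalize v ((-S + μ : ℝ):ℂ) = x4 at *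
  linear_combination (v (S + δ : ℝ) * v (S - δ : ℝ) * v (S + t : ℝ) * v (S - t : ℝ) * E0 b v (-S) δ μ t) * (x2 * x4 * h1 + h2)

lemma euler {b : ℝ} {v : ℂ → ℂ} (hv : QD b v) (S δ t : ℝ) {μ : ℂ} (hμ : |μ.im| < qq b) :
    E0 b v S δ μ t * (v (S + μ) * v (S - μ)) =
      v (S + δ : ℝ) * v (S - δ : ℝ) * v (S + t : ℝ) * v (S - t : ℝ) * E0 b v (-S) δ μ t := by
  set U : Set ℂ := {z | |z.im| < qq b} with hU
  have hUo : IsOpen U := isOpen_strip (qq b)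
  have hUc : IsPreconnected U := (convex_strip (qq b)).isPreconnected
  set f : ℂ → ℂ := fun μ => E0 b v S δ μ t * (v (S + μ) * v (S - μ)) with hf
  set g : ℂ → ℂ := fun μ => v (S + δ : ℝ) * v (S - δ : ℝ) * v (S + t : ℝ) * v (S - t : ℝ) * E0 b v (-S) δ μ t with hg
  have hfa : AnalyticOnNhd ℂ f U := by
    refine DifferentiableOn.analyticOnNhd (fun z hz => ?_) hUo
    have hz' : |z.im| < (b + b⁻¹) / 2 := hz
    have d1 := hv.E0_diff S δ t hz
    have d2 := (hv.diff (S + z) (by simpa using hz')).comp z (f := fun z => (S:ℂ) + z) (by fun_prop)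
    have d3 := (hv.diff (S - z) (by simpa using hz')).comp z (f := fun z => (S:ℂ) - z) (by fun_prop)
    exact (d1.mul (d2.mul d3)).differentiableWithinAt
  have hga : AnalyticOnNhd ℂ g U := by
    refine DifferentiableOn.analyticOnNhd (fun z hz => ?_) hUo
    exact ((hv.E0_diff (-S) δ t hz).const_mul _).differentiableWithinAt
  have h0 : (0:ℂ) ∈ U := by simpa [hU] using hv.qpos
  refine hfa.eqOn_of_preconnected_of_frequently_eq hga hUc h0 ?_ hμ
  have hu : Tendsto (fun n : ℕ => ((1 / ((n:ℝ) + 1) : ℝ) : ℂ)) atTop (𝓝[≠] 0) := by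
    rw [tendsto_nhdsWithin_iff]
    constructor
    · rw [show (0:ℂ) = ((0:ℝ):ℂ) by simp]
      exact (Complex.continuous_ofReal.tendsto _).comp tendsto_one_div_add_atTop_nhds_zero_nat
    · refine Eventually.of_forall fun n => ?_
      simp only [Set.mem_compl_iff, Set.mem_singleton_iff, ofReal_eq_zero]
      positivity
  exact hu.frequently (Eventually.of_forall fun n => hv.euler_real S δ t _).frequently

end QD

/-- integrand of the flip kernel -/
def Kg (b : ℝ) (v : ℂ → ℂ) (d r δ t S p : ℝ) : ℂ :=
  Fr b v (d - S) (p + r) * (Complex.exp (π * I * p * ((S:ℂ) + d + cb b)) * (Fr b v (S + δ) (t / 2 + p) * Fr b v (S - δ) (t / 2 - p)))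

def Kf (b : ℝ) (v : ℂ → ℂ) (d r δ t S : ℝ) : ℂ := ∫ p : ℝ, Kg b v d r δ t S p

def Nf (b : ℝ) (v : ℂ → ℂ) (d r δ t S : ℝ) : ℂ :=
  ∫ y : ℝ, v (y - (d + cb b) / 2) / v (y + (d + cb b) / 2 - S) * ch (y * r) * E0 b v S δ (y + (d + cb b) / 2) t

/-- the integrand of the Clebsch-Gordan coefficients -/
def Jg (b : ℝ) (v : ℂ → ℂ) (s₁ s₂ s₃ p₁ p₂ p : ℝ) : ℂ :=
  Complex.exp (π * I * p * ((s₁:ℂ) + s₂ - s₃ + cb b)) * Fr b v (s₂ - s₁ - s₃) (p + p₂) *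
    Fr b v (s₁ - s₂ - s₃) (p - p₁) * Fr b v (s₁ + s₂ + s₃) p

def Mv (v : ℂ → ℂ) (s₁ s₂ s₃ : ℝ) : ℂ :=
  v (s₁ + s₂ - s₃ : ℝ) * v (s₁ + s₃ - s₂ : ℝ) * v (s₂ + s₃ - s₁ : ℝ) / v (s₁ + s₂ + s₃ : ℝ)

def Iv (b : ℝ) (v : ℂ → ℂ) (s₁ s₂ s₃ p₁ p₂ : ℝ) : ℂ :=
  v (p₁ - s₁ : ℝ) * v (p₂ - s₂ : ℝ) / v (p₁ + p₂ - s₃ : ℝ) *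
    Complex.exp (π * I * ((p₂ : ℂ) * (s₁ + cb b) - p₁ * (s₂ + cb b))) *
    ∫ p : ℝ, Jg b v s₁ s₂ s₃ p₁ p₂ p

namespace QD

lemma G_int {b : ℝ} {v : ℂ → ℂ} (hv : QD b v) (d δ t S : ℝ) : Integrable (fun p : ℝ => Complex.exp (π * I * p * ((S:ℂ) + d + cb b)) * (Fr b v (S + δ) (t / 2 + p) * Fr b v (S - δ) (t / 2 - p))) := by
  have := hv.E0_integrable S δ t (μ := (S + d + cb b) / 2) (by
    have hq := hv.qpos
    have : (((S:ℂ) + d + cb b) / 2).im = qq b / 2 := by simp [cb_im]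
    rw [this, abs_of_pos (half_pos hq)]; linarith)
  refine this.congr (Eventually.of_forall fun p => ?_)
  simp only
  congr 2; ring

lemma Kg_int {b : ℝ} {v : ℂ → ℂ} (hv : QD b v) (d r δ t S : ℝ) : Integrable (Kg b v d r δ t S) := by
  obtain ⟨C, hC0, hC, -⟩ := hv.Fr_bound (d - S) r
  refine (hv.G_int d δ t S).bdd_mul (c := C) ?_ ?_
  · exact ((hv.Fr_cont _).comp (by fun_prop)).aestronglyMeasurable
  · refine Eventually.of_forall fun p => ?_
    have h := hC p
    rw [add_comm r p] at h
    refine h.trans ?_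
    have : Real.exp (-(π * qq b) * |p|) ≤ 1 := by
      rw [Real.exp_le_one_iff]
      have := mul_nonneg (mul_pos Real.pi_pos hv.qpos).le (abs_nonneg p)
      linarith
    nlinarith

lemma Kf_eq {b : ℝ} {v : ℂ → ℂ} (hv : QD b v) (d r δ t S : ℝ) :
    Kf b v d r δ t S = kap b v * v (d - S : ℝ) * Complex.exp (-(π * I * r * S)) * Nf b v d r δ t S := by
  set G : ℝ → ℂ := fun p : ℝ => Complex.exp (π * I * p * ((S:ℂ) + d + cb b)) * (Fr b v (S + δ) (t / 2 + p) * Fr b v (S - δ) (t / 2 - p)) with hG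
  have hGi : Integrable G := hv.G_int d δ t S
  have h1 : Kf b v d r δ t S = ∫ x, Fr b v (d - S) x * G (x - r) := by
    unfold Kf
    rw [← integral_add_right_eq_self (fun x => Fr b v (d - S) x * G (x - r)) r]
    congr 1; ext p
    rw [add_sub_cancel_right]; rfl
  have h2 : ∀ y : ℝ, ∫ x, ch (y * x) * G (x - r) = ch (y * r) * E0 b v S δ (y + (S + d + cb b) / 2) t := by
    intro y
    rw [← integral_add_right_eq_self _ r, E0, ← integral_const_mul]
    congr 1; ext p
    rw [add_sub_cancel_right, hG, mul_add, ch_add]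
    simp only
    rw [mul_comm (ch (y * p)), mul_assoc]
    congr 1
    rw [← mul_assoc]
    congr 1
    unfold ch
    rw [← Complex.exp_add]
    congr 1; push_cast; ring
  rw [h1, hv.parseval _ _ (hGi.comp_sub_right r)]
  simp_rw [h2]
  rw [mul_assoc (kap b v * v (d - S : ℝ))]
  congr 1
  unfold Nf
  rw [← integral_sub_right_eq_self _ (S / 2), ← integral_const_mul]
  congr 1; ext y
  have e1 : Fr b v (-(d - S)) (y - S / 2) = v (y - (d + cb b) / 2) / v (y + (d + cb b) / 2 - S) := by
    unfold Fr Fa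
    congr 2 <;> (push_cast; ring)
  have e2 : ((y - S / 2 : ℝ):ℂ) + (S + d + cb b) / 2 = y + (d + cb b) / 2 := by push_cast; ring
  have e3 : ch ((y - S / 2) * r) = Complex.exp (-(π * I * r * S)) * ch (y * r) := by
    unfold ch
    rw [← Complex.exp_add]; congr 1; push_cast; ring
  rw [e1, e2, e3]
  ring

lemma Nf_flip {b : ℝ} {v : ℂ → ℂ} (hv : QD b v) (d r δ t S : ℝ) :
    Nf b v d r δ t S = v (S + δ : ℝ) * v (S - δ : ℝ) * v (S + t : ℝ) * v (S - t : ℝ) * Nf b v d r δ t (-S) := by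
  unfold Nf
  rw [← integral_const_mul]
  congr 1; ext y
  have hq := hv.qpos
  have him : ((y:ℂ) + (d + cb b) / 2).im = qq b / 2 := by simp [cb_im]
  have hE := hv.euler S δ t (μ := y + (d + cb b) / 2) (by rw [him, abs_of_pos (half_pos hq)]; linarith)
  have hi := hv.inv' (z := y + (d + cb b) / 2 - S) (by
    rw [Complex.sub_im, him, ofReal_im, sub_zero, abs_of_pos (half_pos hq)]; linarith)
  rw [show -((y:ℂ) + (d + cb b) / 2 - S) = S - (y + (d + cb b) / 2) by ring] at hi
  rw [hi] at hE
  rw [ofReal_neg, sub_neg_eq_add, add_comm _ (S:ℂ)]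
  have n1 := hv.ne (S + (y + (d + cb b) / 2))
  have n2 := hv.ne (y + (d + cb b) / 2 - S)
  clear hi him
  generalize v (S + (y + (d + cb b) / 2)) = z1 at *
  generalize v (y + (d + cb b) / 2 - S) = z2 at *
  generalize v (y - (d + cb b) / 2) = z3 at *
  generalize E0 b v S δ (y + (d + cb b) / 2) t = e1 at *
  generalize E0 b v (-S) δ (y + (d + cb b) / 2) t = e2 at *
  field_simp at hE ⊢
  linear_combination z3 * ch (y * r) * hE

lemma Kf_flip {b : ℝ} {v : ℂ → ℂ} (hv : QD b v) (d r δ t S : ℝ) :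
    Kf b v d r δ t S * (v (d + S : ℝ) * Complex.exp (2 * (π * I * r * S))) =
      v (d - S : ℝ) * (v (S + δ : ℝ) * v (S - δ : ℝ) * v (S + t : ℝ) * v (S - t : ℝ)) * Kf b v d r δ t (-S) := by
  rw [hv.Kf_eq d r δ t S, hv.Kf_eq d r δ t (-S), hv.Nf_flip]
  rw [sub_neg_eq_add, ofReal_neg, mul_neg, neg_neg, two_mul, Complex.exp_add, Complex.exp_neg]
  have := Complex.exp_ne_zero (π * I * r * S)
  field_simp

lemma vneg {b : ℝ} {v : ℂ → ℂ} (hv : QD b v) (x : ℝ) : v ((-x : ℝ):ℂ) = (v (x:ℂ))⁻¹ := by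
  rw [ofReal_neg, hv.inv' (by simpa using hv.qpos)]

lemma Jg1 {b : ℝ} {v : ℂ → ℂ} (hv : QD b v) (s₁ s₂ s₃ p₁ p₂ p : ℝ) : Jg b v s₁ s₂ s₃ p₁ p₂ p =
    Complex.exp (π * I * (p₁ / 2) * ((s₁:ℂ) + s₂ - s₃ + cb b)) *
      Kg b v (s₂ - s₃) (p₁ / 2 + p₂) (s₂ + s₃) p₁ s₁ (p - p₁ / 2) := by
  unfold Jg Kg
  rw [show s₂ - s₃ - s₁ = s₂ - s₁ - s₃ by ring, show p - p₁ / 2 + (p₁ / 2 + p₂) = p + p₂ by ring,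
    show s₁ + (s₂ + s₃) = s₁ + s₂ + s₃ by ring, show p₁ / 2 + (p - p₁ / 2) = p by ring,
    show s₁ - (s₂ + s₃) = s₁ - s₂ - s₃ by ring, show p₁ / 2 - (p - p₁ / 2) = -(p - p₁) by ring, hv.Fr_even]
  rw [show π * I * p * ((s₁:ℂ) + s₂ - s₃ + cb b) = π * I * (p₁ / 2) * ((s₁:ℂ) + s₂ - s₃ + cb b) +
    π * I * ((p - p₁ / 2 : ℝ):ℂ) * ((s₁:ℂ) + ((s₂ - s₃ : ℝ):ℂ) + cb b) by push_cast; ring, Complex.exp_add]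
  ring

lemma Jg2 {b : ℝ} {v : ℂ → ℂ} (hv : QD b v) (s₁ s₂ s₃ p₁ p₂ p : ℝ) : Jg b v s₁ s₂ s₃ p₁ p₂ p =
    Complex.exp (-(π * I * (p₂ / 2) * ((s₁:ℂ) + s₂ - s₃ + cb b))) *
      Kg b v (s₁ - s₃) (-(p₂ / 2) - p₁) (-(s₁ + s₃)) p₂ s₂ (p + p₂ / 2) := by
  unfold Jg Kg
  rw [show s₁ - s₃ - s₂ = s₁ - s₂ - s₃ by ring, show p + p₂ / 2 + (-(p₂ / 2) - p₁) = p - p₁ by ring,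
    show s₂ + -(s₁ + s₃) = s₂ - s₁ - s₃ by ring, show p₂ / 2 + (p + p₂ / 2) = p + p₂ by ring,
    show s₂ - -(s₁ + s₃) = s₁ + s₂ + s₃ by ring, show p₂ / 2 - (p + p₂ / 2) = -p by ring, hv.Fr_even]
  rw [show π * I * p * ((s₁:ℂ) + s₂ - s₃ + cb b) = -(π * I * (p₂ / 2) * ((s₁:ℂ) + s₂ - s₃ + cb b)) +
    π * I * ((p + p₂ / 2 : ℝ):ℂ) * ((s₂:ℂ) + ((s₁ - s₃ : ℝ):ℂ) + cb b) by push_cast; ring, Complex.exp_add]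
  ring

lemma Jg3 {b : ℝ} {v : ℂ → ℂ} (hv : QD b v) (s₁ s₂ s₃ p₁ p₂ p : ℝ) : Jg b v s₁ s₂ s₃ p₁ p₂ p =
    Complex.exp (π * I * ((p₁ - p₂) / 2) * ((s₁:ℂ) + s₂ - s₃ + cb b)) *
      Kg b v (s₁ + s₂) ((p₁ - p₂) / 2) (s₂ - s₁) (p₁ + p₂) (-s₃) (p - (p₁ - p₂) / 2) := by
  unfold Jg Kg
  rw [show s₁ + s₂ - -s₃ = s₁ + s₂ + s₃ by ring, show p - (p₁ - p₂) / 2 + (p₁ - p₂) / 2 = p by ring,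
    show -s₃ + (s₂ - s₁) = s₂ - s₁ - s₃ by ring, show (p₁ + p₂) / 2 + (p - (p₁ - p₂) / 2) = p + p₂ by ring,
    show -s₃ - (s₂ - s₁) = s₁ - s₂ - s₃ by ring, show (p₁ + p₂) / 2 - (p - (p₁ - p₂) / 2) = -(p - p₁) by ring, hv.Fr_even]
  rw [show π * I * p * ((s₁:ℂ) + s₂ - s₃ + cb b) = π * I * ((p₁ - p₂) / 2) * ((s₁:ℂ) + s₂ - s₃ + cb b) +
    π * I * ((p - (p₁ - p₂) / 2 : ℝ):ℂ) * (((-s₃ : ℝ):ℂ) + ((s₁ + s₂ : ℝ):ℂ) + cb b) by push_cast; ring, Complex.exp_add]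
  ring

lemma Jg_int {b : ℝ} {v : ℂ → ℂ} (hv : QD b v) (s₁ s₂ s₃ p₁ p₂ : ℝ) : Integrable (Jg b v s₁ s₂ s₃ p₁ p₂) := by
  have h := ((hv.Kg_int (s₂ - s₃) (p₁ / 2 + p₂) (s₂ + s₃) p₁ s₁).comp_sub_right (p₁ / 2)).const_mul
    (Complex.exp (π * I * (p₁ / 2) * ((s₁:ℂ) + s₂ - s₃ + cb b)))
  exact h.congr (Eventually.of_forall fun p => (hv.Jg1 s₁ s₂ s₃ p₁ p₂ p).symm)

lemma J1 {b : ℝ} {v : ℂ → ℂ} (hv : QD b v) (s₁ s₂ s₃ p₁ p₂ : ℝ) : ∫ p, Jg b v s₁ s₂ s₃ p₁ p₂ p =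
    Complex.exp (π * I * (p₁ / 2) * ((s₁:ℂ) + s₂ - s₃ + cb b)) *
      Kf b v (s₂ - s₃) (p₁ / 2 + p₂) (s₂ + s₃) p₁ s₁ := by
  simp_rw [hv.Jg1]
  rw [integral_const_mul, integral_sub_right_eq_self (fun p => Kg b v (s₂ - s₃) (p₁ / 2 + p₂) (s₂ + s₃) p₁ s₁ p), Kf]

lemma J2 {b : ℝ} {v : ℂ → ℂ} (hv : QD b v) (s₁ s₂ s₃ p₁ p₂ : ℝ) : ∫ p, Jg b v s₁ s₂ s₃ p₁ p₂ p =
    Complex.exp (-(π * I * (p₂ / 2) * ((s₁:ℂ) + s₂ - s₃ + cb b))) *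
      Kf b v (s₁ - s₃) (-(p₂ / 2) - p₁) (-(s₁ + s₃)) p₂ s₂ := by
  simp_rw [hv.Jg2]
  rw [integral_const_mul, integral_add_right_eq_self (fun p => Kg b v (s₁ - s₃) (-(p₂ / 2) - p₁) (-(s₁ + s₃)) p₂ s₂ p), Kf]

lemma J3 {b : ℝ} {v : ℂ → ℂ} (hv : QD b v) (s₁ s₂ s₃ p₁ p₂ : ℝ) : ∫ p, Jg b v s₁ s₂ s₃ p₁ p₂ p =
    Complex.exp (π * I * ((p₁ - p₂) / 2) * ((s₁:ℂ) + s₂ - s₃ + cb b)) *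
      Kf b v (s₁ + s₂) ((p₁ - p₂) / 2) (s₂ - s₁) (p₁ + p₂) (-s₃) := by
  simp_rw [hv.Jg3]
  rw [integral_const_mul, integral_sub_right_eq_self (fun p => Kg b v (s₁ + s₂) ((p₁ - p₂) / 2) (s₂ - s₁) (p₁ + p₂) (-s₃) p), Kf]

lemma flip1 {b : ℝ} {v : ℂ → ℂ} (hv : QD b v) (s₁ s₂ s₃ p₁ p₂ : ℝ) :
    Iv b v (-s₁) s₂ s₃ p₁ p₂ = Mv v s₁ s₂ s₃ * Iv b v s₁ s₂ s₃ p₁ p₂ := by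
  have hK := hv.Kf_flip (s₂ - s₃) (p₁ / 2 + p₂) (s₂ + s₃) p₁ s₁
  unfold Iv Mv
  rw [hv.J1, hv.J1]
  generalize Kf b v (s₂ - s₃) (p₁ / 2 + p₂) (s₂ + s₃) p₁ s₁ = K at *
  generalize Kf b v (s₂ - s₃) (p₁ / 2 + p₂) (s₂ + s₃) p₁ (-s₁) = K' at *
  have i1 := hv.vneg (p₁ - s₁)
  have i2 := hv.vneg (s₂ + s₃ - s₁)
  have i3 := hv.vneg (s₁ + s₃ - s₂)
  rw [show -(p₁ - s₁) = s₁ - p₁ by ring] at i1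
  rw [show -(s₂ + s₃ - s₁) = s₁ - (s₂ + s₃) by ring] at i2
  rw [show -(s₁ + s₃ - s₂) = s₂ - s₃ - s₁ by ring] at i3
  rw [i1, i2, i3, show s₂ - s₃ + s₁ = s₁ + s₂ - s₃ by ring, show s₁ + (s₂ + s₃) = s₁ + s₂ + s₃ by ring] at hK
  rw [show p₁ - -s₁ = s₁ + p₁ by ring]
  have n1 := hv.ne (s₁ + p₁ : ℝ)
  have n2 := hv.ne (p₁ - s₁ : ℝ)
  have n3 := hv.ne (p₁ + p₂ - s₃ : ℝ)
  have n4 := hv.ne (s₁ + s₂ + s₃ : ℝ)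
  have n5 := hv.ne (s₁ + s₃ - s₂ : ℝ)
  have n6 := hv.ne (s₂ + s₃ - s₁ : ℝ)
  have x1 : Complex.exp (π * I * ((p₂ : ℂ) * (s₁ + cb b) - p₁ * (s₂ + cb b))) * Complex.exp (π * I * (p₁ / 2) * ((s₁:ℂ) + s₂ - s₃ + cb b)) =
      Complex.exp (π * I * ((p₂ : ℂ) * (((-s₁ : ℝ):ℂ) + cb b) - p₁ * (s₂ + cb b))) * Complex.exp (π * I * (p₁ / 2) * (((-s₁ : ℝ):ℂ) + s₂ - s₃ + cb b)) * Complex.exp (2 * (π * I * ((p₁ / 2 + p₂ : ℝ):ℂ) * s₁)) := by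
    rw [← Complex.exp_add, ← Complex.exp_add, ← Complex.exp_add]
    congr 1; push_cast; ring
  generalize Complex.exp (π * I * ((p₂ : ℂ) * (s₁ + cb b) - p₁ * (s₂ + cb b))) = y1 at *
  generalize Complex.exp (π * I * (p₁ / 2) * ((s₁:ℂ) + s₂ - s₃ + cb b)) = y2 at *
  generalize Complex.exp (π * I * ((p₂ : ℂ) * (((-s₁ : ℝ):ℂ) + cb b) - p₁ * (s₂ + cb b))) = y3 at *
  generalize Complex.exp (π * I * (p₁ / 2) * (((-s₁ : ℝ):ℂ) + s₂ - s₃ + cb b)) = y4 at *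
  generalize Complex.exp (2 * (π * I * ((p₁ / 2 + p₂ : ℝ):ℂ) * s₁)) = y5 at *
  clear i1 i2 i3
  generalize v (s₁ + p₁ : ℝ) = z1 at *
  generalize v (p₁ - s₁ : ℝ) = z2 at *
  generalize v (p₁ + p₂ - s₃ : ℝ) = z3 at *
  generalize v (s₁ + s₂ + s₃ : ℝ) = z4 at *
  generalize v (s₁ + s₃ - s₂ : ℝ) = z5 at *
  generalize v (s₂ + s₃ - s₁ : ℝ) = z6 at *
  generalize v (s₁ + s₂ - s₃ : ℝ) = z7 at *
  generalize v (p₂ - s₂ : ℝ) = z8 at *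
  field_simp at hK ⊢
  linear_combination (-z8 * y3 * y4) * hK - z8 * z7 * z5 * z6 * z2 * K * x1

lemma flip2 {b : ℝ} {v : ℂ → ℂ} (hv : QD b v) (s₁ s₂ s₃ p₁ p₂ : ℝ) :
    Iv b v s₁ (-s₂) s₃ p₁ p₂ = Mv v s₁ s₂ s₃ * Iv b v s₁ s₂ s₃ p₁ p₂ := by
  have hK := hv.Kf_flip (s₁ - s₃) (-(p₂ / 2) - p₁) (-(s₁ + s₃)) p₂ s₂
  unfold Iv Mv
  rw [hv.J2, hv.J2]
  generalize Kf b v (s₁ - s₃) (-(p₂ / 2) - p₁) (-(s₁ + s₃)) p₂ s₂ = K at *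
  generalize Kf b v (s₁ - s₃) (-(p₂ / 2) - p₁) (-(s₁ + s₃)) p₂ (-s₂) = K' at *
  have i1 := hv.vneg (p₂ - s₂)
  have i2 := hv.vneg (s₂ + s₃ - s₁)
  have i3 := hv.vneg (s₁ + s₃ - s₂)
  rw [show -(p₂ - s₂) = s₂ - p₂ by ring] at i1
  rw [show -(s₂ + s₃ - s₁) = s₁ - s₃ - s₂ by ring] at i2
  rw [show -(s₁ + s₃ - s₂) = s₂ + -(s₁ + s₃) by ring] at i3
  rw [i1, i2, i3, show s₁ - s₃ + s₂ = s₁ + s₂ - s₃ by ring, show s₂ - -(s₁ + s₃) = s₁ + s₂ + s₃ by ring] at hK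
  rw [show p₂ - -s₂ = s₂ + p₂ by ring]
  have n1 := hv.ne (s₂ + p₂ : ℝ)
  have n2 := hv.ne (p₂ - s₂ : ℝ)
  have n3 := hv.ne (p₁ + p₂ - s₃ : ℝ)
  have n4 := hv.ne (s₁ + s₂ + s₃ : ℝ)
  have n5 := hv.ne (s₁ + s₃ - s₂ : ℝ)
  have n6 := hv.ne (s₂ + s₃ - s₁ : ℝ)
  have x1 : Complex.exp (π * I * ((p₂ : ℂ) * (s₁ + cb b) - p₁ * (s₂ + cb b))) * Complex.exp (-(π * I * (p₂ / 2) * ((s₁:ℂ) + s₂ - s₃ + cb b))) =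
      Complex.exp (π * I * ((p₂ : ℂ) * (s₁ + cb b) - p₁ * (((-s₂ : ℝ):ℂ) + cb b))) * Complex.exp (-(π * I * (p₂ / 2) * ((s₁:ℂ) + ((-s₂ : ℝ):ℂ) - s₃ + cb b))) * Complex.exp (2 * (π * I * ((-(p₂ / 2) - p₁ : ℝ):ℂ) * s₂)) := by
    rw [← Complex.exp_add, ← Complex.exp_add, ← Complex.exp_add]
    congr 1; push_cast; ring
  generalize Complex.exp (π * I * ((p₂ : ℂ) * (s₁ + cb b) - p₁ * (s₂ + cb b))) = y1 at *
  generalize Complex.exp (-(π * I * (p₂ / 2) * ((s₁:ℂ) + s₂ - s₃ + cb b))) = y2 at *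
  generalize Complex.exp (π * I * ((p₂ : ℂ) * (s₁ + cb b) - p₁ * (((-s₂ : ℝ):ℂ) + cb b))) = y3 at *
  generalize Complex.exp (-(π * I * (p₂ / 2) * ((s₁:ℂ) + ((-s₂ : ℝ):ℂ) - s₃ + cb b))) = y4 at *
  generalize Complex.exp (2 * (π * I * ((-(p₂ / 2) - p₁ : ℝ):ℂ) * s₂)) = y5 at *
  clear i1 i2 i3
  generalize v (s₂ + p₂ : ℝ) = z1 at *
  generalize v (p₂ - s₂ : ℝ) = z2 at *
  generalize v (p₁ + p₂ - s₃ : ℝ) = z3 at *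
  generalize v (s₁ + s₂ + s₃ : ℝ) = z4 at *
  generalize v (s₁ + s₃ - s₂ : ℝ) = z5 at *
  generalize v (s₂ + s₃ - s₁ : ℝ) = z6 at *
  generalize v (s₁ + s₂ - s₃ : ℝ) = z7 at *
  generalize v (p₁ - s₁ : ℝ) = z8 at *
  field_simp at hK ⊢
  linear_combination (-z8 * y3 * y4) * hK - z8 * z7 * z5 * z6 * z2 * K * x1

lemma flip3 {b : ℝ} {v : ℂ → ℂ} (hv : QD b v) (s₁ s₂ s₃ p₁ p₂ : ℝ) :
    Iv b v s₁ s₂ (-s₃) p₁ p₂ = Mv v s₁ s₂ s₃ * Iv b v s₁ s₂ s₃ p₁ p₂ := by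
  have hK := hv.Kf_flip (s₁ + s₂) ((p₁ - p₂) / 2) (s₂ - s₁) (p₁ + p₂) (-s₃)
  unfold Iv Mv
  rw [hv.J3, hv.J3]
  generalize Kf b v (s₁ + s₂) ((p₁ - p₂) / 2) (s₂ - s₁) (p₁ + p₂) (-s₃) = K at *
  generalize Kf b v (s₁ + s₂) ((p₁ - p₂) / 2) (s₂ - s₁) (p₁ + p₂) (- -s₃) = K' at *
  have i1 := hv.vneg (p₁ + p₂ + s₃)
  have i2 := hv.vneg (s₂ + s₃ - s₁)
  have i3 := hv.vneg (s₁ + s₃ - s₂)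
  rw [show -(p₁ + p₂ + s₃) = -s₃ - (p₁ + p₂) by ring] at i1
  rw [show -(s₂ + s₃ - s₁) = -s₃ - (s₂ - s₁) by ring] at i2
  rw [show -(s₁ + s₃ - s₂) = -s₃ + (s₂ - s₁) by ring] at i3
  rw [i1, i2, i3, show s₁ + s₂ + -s₃ = s₁ + s₂ - s₃ by ring, show s₁ + s₂ - -s₃ = s₁ + s₂ + s₃ by ring,
    show -s₃ + (p₁ + p₂) = p₁ + p₂ - s₃ by ring] at hK
  rw [show p₁ + p₂ - -s₃ = p₁ + p₂ + s₃ by ring]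
  have n1 := hv.ne (p₁ + p₂ + s₃ : ℝ)
  have n3 := hv.ne (p₁ + p₂ - s₃ : ℝ)
  have n4 := hv.ne (s₁ + s₂ + s₃ : ℝ)
  have n5 := hv.ne (s₁ + s₃ - s₂ : ℝ)
  have n6 := hv.ne (s₂ + s₃ - s₁ : ℝ)
  have x1 : Complex.exp (π * I * ((p₁ - p₂) / 2) * ((s₁:ℂ) + s₂ - s₃ + cb b)) =
      Complex.exp (π * I * ((p₁ - p₂) / 2) * ((s₁:ℂ) + s₂ - ((-s₃ : ℝ):ℂ) + cb b)) * Complex.exp (2 * (π * I * (((p₁ - p₂) / 2 : ℝ):ℂ) * ((-s₃ : ℝ):ℂ))) := by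
    rw [← Complex.exp_add]
    congr 1; push_cast; ring
  generalize Complex.exp (π * I * ((p₂ : ℂ) * (s₁ + cb b) - p₁ * (s₂ + cb b))) = y1 at *
  generalize Complex.exp (π * I * ((p₁ - p₂) / 2) * ((s₁:ℂ) + s₂ - s₃ + cb b)) = y2 at *
  generalize Complex.exp (π * I * ((p₁ - p₂) / 2) * ((s₁:ℂ) + s₂ - ((-s₃ : ℝ):ℂ) + cb b)) = y4 at *
  generalize Complex.exp (2 * (π * I * (((p₁ - p₂) / 2 : ℝ):ℂ) * ((-s₃ : ℝ):ℂ))) = y5 at *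
  clear i1 i2 i3
  generalize v (p₁ + p₂ + s₃ : ℝ) = z1 at *
  generalize v (p₁ + p₂ - s₃ : ℝ) = z3 at *
  generalize v (s₁ + s₂ + s₃ : ℝ) = z4 at *
  generalize v (s₁ + s₃ - s₂ : ℝ) = z5 at *
  generalize v (s₂ + s₃ - s₁ : ℝ) = z6 at *
  generalize v (s₁ + s₂ - s₃ : ℝ) = z7 at *
  generalize v (p₁ - s₁ : ℝ) = z8 at *
  generalize v (p₂ - s₂ : ℝ) = z9 at *
  field_simp at hK ⊢
  linear_combination (-z8 * z9 * y1 * y4) * hK - z9 * z8 * y1 * z7 * z5 * z6 * z1 * K * x1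

lemma M1 {b : ℝ} {v : ℂ → ℂ} (hv : QD b v) (s₁ s₂ s₃ : ℝ) : Mv v (-s₁) s₂ s₃ * Mv v s₁ s₂ s₃ = 1 := by
  unfold Mv
  rw [show -s₁ + s₂ - s₃ = -(s₁ + s₃ - s₂) by ring, show -s₁ + s₃ - s₂ = -(s₁ + s₂ - s₃) by ring,
    show s₂ + s₃ - -s₁ = s₁ + s₂ + s₃ by ring, show -s₁ + s₂ + s₃ = s₂ + s₃ - s₁ by ring, hv.vneg, hv.vneg]
  have n1 := hv.ne (s₁ + s₂ - s₃ : ℝ)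
  have n4 := hv.ne (s₁ + s₂ + s₃ : ℝ)
  have n5 := hv.ne (s₁ + s₃ - s₂ : ℝ)
  have n6 := hv.ne (s₂ + s₃ - s₁ : ℝ)
  field_simp

lemma M2 {b : ℝ} {v : ℂ → ℂ} (hv : QD b v) (s₁ s₂ s₃ : ℝ) : Mv v s₁ (-s₂) s₃ * Mv v s₁ s₂ s₃ = 1 := by
  unfold Mv
  rw [show s₁ + -s₂ - s₃ = -(s₂ + s₃ - s₁) by ring, show s₁ + s₃ - -s₂ = s₁ + s₂ + s₃ by ring,
    show -s₂ + s₃ - s₁ = -(s₁ + s₂ - s₃) by ring, show s₁ + -s₂ + s₃ = s₁ + s₃ - s₂ by ring, hv.vneg, hv.vneg]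
  have n1 := hv.ne (s₁ + s₂ - s₃ : ℝ)
  have n4 := hv.ne (s₁ + s₂ + s₃ : ℝ)
  have n5 := hv.ne (s₁ + s₃ - s₂ : ℝ)
  have n6 := hv.ne (s₂ + s₃ - s₁ : ℝ)
  field_simp

lemma M3 {b : ℝ} {v : ℂ → ℂ} (hv : QD b v) (s₁ s₂ s₃ : ℝ) : Mv v s₁ s₂ (-s₃) * Mv v s₁ s₂ s₃ = 1 := by
  unfold Mv
  rw [show s₁ + s₂ - -s₃ = s₁ + s₂ + s₃ by ring, show s₁ + -s₃ - s₂ = -(s₂ + s₃ - s₁) by ring,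
    show s₂ + -s₃ - s₁ = -(s₁ + s₃ - s₂) by ring, show s₁ + s₂ + -s₃ = s₁ + s₂ - s₃ by ring, hv.vneg, hv.vneg]
  have n1 := hv.ne (s₁ + s₂ - s₃ : ℝ)
  have n4 := hv.ne (s₁ + s₂ + s₃ : ℝ)
  have n5 := hv.ne (s₁ + s₃ - s₂ : ℝ)
  have n6 := hv.ne (s₂ + s₃ - s₁ : ℝ)
  field_simp

end QD

lemma eb_eq {b : ℝ} (hb : 0 < b) (hb1 : b ≤ 1) (z : ℂ) : eb b z = Complex.exp (Lq b z) := by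
  unfold eb ebE
  rw [Lq_eq, min_eq_left (hb1.trans ((one_le_inv₀ hb).mpr hb1))]

lemma wb_eq {b : ℝ} (hb : 0 < b) (hb1 : b ≤ 1) (z : ℂ) : wb b z = wb b 0 * vq b z := by
  unfold wb vq
  rw [eb_eq hb hb1, eb_eq hb hb1, Complex.exp_sub]
  have h1 := Complex.exp_ne_zero (Lq b 0)
  have h2 := Complex.exp_ne_zero (Lq b z)
  rw [show (π:ℂ) * I * 0 ^ 2 / 2 = 0 by ring, Complex.exp_zero]
  field_simp

lemma wb_ne (b : ℝ) (z : ℂ) : wb b z ≠ 0 := by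
  unfold wb eb ebE
  exact div_ne_zero (mul_ne_zero (Complex.exp_ne_zero _) (Complex.exp_ne_zero _)) (Complex.exp_ne_zero _)

lemma Dfun_eq {b : ℝ} (hb : 0 < b) (hb1 : b ≤ 1) (a x : ℂ) : Dfun b ((a - cb b) / 2) x = Fa b (vq b) a x := by
  unfold Dfun Fa
  rw [wb_eq hb hb1, wb_eq hb hb1 (x - _), mul_div_mul_left _ _ (wb_ne b 0)]

lemma CGintegrand_eq {b : ℝ} (hb : 0 < b) (hb1 : b ≤ 1) (s₁ s₂ s₃ p₁ p₂ p : ℝ) :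
    CGintegrand b s₁ s₂ s₃ p₁ p₂ p = Jg b (vq b) s₁ s₂ s₃ p₁ p₂ p := by
  unfold CGintegrand Jg Fr
  rw [Dfun_eq hb hb1, Dfun_eq hb hb1, Dfun_eq hb hb1]
  push_cast
  rfl

lemma Mfun_eq {b : ℝ} (hb : 0 < b) (hb1 : b ≤ 1) (s₁ s₂ s₃ : ℝ) :
    Mfun b s₁ s₂ s₃ = wb b 0 ^ 2 * Mv (vq b) s₁ s₂ s₃ := by
  have hv := vq_QD hb hb1
  unfold Mfun Mv
  rw [wb_eq hb hb1, wb_eq hb hb1 (s₁ + s₃ - s₂), wb_eq hb hb1 (s₂ + s₃ - s₁), wb_eq hb hb1 (s₁ + s₂ + s₃)]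
  push_cast
  have h1 := wb_ne b 0
  have h2 := hv.ne (s₁ + s₂ + s₃)
  field_simp

lemma CGI_eq {b : ℝ} (hb : 0 < b) (hb1 : b ≤ 1) (s₁ s₂ s₃ p₁ p₂ : ℝ) :
    CGI b s₁ s₂ s₃ p₁ p₂ = Complex.exp ((π : ℂ) * Complex.I / 2 *
      (((p₁ : ℂ) + (p₂ : ℂ)) ^ 2 - (p₁ : ℂ) ^ 2 - (p₂ : ℂ) ^ 2)) * wb b 0 * Iv b (vq b) s₁ s₂ s₃ p₁ p₂ := by
  have hv := vq_QD hb hb1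
  unfold CGI Iv
  simp_rw [CGintegrand_eq hb hb1]
  rw [wb_eq hb hb1, wb_eq hb hb1 (p₂ - s₂), wb_eq hb hb1 (p₁ + p₂ - s₃)]
  push_cast
  have h1 := wb_ne b 0
  have h2 := hv.ne (p₁ + p₂ - s₃)
  generalize Complex.exp (π * I * ((p₂ : ℂ) * (s₁ + cb b) - p₁ * (s₂ + cb b))) = y
  field_simp

lemma main_le_one {b : ℝ} (hb : 0 < b) (hb1 : b ≤ 1) (s₁ s₂ s₃ p₁ p₂ : ℝ) :
    Integrable (CGintegrand b s₁ s₂ s₃ p₁ p₂) ∧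
    Mfun b (-s₁) s₂ s₃ * (CGI b (-s₁) s₂ s₃ p₁ p₂) ^ 2 =
      Mfun b s₁ s₂ s₃ * (CGI b s₁ s₂ s₃ p₁ p₂) ^ 2 ∧
    Mfun b s₁ (-s₂) s₃ * (CGI b s₁ (-s₂) s₃ p₁ p₂) ^ 2 =
      Mfun b s₁ s₂ s₃ * (CGI b s₁ s₂ s₃ p₁ p₂) ^ 2 ∧
    Mfun b s₁ s₂ (-s₃) * (CGI b s₁ s₂ (-s₃) p₁ p₂) ^ 2 =
      Mfun b s₁ s₂ s₃ * (CGI b s₁ s₂ s₃ p₁ p₂) ^ 2 := by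
  have hv := vq_QD hb hb1
  have hi : CGintegrand b s₁ s₂ s₃ p₁ p₂ = Jg b (vq b) s₁ s₂ s₃ p₁ p₂ :=
    funext fun p => CGintegrand_eq hb hb1 s₁ s₂ s₃ p₁ p₂ p
  simp only [Mfun_eq hb hb1, CGI_eq hb hb1]
  rw [hv.flip1, hv.flip2, hv.flip3, hi]
  refine ⟨hv.Jg_int _ _ _ _ _, ?_, ?_, ?_⟩
  · linear_combination (wb b 0 ^ 2 * (Complex.exp ((π : ℂ) * Complex.I / 2 *
      (((p₁ : ℂ) + (p₂ : ℂ)) ^ 2 - (p₁ : ℂ) ^ 2 - (p₂ : ℂ) ^ 2)) * wb b 0 * Iv b (vq b) s₁ s₂ s₃ p₁ p₂) ^ 2 * Mv (vq b) s₁ s₂ s₃) * hv.M1 s₁ s₂ s₃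
  · linear_combination (wb b 0 ^ 2 * (Complex.exp ((π : ℂ) * Complex.I / 2 *
      (((p₁ : ℂ) + (p₂ : ℂ)) ^ 2 - (p₁ : ℂ) ^ 2 - (p₂ : ℂ) ^ 2)) * wb b 0 * Iv b (vq b) s₁ s₂ s₃ p₁ p₂) ^ 2 * Mv (vq b) s₁ s₂ s₃) * hv.M2 s₁ s₂ s₃
  · linear_combination (wb b 0 ^ 2 * (Complex.exp ((π : ℂ) * Complex.I / 2 *
      (((p₁ : ℂ) + (p₂ : ℂ)) ^ 2 - (p₁ : ℂ) ^ 2 - (p₂ : ℂ) ^ 2)) * wb b 0 * Iv b (vq b) s₁ s₂ s₃ p₁ p₂) ^ 2 * Mv (vq b) s₁ s₂ s₃) * hv.M3 s₁ s₂ s₃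

lemma cb_symm (b : ℝ) : cb b⁻¹ = cb b := by
  unfold cb; push_cast; rw [inv_inv]; ring

lemma wb_symm (b : ℝ) : wb b⁻¹ = wb b := by
  ext z
  unfold wb eb ebE
  rw [cb_symm, inv_inv, min_comm]
  have : ∀ ε : ℝ, ebIntegrand b⁻¹ ε z = ebIntegrand b ε z := by
    intro ε; ext t
    unfold ebIntegrand
    push_cast
    rw [inv_inv, mul_right_comm ((t:ℂ) + I * ε) (Complex.sinh _) (Complex.sinh _)]
  rw [this]

lemma CGintegrand_symm (b s₁ s₂ s₃ p₁ p₂ : ℝ) : CGintegrand b⁻¹ s₁ s₂ s₃ p₁ p₂ = CGintegrand b s₁ s₂ s₃ p₁ p₂ := by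
  ext p
  unfold CGintegrand Dfun
  rw [wb_symm, cb_symm]

lemma CGI_symm (b s₁ s₂ s₃ p₁ p₂ : ℝ) : CGI b⁻¹ s₁ s₂ s₃ p₁ p₂ = CGI b s₁ s₂ s₃ p₁ p₂ := by
  unfold CGI
  rw [wb_symm, cb_symm, CGintegrand_symm]

lemma Mfun_symm (b s₁ s₂ s₃ : ℝ) : Mfun b⁻¹ s₁ s₂ s₃ = Mfun b s₁ s₂ s₃ := by
  unfold Mfun
  rw [wb_symm]

/-- the Weyl symmetries of the b-Clebsch–Gordan coefficients:
`M(s₁,s₂,s₃)·I(s₃,s₂,s₁;p₂,p₁)²` is invariant under each sign flip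
`s₁ ↦ −s₁`, `s₂ ↦ −s₂`, `s₃ ↦ −s₃`; the defining integral converges absolutely. -/
theorem statement11 (b : ℝ) (hb : 0 < b) (s₁ s₂ s₃ p₁ p₂ : ℝ) :
    Integrable (CGintegrand b s₁ s₂ s₃ p₁ p₂) ∧
    Mfun b (-s₁) s₂ s₃ * (CGI b (-s₁) s₂ s₃ p₁ p₂) ^ 2 =
      Mfun b s₁ s₂ s₃ * (CGI b s₁ s₂ s₃ p₁ p₂) ^ 2 ∧
    Mfun b s₁ (-s₂) s₃ * (CGI b s₁ (-s₂) s₃ p₁ p₂) ^ 2 =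
      Mfun b s₁ s₂ s₃ * (CGI b s₁ s₂ s₃ p₁ p₂) ^ 2 ∧
    Mfun b s₁ s₂ (-s₃) * (CGI b s₁ s₂ (-s₃) p₁ p₂) ^ 2 =
      Mfun b s₁ s₂ s₃ * (CGI b s₁ s₂ s₃ p₁ p₂) ^ 2 := by
  rcases le_total b 1 with h | h
  · exact main_le_one hb h s₁ s₂ s₃ p₁ p₂
  · have := main_le_one (b := b⁻¹) (inv_pos.mpr hb) (inv_le_one_of_one_le₀ h) s₁ s₂ s₃ p₁ p₂
    simpa only [CGintegrand_symm, CGI_symm, Mfun_symm] using this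

end
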